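/- Let d ≥ 2, n = d + 2, and let S_{j₁},…,S_{j_k} be pairwise non-adjacent Stokes sectors with k ≤ n/2. Let Σ = {(α, λ) ∈ ℂ^{d−1} × ℂ : there exists a nonzero solution of the Schrödinger equation with parameters (α, λ) subdominant in each of S_{j₁},…,S_{j_k}}. Then Σ is a smooth complex analytic submanifold of ℂ^{d−1} × ℂ ≅ ℂ^d of codimension k − 1: for every point p ∈ Σ there exist an open neighborhood U of p in ℂ^d and a holomorphic map F : U → ℂ^{k−1} whose (complex) derivative at every point of U is surjective, such that Σ ∩ U = F⁻¹(0). -/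

import Mathlib

open Complex Filter Topology

/-- The polynomial potential `P_α(z) = z^d + α_{d-1} z^{d-1} + ⋯ + α₁ z`. -/
noncomputable def Pol (d : ℕ) (α : Fin (d - 1) → ℂ) (z : ℂ) : ℂ :=
  z ^ d + ∑ i : Fin (d - 1), α i * z ^ ((i : ℕ) + 1)

/-- `y` is an (entire) solution of the Schrödinger equation `y'' = (P_α - λ) y`. -/
def IsSol (d : ℕ) (α : Fin (d - 1) → ℂ) (lam : ℂ) (y : ℂ → ℂ) : Prop :=
  Differentiable ℂ y ∧ ∀ z : ℂ, deriv (deriv y) z = (Pol d α z - lam) * y z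

/-- `θ` is a ray direction of the Stokes sector `S_j`. -/
def DirIn (n j : ℕ) (θ : ℝ) : Prop :=
  |θ - 2 * Real.pi * j / n| < Real.pi / n

/-- `y` is subdominant in the Stokes sector `S_j`: it tends to `0` along every ray in `S_j`. -/
def Subdominant (n j : ℕ) (y : ℂ → ℂ) : Prop :=
  ∀ θ : ℝ, DirIn n j θ →
    Tendsto (fun r : ℝ => y ((r : ℂ) * Complex.exp (θ * Complex.I))) atTop (𝓝 0)

/-!
Fix `p ∈ Σ` with solution `y = sol d p v`, and `w` with `det (v, w) = 1`. Near `p`, the solution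
decaying along the central ray `τ` of a sector is `sol d q (v + s τ q • w)` for a holomorphic
slope `s τ`, and `Σ` is the set where the `k` slopes agree, so the `k - 1` differences of slopes
are the equations. Differentiating the Wronskian gives
`ds τ (q) = -τ ∫ (lowerPoly q)(rτ) y(rτ)² dr`, and the differentials of the differences are
independent at `p` if a relation `∑ c i • ds (τ i) = 0` with `∑ c i = 0` forces `c = 0`.

With `u = y²`, such a relation says that the moments `∑ c i τ i ∫ (rτ i)^m u(rτ i) dr` of order
`m < d` vanish. Since `u` solves a third-order linear equation, integration by parts yields a
recurrence for the moments, whose boundary terms cancel by `∑ c i = 0`; hence all of them vanish.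
The Cauchy transform `∑ c i τ i ∫ u(rτ i) / (rτ i - ζ) dr` then decays at infinity faster than
`exp (-M |ζ|^γ)` for all `M` and all `γ < (d + 2) / 2`. As the sectors are not adjacent, it is
holomorphic in a sector of opening `4π / (d + 2)` on either side of each ray, where it vanishes by
Phragmén–Lindelöf. Its jump across the ray spanned by `τ i` at `rτ i` is a nonzero multiple of
`c i u(rτ i)`, so `c i = 0`.
-/

section PowerSeries

open Finset.HasAntidiagonal (antidiagonal mem_antidiagonal)

variable {c q : ℕ → ℂ} {a b : ℂ}

lemma summable_norm_mul_pow (hc : ∀ z : ℂ, Summable fun m => c m * z ^ m) {A : ℝ} (hA : 0 ≤ A) :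
    Summable fun m => ‖c m‖ * A ^ m := by
  simpa [abs_of_nonneg hA] using (hc A).norm

lemma norm_mul_pow_le_of_mem_ball {A : ℝ} {z : ℂ} (hz : z ∈ Metric.ball (0 : ℂ) A) (m : ℕ) :
    ‖c m * z ^ m‖ ≤ ‖c m‖ * A ^ m := by
  rw [norm_mul, norm_pow]
  gcongr
  exact (mem_ball_zero_iff.1 hz).le

lemma differentiable_tsum_mul_pow (hc : ∀ z : ℂ, Summable fun m => c m * z ^ m) :
    Differentiable ℂ fun z => ∑' m, c m * z ^ m := fun z =>
  (differentiableOn_tsum_of_summable_norm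
    (summable_norm_mul_pow hc (by positivity : 0 ≤ ‖z‖ + 1))
    (fun _ => by fun_prop) Metric.isOpen_ball
    (fun m _ hw => norm_mul_pow_le_of_mem_ball hw m)).differentiableAt
    (Metric.isOpen_ball.mem_nhds (by simp))

lemma hasSum_deriv_tsum_mul_pow (hc : ∀ z : ℂ, Summable fun m => c m * z ^ m) (z : ℂ) :
    HasSum (fun m : ℕ => (m + 1) * c (m + 1) * z ^ m)
      (deriv (fun z => ∑' m, c m * z ^ m) z) := by
  have h := hasSum_deriv_of_summable_norm
    (summable_norm_mul_pow hc (by positivity : 0 ≤ ‖z‖ + 1))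
    (F := fun m z => c m * z ^ m) (fun _ => by fun_prop) Metric.isOpen_ball
    (fun m _ hw => norm_mul_pow_le_of_mem_ball hw m) (z := z) (by simp)
  simpa [mul_left_comm, mul_assoc] using (hasSum_nat_add_iff' 1).2 h

/-- The Taylor coefficients at `0` of the solution of `y'' = Q y`, `y 0 = a`, `y' 0 = b`, where `q`
lists the Taylor coefficients of `Q`. -/
noncomputable def odeCoeff (q : ℕ → ℂ) (a b : ℂ) : ℕ → ℂ
  | 0 => a
  | 1 => b
  | m + 2 => (∑ i : Fin (m + 1), q i * odeCoeff q a b (m - i)) / ((m + 2) * (m + 1))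
  decreasing_by omega

lemma mul_odeCoeff_add_two (q : ℕ → ℂ) (a b : ℂ) (m : ℕ) :
    ((m : ℂ) + 2) * (m + 1) * odeCoeff q a b (m + 2) =
      ∑ ij ∈ antidiagonal m, q ij.1 * odeCoeff q a b ij.2 := by
  have h : ((m : ℂ) + 2) * (m + 1) ≠ 0 := by norm_cast
  rw [Finset.Nat.sum_antidiagonal_eq_sum_range_succ fun i j => q i * odeCoeff q a b j,
    ← Fin.sum_univ_eq_sum_range fun i => q i * odeCoeff q a b (m - i), odeCoeff,
    mul_div_cancel₀ _ h]

lemma norm_odeCoeff_add_two_mul_pow_le {A C S : ℝ} (hA : 0 ≤ A) (hC : 0 ≤ C) {m : ℕ}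
    (hS : ∑ i ∈ Finset.range (m + 1), ‖q i‖ * A ^ i ≤ S)
    (hm : ∀ j ≤ m, ‖odeCoeff q a b j‖ * A ^ j ≤ C) :
    (m + 2) * (m + 1) * (‖odeCoeff q a b (m + 2)‖ * A ^ (m + 2)) ≤ S * A ^ 2 * C := by
  have hnorm : ‖((m : ℂ) + 2) * (m + 1)‖ = ((m : ℝ) + 2) * (m + 1) := by
    exact_mod_cast norm_natCast ((m + 2) * (m + 1))
  rw [← hnorm, ← mul_assoc, ← norm_mul, mul_odeCoeff_add_two]
  calc ‖∑ ij ∈ antidiagonal m, q ij.1 * odeCoeff q a b ij.2‖ * A ^ (m + 2)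
      ≤ (∑ ij ∈ antidiagonal m, ‖q ij.1 * odeCoeff q a b ij.2‖) * A ^ (m + 2) := by
        gcongr
        exact norm_sum_le _ _
    _ = ∑ ij ∈ antidiagonal m,
          ‖q ij.1‖ * A ^ ij.1 * A ^ 2 * (‖odeCoeff q a b ij.2‖ * A ^ ij.2) := by
        rw [Finset.sum_mul]
        refine Finset.sum_congr rfl fun ij hij => ?_
        rw [norm_mul, ← mem_antidiagonal.1 hij]
        ring
    _ ≤ ∑ ij ∈ antidiagonal m, ‖q ij.1‖ * A ^ ij.1 * A ^ 2 * C := by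
        gcongr with ij hij
        exact hm _ (((mem_antidiagonal.1 hij).symm ▸ Nat.le_add_left _ _))
    _ = (∑ i ∈ Finset.range (m + 1), ‖q i‖ * A ^ i) * A ^ 2 * C := by
        rw [Finset.Nat.sum_antidiagonal_eq_sum_range_succ_mk, Finset.sum_mul, Finset.sum_mul]
    _ ≤ S * A ^ 2 * C := by gcongr

lemma exists_norm_odeCoeff_mul_pow_le (hq : ∀ z : ℂ, Summable fun m => q m * z ^ m) (a b : ℂ)
    {A : ℝ} (hA : 0 ≤ A) : ∃ C, ∀ m, ‖odeCoeff q a b m‖ * A ^ m ≤ C := by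
  set S := ∑' i, ‖q i‖ * A ^ i
  obtain ⟨M, hM⟩ := exists_nat_ge (S * A ^ 2)
  set C := ∑ j ∈ Finset.range (M + 2), ‖odeCoeff q a b j‖ * A ^ j
  have hC : 0 ≤ C := by positivity
  refine ⟨C, fun m => ?_⟩
  induction m using Nat.strong_induction_on with
  | _ m ih =>
    obtain hm | hm := lt_or_ge m (M + 2)
    · exact Finset.single_le_sum (f := fun j => ‖odeCoeff q a b j‖ * A ^ j)
        (fun _ _ => by positivity) (Finset.mem_range.2 hm)
    obtain ⟨l, rfl⟩ := Nat.exists_eq_add_of_le' (by omega : 2 ≤ m)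
    have hMl : (M : ℝ) ≤ l := by exact_mod_cast (by omega : M ≤ l)
    have hS : ∑ i ∈ Finset.range (l + 1), ‖q i‖ * A ^ i ≤ S :=
      (summable_norm_mul_pow hq hA).sum_le_tsum _ fun _ _ => by positivity
    refine le_of_mul_le_mul_left ?_ (by positivity : (0 : ℝ) < (l + 2) * (l + 1))
    calc ((l : ℝ) + 2) * (l + 1) * (‖odeCoeff q a b (l + 2)‖ * A ^ (l + 2))
        ≤ S * A ^ 2 * C :=
          norm_odeCoeff_add_two_mul_pow_le hA hC hS fun j hj => ih j (by omega)
      _ ≤ (l + 2) * (l + 1) * C := by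
          refine mul_le_mul_of_nonneg_right ?_ hC
          nlinarith

lemma summable_odeCoeff_mul_pow (hq : ∀ z : ℂ, Summable fun m => q m * z ^ m) (a b z : ℂ) :
    Summable fun m => odeCoeff q a b m * z ^ m := by
  obtain ⟨C, hC⟩ := exists_norm_odeCoeff_mul_pow_le hq a b (by positivity : 0 ≤ 2 * ‖z‖)
  refine Summable.of_norm_bounded (summable_geometric_two.mul_left C) fun m => ?_
  calc ‖odeCoeff q a b m * z ^ m‖
      = ‖odeCoeff q a b m‖ * (2 * ‖z‖) ^ m * (1 / 2) ^ m := by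
        rw [norm_mul, norm_pow, mul_assoc, ← mul_pow]
        ring
    _ ≤ C * (1 / 2) ^ m := by
        gcongr
        exact hC m

theorem exists_entire_solution {Q : ℂ → ℂ} (hQ : Differentiable ℂ Q) (a b : ℂ) :
    ∃ y : ℂ → ℂ, Differentiable ℂ y ∧ (∀ z, deriv (deriv y) z = Q z * y z) ∧
      y 0 = a ∧ deriv y 0 = b := by
  set q : ℕ → ℂ := fun m => (m.factorial : ℂ)⁻¹ * iteratedDeriv m Q 0
  have hq (z : ℂ) : HasSum (fun m => q m * z ^ m) (Q z) := by
    simpa [q, mul_assoc, mul_comm, mul_left_comm] using hasSum_taylorSeries_of_entire hQ 0 z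
  set c := odeCoeff q a b
  have hc := summable_odeCoeff_mul_pow (fun z => (hq z).summable) a b
  have hderiv := hasSum_deriv_tsum_mul_pow hc
  have hderiv_eq := funext fun z => (hderiv z).tsum_eq.symm
  have at_zero (e : ℕ → ℂ) : ∑' m, e m * (0 : ℂ) ^ m = e 0 :=
    (tsum_eq_single 0 fun m hm => by simp [hm]).trans (by simp)
  refine ⟨fun z => ∑' m, c m * z ^ m, differentiable_tsum_mul_pow hc, fun z => ?_, ?_, ?_⟩
  · rw [hderiv_eq, ← (hasSum_deriv_tsum_mul_pow (fun z => (hderiv z).summable) z).tsum_eq,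
      ← (hq z).tsum_eq, tsum_mul_tsum_eq_tsum_sum_antidiagonal_of_summable_norm
        (hq z).summable.norm (hc z).norm]
    refine tsum_congr fun m => ?_
    calc ((m : ℂ) + 1) * (((m + 1 : ℕ) + 1) * c (m + 1 + 1)) * z ^ m
        = ((m : ℂ) + 2) * (m + 1) * c (m + 2) * z ^ m := by push_cast; ring
      _ = ∑ ij ∈ antidiagonal m, q ij.1 * z ^ ij.1 * (c ij.2 * z ^ ij.2) := by
        rw [mul_odeCoeff_add_two, Finset.sum_mul]
        refine Finset.sum_congr rfl fun ij hij => ?_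
        rw [← mem_antidiagonal.1 hij]
        ring
  · exact (at_zero c).trans (by simp only [c, odeCoeff])
  · rw [hderiv_eq]
    simpa [c, odeCoeff] using at_zero fun m => ((m : ℂ) + 1) * c (m + 1)

end PowerSeries

/-! ### Solutions and their dependence on the parameters -/

/-- The parameter space: the point `p` stands for the potential `P_α - λ` with `(α, λ) = p`. -/
abbrev Params (d : ℕ) : Type := (Fin (d - 1) → ℂ) × ℂ

/-- The part of degree less than `d` of the potential `P_α - λ`, which is linear in `(α, λ)`. -/
noncomputable def lowerPoly (d : ℕ) : Params d →ₗ[ℂ] Polynomial ℂ where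
  toFun p := ∑ i, Polynomial.C (p.1 i) * Polynomial.X ^ ((i : ℕ) + 1) - Polynomial.C p.2
  map_add' p q := by
    simp only [Prod.fst_add, Prod.snd_add, Pi.add_apply, map_add, add_mul, Finset.sum_add_distrib]
    ring
  map_smul' c p := by
    simp only [Prod.smul_fst, Prod.smul_snd, Pi.smul_apply, smul_eq_mul, map_mul,
      RingHom.id_apply, Polynomial.smul_eq_C_mul, mul_sub, Finset.mul_sum, mul_assoc]

/-- The potential `P_α - λ` as a polynomial. -/
noncomputable def potPoly (d : ℕ) (p : Params d) : Polynomial ℂ :=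
  Polynomial.X ^ d + lowerPoly d p

/-- An upper bound for `|P_α - λ|` on the disc of radius `R ≥ 1` when `‖(α, λ)‖ ≤ B`. -/
noncomputable def potBound (d : ℕ) (B R : ℝ) : ℝ := (1 + d * B) * R ^ d

section Potential

variable {d : ℕ}

lemma eval_potPoly (p : Params d) (z : ℂ) : (potPoly d p).eval z = Pol d p.1 z - p.2 := by
  simp [potPoly, lowerPoly, Pol, Polynomial.eval_finsetSum, add_sub_assoc]

lemma one_le_potBound (d : ℕ) {B R : ℝ} (hB : 0 ≤ B) (hR : 1 ≤ R) : 1 ≤ potBound d B R :=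
  one_le_mul_of_one_le_of_one_le (by simpa using by positivity) (one_le_pow₀ hR)

variable [NeZero d]

lemma norm_eval_lowerPoly_le (p : Params d) {t : ℝ} (ht : 1 ≤ t) {z : ℂ} (hz : ‖z‖ ≤ t) :
    ‖(lowerPoly d p).eval z‖ ≤ d * ‖p‖ * t ^ (d - 1) := by
  have hterm (i : Fin (d - 1)) : ‖p.1 i * z ^ ((i : ℕ) + 1)‖ ≤ ‖p‖ * t ^ (d - 1) := by
    rw [norm_mul, norm_pow]
    gcongr
    · exact (norm_le_pi_norm p.1 i).trans (norm_fst_le p)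
    · exact (pow_le_pow_left₀ (norm_nonneg z) hz _).trans (pow_le_pow_right₀ ht (by omega))
  have hconst : ‖p.2‖ ≤ ‖p‖ * t ^ (d - 1) :=
    (norm_snd_le p).trans (le_mul_of_one_le_right (norm_nonneg p) (one_le_pow₀ ht))
  calc ‖(lowerPoly d p).eval z‖
      = ‖∑ i, p.1 i * z ^ ((i : ℕ) + 1) - p.2‖ := by
        simp [lowerPoly, Polynomial.eval_finsetSum]
    _ ≤ ∑ _i : Fin (d - 1), ‖p‖ * t ^ (d - 1) + ‖p‖ * t ^ (d - 1) :=
        (norm_sub_le _ _).trans (add_le_add (norm_sum_le_of_le _ fun i _ => hterm i) hconst)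
    _ = d * ‖p‖ * t ^ (d - 1) := by
        rw [Finset.sum_const, Finset.card_univ, Fintype.card_fin, nsmul_eq_mul, ← add_one_mul,
          ← Nat.cast_succ, Nat.succ_eq_add_one, Nat.sub_add_cancel NeZero.one_le, mul_assoc]

lemma norm_eval_potPoly_le {p : Params d} {B R : ℝ} (hR : 1 ≤ R) (hp : ‖p‖ ≤ B) {z : ℂ}
    (hz : ‖z‖ ≤ R) : ‖(potPoly d p).eval z‖ ≤ potBound d B R := by
  have hB : 0 ≤ B := (norm_nonneg p).trans hp
  calc ‖(potPoly d p).eval z‖ = ‖z ^ d + (lowerPoly d p).eval z‖ := by simp [potPoly]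
    _ ≤ R ^ d + d * B * R ^ d := by
        refine (norm_add_le _ _).trans (add_le_add ?_ ?_)
        · rw [norm_pow]
          gcongr
        · refine (norm_eval_lowerPoly_le p hR hz).trans ?_
          gcongr
          exact Nat.sub_le d 1
    _ = potBound d B R := by rw [potBound]; ring

end Potential

/-- The `1`-jet of `f` at `z`; the jet at `0` of a solution is its Cauchy data. -/
noncomputable def jet (f : ℂ → ℂ) (z : ℂ) : ℂ × ℂ := (f z, deriv f z)

section Rays

variable {f g : ℂ → ℂ} {τ : ℂ}

lemma norm_le_norm_jet (f : ℂ → ℂ) (z : ℂ) : ‖f z‖ ≤ ‖jet f z‖ := norm_fst_le (jet f z)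

lemma jet_add (hf : Differentiable ℂ f) (hg : Differentiable ℂ g) (z : ℂ) :
    jet (f + g) z = jet f z + jet g z := by
  simp [jet, deriv_add (hf z) (hg z)]

lemma jet_const_smul (hf : Differentiable ℂ f) (c z : ℂ) : jet (c • f) z = c • jet f z := by
  simp [jet, deriv_const_smul c (hf z)]

lemma jet_sub (hf : Differentiable ℂ f) (hg : Differentiable ℂ g) (z : ℂ) :
    jet (f - g) z = jet f z - jet g z := by
  simp [jet, deriv_sub (hf z) (hg z)]

lemma hasDerivAt_ray (τ : ℂ) (hf : Differentiable ℂ f) (r : ℝ) :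
    HasDerivAt (fun r : ℝ => f (r * τ)) (τ * deriv f (r * τ)) r := by
  have hray : HasDerivAt (fun r : ℝ => (r : ℂ) * τ) τ r := by
    simpa using (Complex.ofRealCLM.hasDerivAt (x := r)).mul_const τ
  simpa [Function.comp_def] using (hf (r * τ)).hasDerivAt.scomp r hray

lemma norm_ofReal_mul_le (hτ : ‖τ‖ ≤ 1) {r : ℝ} (hr : 0 ≤ r) : ‖(r : ℂ) * τ‖ ≤ r := by
  rw [norm_mul, Complex.norm_of_nonneg hr]
  exact mul_le_of_le_one_right hr hτ

lemma exists_ofReal_mul_eq (z : ℂ) : ∃ R : ℝ, 1 ≤ R ∧ ∃ τ : ℂ, ‖τ‖ ≤ 1 ∧ R * τ = z := by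
  have hR : 0 < ‖z‖ + 1 := by positivity
  refine ⟨‖z‖ + 1, by simp, z / (‖z‖ + 1 : ℝ), ?_, mul_div_cancel₀ z (by exact_mod_cast hR.ne')⟩
  rw [norm_div, Complex.norm_of_nonneg hR.le, div_le_one hR]
  linarith

lemma norm_jet_le_gronwallBound (hf : Differentiable ℂ f) (hτ : ‖τ‖ ≤ 1) {R K η : ℝ}
    (hK : 1 ≤ K) (hη : 0 ≤ η)
    (h : ∀ r ∈ Set.Ico 0 R, ‖deriv (deriv f) (r * τ)‖ ≤ K * ‖f (r * τ)‖ + η) :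
    ∀ r ∈ Set.Icc 0 R, ‖jet f (r * τ)‖ ≤ gronwallBound ‖jet f 0‖ K η r := by
  have hderiv (r : ℝ) : HasDerivAt (fun r : ℝ => jet f (r * τ))
      (τ * deriv f (r * τ), τ * deriv (deriv f) (r * τ)) r :=
    (hasDerivAt_ray τ hf r).prodMk (hasDerivAt_ray τ hf.deriv r)
  have hτmul (w : ℂ) : ‖τ * w‖ ≤ ‖w‖ := by
    rw [norm_mul]
    exact mul_le_of_le_one_left (norm_nonneg w) hτ
  have hbound (r : ℝ) (hr : r ∈ Set.Ico 0 R) :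
      ‖(τ * deriv f (r * τ), τ * deriv (deriv f) (r * τ))‖ ≤ K * ‖jet f (r * τ)‖ + η := by
    have hjet := norm_nonneg (jet f (r * τ))
    refine max_le ?_ ?_
    · have : ‖deriv f (r * τ)‖ ≤ ‖jet f (r * τ)‖ := norm_snd_le (jet f (r * τ))
      nlinarith [hτmul (deriv f (r * τ))]
    · refine (hτmul _).trans ((h r hr).trans ?_)
      gcongr
      exact norm_le_norm_jet f _
  simpa only [sub_zero] using norm_le_gronwallBound_of_norm_deriv_right_le
    (fun r _ => (hderiv r).continuousAt.continuousWithinAt)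
    (fun r _ => (hderiv r).hasDerivWithinAt) (by simp) hbound

theorem eq_zero_of_jet_zero_eq_zero {Q : ℂ → ℂ} (hQ : Continuous Q) (hf : Differentiable ℂ f)
    (hode : ∀ z, deriv (deriv f) z = Q z * f z) (h0 : jet f 0 = 0) : f = 0 := by
  funext z
  obtain ⟨R, hR, τ, hτ, rfl⟩ := exists_ofReal_mul_eq z
  obtain ⟨M, hM⟩ := (isCompact_closedBall (0 : ℂ) R).exists_bound_of_continuousOn hQ.continuousOn
  have hgronwall := norm_jet_le_gronwallBound hf hτ (le_max_left 1 M) le_rfl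
    (fun r hr => ?_) R ⟨by linarith, le_rfl⟩
  · rw [h0, norm_zero, gronwallBound_ε0_δ0] at hgronwall
    exact norm_le_zero_iff.1 ((norm_le_norm_jet f _).trans hgronwall)
  · rw [hode, norm_mul, add_zero]
    gcongr
    refine (hM _ ?_).trans (le_max_right 1 M)
    rw [mem_closedBall_zero_iff]
    exact (norm_ofReal_mul_le hτ hr.1).trans hr.2.le

end Rays

section Solutions

variable {d : ℕ} {p : Params d} {y y₁ y₂ : ℂ → ℂ}

lemma IsSol.deriv_deriv (hy : IsSol d p.1 p.2 y) (z : ℂ) :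
    deriv (deriv y) z = (potPoly d p).eval z * y z := by
  rw [hy.2, eval_potPoly]

lemma IsSol.add (h₁ : IsSol d p.1 p.2 y₁) (h₂ : IsSol d p.1 p.2 y₂) :
    IsSol d p.1 p.2 (y₁ + y₂) := by
  have hderiv : deriv (y₁ + y₂) = deriv y₁ + deriv y₂ :=
    funext fun z => deriv_add (h₁.1 z) (h₂.1 z)
  refine ⟨h₁.1.add h₂.1, fun z => ?_⟩
  rw [hderiv, deriv_add (h₁.1.deriv z) (h₂.1.deriv z), h₁.2, h₂.2, Pi.add_apply, mul_add]

lemma IsSol.const_smul (hy : IsSol d p.1 p.2 y) (c : ℂ) : IsSol d p.1 p.2 (c • y) := by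
  have hderiv : deriv (c • y) = c • deriv y := funext fun z => deriv_const_smul c (hy.1 z)
  refine ⟨hy.1.const_smul c, fun z => ?_⟩
  rw [hderiv, deriv_const_smul c (hy.1.deriv z), hy.2, Pi.smul_apply, smul_eq_mul, smul_eq_mul,
    mul_left_comm]

lemma IsSol.eq_zero (hy : IsSol d p.1 p.2 y) (h0 : jet y 0 = 0) : y = 0 :=
  eq_zero_of_jet_zero_eq_zero (potPoly d p).continuous hy.1 hy.deriv_deriv h0

lemma IsSol.ext (h₁ : IsSol d p.1 p.2 y₁) (h₂ : IsSol d p.1 p.2 y₂)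
    (h : jet y₁ 0 = jet y₂ 0) : y₁ = y₂ := by
  have hsub := h₁.add (h₂.const_smul (-1))
  have hjet : jet (y₁ + (-1 : ℂ) • y₂) 0 = 0 := by
    rw [jet_add h₁.1 (h₂.1.const_smul _), jet_const_smul h₂.1, h]
    simp
  simpa [← sub_eq_add_neg, sub_eq_zero] using hsub.eq_zero hjet

lemma exists_isSol (d : ℕ) (p : Params d) (v : ℂ × ℂ) :
    ∃ y, IsSol d p.1 p.2 y ∧ jet y 0 = v := by
  obtain ⟨y, hdiff, hode, h0, h1⟩ :=
    exists_entire_solution (potPoly d p).differentiable v.1 v.2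
  exact ⟨y, ⟨hdiff, fun z => by rw [hode, eval_potPoly]⟩, by rw [jet, h0, h1]⟩

/-- The solution with parameters `p` as a linear function of its Cauchy data. -/
noncomputable def sol (d : ℕ) (p : Params d) : ℂ × ℂ →ₗ[ℂ] ℂ → ℂ where
  toFun v := (exists_isSol d p v).choose
  map_add' v w := by
    have hv := (exists_isSol d p v).choose_spec
    have hw := (exists_isSol d p w).choose_spec
    have hvw := (exists_isSol d p (v + w)).choose_spec
    exact hvw.1.ext (hv.1.add hw.1) (by rw [jet_add hv.1.1 hw.1.1, hv.2, hw.2, hvw.2])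
  map_smul' c v := by
    have hv := (exists_isSol d p v).choose_spec
    have hcv := (exists_isSol d p (c • v)).choose_spec
    exact hcv.1.ext (hv.1.const_smul c)
      (by rw [RingHom.id_apply, jet_const_smul hv.1.1, hv.2, hcv.2])

lemma isSol_sol (d : ℕ) (p : Params d) (v : ℂ × ℂ) : IsSol d p.1 p.2 (sol d p v) :=
  (exists_isSol d p v).choose_spec.1

@[simp]
lemma jet_sol_zero (d : ℕ) (p : Params d) (v : ℂ × ℂ) : jet (sol d p v) 0 = v :=
  (exists_isSol d p v).choose_spec.2

lemma sol_ne_zero (hv : v ≠ 0) : sol d p v ≠ 0 := fun h =>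
  hv (by rw [← jet_sol_zero d p v, h]; simp [jet])

lemma IsSol.eq_sol (hy : IsSol d p.1 p.2 y) : y = sol d p (jet y 0) :=
  hy.ext (isSol_sol d p _) (jet_sol_zero d p _).symm

lemma continuous_jet_sol (d : ℕ) (p : Params d) (z : ℂ) :
    Continuous fun v => jet (sol d p v) z := by
  let jetAt : ℂ × ℂ →ₗ[ℂ] ℂ × ℂ :=
    { toFun := fun v => jet (sol d p v) z
      map_add' := fun v w => by
        rw [map_add, jet_add (isSol_sol d p v).1 (isSol_sol d p w).1]
      map_smul' := fun c v => by
        rw [map_smul, jet_const_smul (isSol_sol d p v).1, RingHom.id_apply] }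
  exact jetAt.continuous_of_finiteDimensional

variable [NeZero d]

lemma IsSol.norm_jet_le (hy : IsSol d p.1 p.2 y) {τ : ℂ} (hτ : ‖τ‖ ≤ 1) {B R : ℝ}
    (hR : 1 ≤ R) (hp : ‖p‖ ≤ B) {r : ℝ} (hr : r ∈ Set.Icc 0 R) :
    ‖jet y (r * τ)‖ ≤ ‖jet y 0‖ * Real.exp (potBound d B R * R) := by
  have hK := one_le_potBound d ((norm_nonneg p).trans hp) hR
  have hgronwall := norm_jet_le_gronwallBound hy.1 hτ hK le_rfl (fun s hs => ?_) r hr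
  · rw [gronwallBound_ε0] at hgronwall
    refine hgronwall.trans ?_
    gcongr
    exact hr.2
  · rw [hy.deriv_deriv, norm_mul, add_zero]
    gcongr
    exact norm_eval_potPoly_le hR hp ((norm_ofReal_mul_le hτ hs.1).trans hs.2.le)

-- The difference `w` of the two solutions solves `w'' = P_q w + (P_q - P_p) y_p`, an equation
-- with zero Cauchy data and a small source term.
lemma norm_sol_sub_sol_le {q : Params d} (v : ℂ × ℂ) {τ : ℂ} (hτ : ‖τ‖ ≤ 1) {B R : ℝ}
    (hR : 1 ≤ R) (hp : ‖p‖ ≤ B) (hq : ‖q‖ ≤ B) :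
    ‖sol d q v (R * τ) - sol d p v (R * τ)‖ ≤
      gronwallBound 0 (potBound d B R)
        (d * ‖q - p‖ * R ^ (d - 1) * (‖v‖ * Real.exp (potBound d B R * R))) R := by
  have hyp := isSol_sol d p v
  have hyq := isSol_sol d q v
  set w := sol d q v - sol d p v with hw
  have hderiv : deriv w = deriv (sol d q v) - deriv (sol d p v) :=
    funext fun z => deriv_sub (hyq.1 z) (hyp.1 z)
  have hode (z : ℂ) : deriv (deriv w) z =
      (potPoly d q).eval z * w z + (lowerPoly d (q - p)).eval z * sol d p v z := by
    rw [hderiv, deriv_sub (hyq.1.deriv z) (hyp.1.deriv z), hyq.deriv_deriv, hyp.deriv_deriv, hw,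
      map_sub]
    simp only [potPoly, Polynomial.eval_add, Polynomial.eval_sub, Pi.sub_apply]
    ring
  have hjet : jet w 0 = 0 := by rw [jet_sub hyq.1 hyp.1, jet_sol_zero, jet_sol_zero, sub_self]
  have hgronwall := norm_jet_le_gronwallBound (hyq.1.sub hyp.1) hτ
    (one_le_potBound d ((norm_nonneg p).trans hp) hR)
    (η := d * ‖q - p‖ * R ^ (d - 1) * (‖v‖ * Real.exp (potBound d B R * R))) (by positivity)
    (fun r hr => ?_) R ⟨by linarith, le_rfl⟩
  · rw [← hw, hjet, norm_zero] at hgronwall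
    exact (norm_le_norm_jet w _).trans hgronwall
  · have hz : ‖(r : ℂ) * τ‖ ≤ R := (norm_ofReal_mul_le hτ hr.1).trans hr.2.le
    have hsource : ‖sol d p v (r * τ)‖ ≤ ‖v‖ * Real.exp (potBound d B R * R) := by
      have := hyp.norm_jet_le hτ hR hp ⟨hr.1, hr.2.le⟩
      rw [jet_sol_zero] at this
      exact (norm_le_norm_jet _ _).trans this
    rw [← hw, hode]
    refine (norm_add_le _ _).trans (add_le_add ?_ ?_) <;> rw [norm_mul]
    · gcongr
      exact norm_eval_potPoly_le hR hq hz
    · gcongr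
      exact norm_eval_lowerPoly_le _ hR hz

theorem continuous_sol (v : ℂ × ℂ) (z : ℂ) : Continuous fun p : Params d => sol d p v z := by
  refine continuous_iff_continuousAt.2 fun p => ?_
  obtain ⟨R, hR, τ, hτ, rfl⟩ := exists_ofReal_mul_eq z
  set K := potBound d (‖p‖ + 1) R
  have hle : ∀ᶠ q in 𝓝 p, ‖sol d q v (R * τ) - sol d p v (R * τ)‖ ≤
      gronwallBound 0 K (d * ‖q - p‖ * R ^ (d - 1) * (‖v‖ * Real.exp (K * R))) R := by
    filter_upwards [Metric.closedBall_mem_nhds p one_pos] with q hq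
    exact norm_sol_sub_sol_le v hτ hR (by simp) (norm_le_of_mem_closedBall hq)
  refine tendsto_iff_norm_sub_tendsto_zero.2
    (squeeze_zero' (Eventually.of_forall fun _ => norm_nonneg _) hle ?_)
  refine Continuous.tendsto' ((gronwallBound_continuous_ε 0 K R).comp (by fun_prop)) p 0 ?_
  simp [gronwallBound_ε0_δ0]

lemma continuousAt_sol {v : Params d → ℂ × ℂ} (hv : ContinuousAt v p) (z : ℂ) :
    ContinuousAt (fun q => sol d q (v q) z) p := by
  have hbasis (q : Params d) : sol d q (v q) z =
      (v q).1 * sol d q (1, 0) z + (v q).2 * sol d q (0, 1) z := by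
    conv_lhs => rw [show v q = (v q).1 • (1, 0) + (v q).2 • (0, 1) by ext <;> simp]
    rw [map_add, map_smul, map_smul]
    rfl
  simp only [hbasis]
  exact (hv.fst.mul (continuous_sol (1, 0) z).continuousAt).add
    (hv.snd.mul (continuous_sol (0, 1) z).continuousAt)

end Solutions

/-! ### Decay along the central rays -/

/-- The energy `Re (conj g · g') + κ |g|²` of a function `g` on the half-line. -/
noncomputable def energy (κ : ℝ → ℝ) (g : ℝ → ℂ) (r : ℝ) : ℝ :=
  inner ℝ (g r) (deriv g r) + κ r * ‖g r‖ ^ 2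

section Energy

variable {g V : ℝ → ℂ} {κ κ' K : ℝ → ℝ} {R : ℝ}

lemma monotoneOn_energy (hg : Differentiable ℝ g)
    (hg' : ∀ r, R ≤ r → HasDerivAt (deriv g) (V r * g r) r)
    (hκ : ∀ r, R ≤ r → HasDerivAt κ (κ' r) r) (hκ0 : ∀ r, R ≤ r → 0 ≤ κ r)
    (hκ'0 : ∀ r, R ≤ r → 0 ≤ κ' r) (hV : ∀ r, R ≤ r → κ r ^ 2 ≤ (V r).re) :
    MonotoneOn (energy κ g) (Set.Ici R) := by
  have hderiv (r : ℝ) (hr : R ≤ r) : HasDerivAt (energy κ g)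
      ((inner ℝ (g r) (V r * g r) + inner ℝ (deriv g r) (deriv g r)) +
        (κ' r * ‖g r‖ ^ 2 + κ r * (2 * inner ℝ (g r) (deriv g r)))) r :=
    ((hg r).hasDerivAt.inner ℝ (hg' r hr)).add ((hκ r hr).mul (hg r).hasDerivAt.norm_sq)
  refine monotoneOn_of_hasDerivWithinAt_nonneg (convex_Ici R)
    (fun r hr => (hderiv r hr).continuousAt.continuousWithinAt)
    (fun r hr => (hderiv r (interior_subset hr)).hasDerivWithinAt) fun r hr => ?_
  have hr : R ≤ r := interior_subset hr
  have hVg : inner ℝ (g r) (V r * g r) = (V r).re * ‖g r‖ ^ 2 := by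
    rw [Complex.inner, mul_assoc, Complex.mul_conj', ← Complex.ofReal_pow, Complex.re_mul_ofReal]
  have hcauchy : -(‖g r‖ * ‖deriv g r‖) ≤ inner ℝ (g r) (deriv g r) :=
    neg_le_of_abs_le (abs_real_inner_le_norm _ _)
  rw [hVg, real_inner_self_eq_norm_sq]
  -- The derivative is at least `κ' |g|² + (|g'| - κ |g|)²`.
  nlinarith [sq_nonneg (‖deriv g r‖ - κ r * ‖g r‖),
    mul_le_mul_of_nonneg_right (hV r hr) (sq_nonneg ‖g r‖),
    mul_nonneg (hκ'0 r hr) (sq_nonneg ‖g r‖), mul_le_mul_of_nonneg_left hcauchy (hκ0 r hr)]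

lemma norm_le_of_energy_nonpos (hg : Differentiable ℝ g)
    (hK : ∀ r, R ≤ r → HasDerivAt K (κ r) r) (hE : ∀ r, R ≤ r → energy κ g r ≤ 0) {r : ℝ}
    (hr : R ≤ r) : ‖g r‖ ≤ ‖g R‖ * Real.exp (K R) * Real.exp (-K r) := by
  have hderiv (r : ℝ) (hr : R ≤ r) : HasDerivAt (fun r => ‖g r‖ ^ 2 * Real.exp (2 * K r))
      (2 * inner ℝ (g r) (deriv g r) * Real.exp (2 * K r) +
        ‖g r‖ ^ 2 * (Real.exp (2 * K r) * (2 * κ r))) r :=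
    (hg r).hasDerivAt.norm_sq.mul ((hK r hr).const_mul 2).exp
  have hanti : AntitoneOn (fun r => ‖g r‖ ^ 2 * Real.exp (2 * K r)) (Set.Ici R) := by
    refine antitoneOn_of_hasDerivWithinAt_nonpos (convex_Ici R)
      (fun r hr => (hderiv r hr).continuousAt.continuousWithinAt)
      (fun r hr => (hderiv r (interior_subset hr)).hasDerivWithinAt) fun r hr => ?_
    have henergy := hE r (interior_subset hr)
    rw [energy] at henergy
    nlinarith [Real.exp_pos (2 * K r)]
  have hsq (s : ℝ) : ‖g s‖ ^ 2 * Real.exp (2 * K s) = (‖g s‖ * Real.exp (K s)) ^ 2 := by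
    rw [mul_pow, ← Real.exp_nat_mul, Nat.cast_two]
  have hle := hanti Set.self_mem_Ici hr hr
  simp only [hsq] at hle
  rw [Real.exp_neg, ← div_eq_mul_inv, le_div_iff₀ (Real.exp_pos _)]
  exact (pow_le_pow_iff_left₀ (by positivity) (by positivity) two_ne_zero).1 hle

lemma eq_zero_of_tendsto_of_inner_deriv_nonneg (hg : Differentiable ℝ g)
    (hinner : ∀ r, R ≤ r → 0 ≤ inner ℝ (g r) (deriv g r)) (hlim : Tendsto g atTop (𝓝 0)) {r : ℝ}
    (hr : R ≤ r) : g r = 0 := by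
  have hmono : MonotoneOn (fun r => ‖g r‖ ^ 2) (Set.Ici R) := by
    refine monotoneOn_of_hasDerivWithinAt_nonneg (convex_Ici R)
      (fun r _ => (hg r).hasDerivAt.norm_sq.continuousAt.continuousWithinAt)
      (fun r _ => (hg r).hasDerivAt.norm_sq.hasDerivWithinAt) fun r hr => ?_
    have := hinner r (interior_subset hr)
    positivity
  have hle : ‖g r‖ ^ 2 ≤ 0 := by
    refine ge_of_tendsto (by simpa using hlim.norm.pow 2) ?_
    filter_upwards [eventually_ge_atTop r] with s hs
    exact hmono hr (hr.trans hs) hs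
  simpa using le_antisymm hle (sq_nonneg _)

end Energy

lemma eq_zero_of_forall_ray_eq_zero {f : ℂ → ℂ} (hf : Differentiable ℂ f) {τ : ℂ} (hτ : τ ≠ 0)
    {R : ℝ} (h : ∀ r : ℝ, R ≤ r → f (r * τ) = 0) : f = 0 := by
  have hray : Tendsto (fun r : ℝ => (r : ℂ) * τ) (𝓝[>] R) (𝓝[≠] (R * τ)) := by
    refine tendsto_nhdsWithin_iff.2 ⟨?_, ?_⟩
    · exact (Continuous.tendsto (by fun_prop) R).mono_left nhdsWithin_le_nhds
    · filter_upwards [self_mem_nhdsWithin] with r hr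
      simpa [hτ] using ne_of_gt hr
  have hfreq : ∃ᶠ z in 𝓝[≠] (R * τ), f z = 0 := by
    refine hray.frequently (Eventually.frequently ?_)
    filter_upwards [self_mem_nhdsWithin] with r hr using h r (le_of_lt hr)
  have han : AnalyticOnNhd ℂ f Set.univ := fun z _ => hf.analyticAt z
  exact han.eq_of_frequently_eq (fun _ _ => analyticAt_const) hfreq

/-- The decay rate of subdominant solutions: they are `O(exp (-phase d r))` on the central ray. -/
noncomputable def phase (d : ℕ) (r : ℝ) : ℝ := r ^ (((d : ℝ) + 2) / 2) / (d + 2)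

/-- The derivative `r ^ (d / 2) / 2` of `phase d`. Its square is a quarter of the leading term
`r ^ d` of the potential, which leaves room for the lower order terms. -/
noncomputable def phaseDeriv (d : ℕ) (r : ℝ) : ℝ := r ^ ((d : ℝ) / 2) / 2

/-- `y` satisfies the decay estimate with constant `A` on the ray in direction `τ`. -/
def DecaysOn (d : ℕ) (τ : ℂ) (A : ℝ) (y : ℂ → ℂ) : Prop :=
  ∀ r : ℝ, 0 ≤ r → ‖y (r * τ)‖ ≤ A * Real.exp (-phase d r)

/-- The radius beyond which the energy is monotone for parameters of norm at most `B`. -/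
noncomputable def threshold (d : ℕ) (B : ℝ) : ℝ := 4 * d * (B + 1)

/-- The constant in the decay estimate for subdominant solutions with Cauchy data of norm `1` and
parameters of norm at most `B`. -/
noncomputable def decayConst (d : ℕ) (B : ℝ) : ℝ :=
  Real.exp (potBound d B (threshold d B) * threshold d B) * Real.exp (phase d (threshold d B))

section Phase

variable {d : ℕ} {r s : ℝ}

lemma hasDerivAt_phase (d : ℕ) (hr : 0 < r) : HasDerivAt (phase d) (phaseDeriv d r) r := by
  refine ((Real.hasDerivAt_rpow_const (p := ((d : ℝ) + 2) / 2) (Or.inl hr.ne')).div_const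
    ((d : ℝ) + 2)).congr_deriv ?_
  have hne : (d : ℝ) + 2 ≠ 0 := by positivity
  rw [phaseDeriv, show ((d : ℝ) + 2) / 2 - 1 = d / 2 by ring]
  field_simp

lemma hasDerivAt_phaseDeriv (d : ℕ) (hr : 0 < r) :
    HasDerivAt (phaseDeriv d) (d / 2 * r ^ ((d : ℝ) / 2 - 1) / 2) r :=
  (Real.hasDerivAt_rpow_const (p := (d : ℝ) / 2) (Or.inl hr.ne')).div_const 2

lemma phaseDeriv_sq (d : ℕ) (hr : 0 ≤ r) : phaseDeriv d r ^ 2 = r ^ d / 4 := by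
  rw [phaseDeriv, div_pow, ← Real.rpow_natCast (r ^ _), ← Real.rpow_mul hr]
  norm_num

lemma phaseDeriv_nonneg (d : ℕ) (hr : 0 ≤ r) : 0 ≤ phaseDeriv d r := by
  rw [phaseDeriv]
  positivity

lemma phase_mono (d : ℕ) (hr : 0 ≤ r) (hrs : r ≤ s) : phase d r ≤ phase d s := by
  rw [phase, phase]
  gcongr

lemma tendsto_phase_atTop (d : ℕ) : Tendsto (phase d) atTop atTop :=
  (tendsto_rpow_atTop (by positivity)).atTop_div_const (by positivity)

lemma DecaysOn.tendsto {τ : ℂ} {A : ℝ} {y : ℂ → ℂ} (h : DecaysOn d τ A y) :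
    Tendsto (fun r : ℝ => y (r * τ)) atTop (𝓝 0) := by
  have hbound : Tendsto (fun r => A * Real.exp (-phase d r)) atTop (𝓝 0) := by
    simpa using (Real.tendsto_exp_neg_atTop_nhds_zero.comp (tendsto_phase_atTop d)).const_mul A
  refine squeeze_zero_norm' ?_ hbound
  filter_upwards [eventually_ge_atTop 0] with r hr using h r hr

lemma DecaysOn.const_smul {τ : ℂ} {A : ℝ} {y : ℂ → ℂ} (h : DecaysOn d τ A y) (a : ℂ) :
    DecaysOn d τ (‖a‖ * A) (a • y) := fun r hr => by
  rw [Pi.smul_apply, norm_smul, mul_assoc]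
  exact mul_le_mul_of_nonneg_left (h r hr) (norm_nonneg a)

lemma one_le_threshold [NeZero d] {B : ℝ} (hB : 0 ≤ B) : 1 ≤ threshold d B := by
  have hd : (1 : ℝ) ≤ d := by exact_mod_cast NeZero.one_le
  rw [threshold]
  nlinarith

end Phase

section CentralRay

variable {d : ℕ} {p : Params d} {y y₁ y₂ : ℂ → ℂ} {τ : ℂ} {B : ℝ}

lemma norm_eq_one_of_pow_add_two (hτ : τ ^ (d + 2) = 1) : ‖τ‖ = 1 :=
  Complex.norm_eq_one_of_pow_eq_one hτ (by omega)

lemma deriv_ray (hy : Differentiable ℂ y) (τ : ℂ) :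
    deriv (fun r : ℝ => y (r * τ)) = fun r : ℝ => τ * deriv y (r * τ) :=
  funext fun r => (hasDerivAt_ray τ hy r).deriv

lemma differentiable_ray (hy : Differentiable ℂ y) (τ : ℂ) :
    Differentiable ℝ (fun r : ℝ => y (r * τ)) :=
  fun r => (hasDerivAt_ray τ hy r).differentiableAt

lemma IsSol.hasDerivAt_deriv_ray (hy : IsSol d p.1 p.2 y) (τ : ℂ) (r : ℝ) :
    HasDerivAt (deriv fun r : ℝ => y (r * τ))
      (τ ^ 2 * (potPoly d p).eval (r * τ) * y (r * τ)) r := by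
  rw [deriv_ray hy.1]
  refine ((hasDerivAt_ray τ hy.1.deriv r).const_mul τ).congr_deriv ?_
  rw [hy.deriv_deriv]
  ring

lemma continuous_energy_sol (d : ℕ) (p : Params d) (κ : ℝ → ℝ) (τ : ℂ) (r : ℝ) :
    Continuous fun v => energy κ (fun r : ℝ => sol d p v (r * τ)) r := by
  have hjet := continuous_jet_sol d p (r * τ)
  have h0 : Continuous fun v => sol d p v (r * τ) := hjet.fst
  have h1 : Continuous fun v => deriv (sol d p v) (r * τ) := hjet.snd
  simp only [energy, deriv_ray (isSol_sol d p _).1]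
  fun_prop

variable [NeZero d]

lemma le_re_potPoly_ray (hp : ‖p‖ ≤ B) (hτ : τ ^ (d + 2) = 1) {r : ℝ}
    (hr : threshold d B ≤ r) : r ^ d / 4 ≤ (τ ^ 2 * (potPoly d p).eval (r * τ)).re := by
  have hB : 0 ≤ B := (norm_nonneg p).trans hp
  have hr1 : 1 ≤ r := (one_le_threshold hB).trans hr
  have hτ1 := norm_eq_one_of_pow_add_two hτ
  have hsplit : τ ^ 2 * (potPoly d p).eval (r * τ) =
      ((r ^ d : ℝ) : ℂ) + τ ^ 2 * (lowerPoly d p).eval (r * τ) := by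
    simp only [potPoly, Polynomial.eval_add, Polynomial.eval_pow, Polynomial.eval_X,
      Complex.ofReal_pow]
    linear_combination (r : ℂ) ^ d * hτ
  have hlower : ‖τ ^ 2 * (lowerPoly d p).eval (r * τ)‖ ≤ d * B * r ^ (d - 1) := by
    rw [norm_mul, norm_pow, hτ1, one_pow, one_mul]
    refine (norm_eval_lowerPoly_le p hr1 (norm_ofReal_mul_le hτ1.le (by linarith))).trans ?_
    gcongr
  have hre := (abs_le.1 ((Complex.abs_re_le_norm _).trans hlower)).1
  have hpow : r ^ d = r * r ^ (d - 1) := (mul_pow_sub_one (NeZero.ne d) r).symm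
  have hthreshold : d * B ≤ r * (3 / 4) := by
    have hd : (1 : ℝ) ≤ d := by exact_mod_cast NeZero.one_le
    rw [threshold] at hr
    nlinarith
  rw [hsplit, Complex.add_re, Complex.ofReal_re, hpow]
  nlinarith [mul_le_mul_of_nonneg_right hthreshold (show 0 ≤ r ^ (d - 1) by positivity)]

lemma IsSol.monotoneOn_energy (hy : IsSol d p.1 p.2 y) (hp : ‖p‖ ≤ B) (hτ : τ ^ (d + 2) = 1) :
    MonotoneOn (energy (phaseDeriv d) fun r : ℝ => y (r * τ)) (Set.Ici (threshold d B)) := by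
  have hpos (r : ℝ) (hr : threshold d B ≤ r) : 0 < r := by
    linarith [one_le_threshold (d := d) ((norm_nonneg p).trans hp)]
  refine _root_.monotoneOn_energy (differentiable_ray hy.1 τ)
    (fun r _ => hy.hasDerivAt_deriv_ray τ r)
    (fun r hr => hasDerivAt_phaseDeriv d (hpos r hr))
    (fun r hr => phaseDeriv_nonneg d (hpos r hr).le) (fun r hr => ?_) (fun r hr => ?_)
  · have := hpos r hr
    positivity
  · rw [phaseDeriv_sq d (hpos r hr).le]
    exact le_re_potPoly_ray hp hτ hr

lemma IsSol.norm_le_of_energy_nonpos (hy : IsSol d p.1 p.2 y) (hp : ‖p‖ ≤ B)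
    (hτ : τ ^ (d + 2) = 1)
    (hE : ∀ r, threshold d B ≤ r → energy (phaseDeriv d) (fun r : ℝ => y (r * τ)) r ≤ 0) :
    DecaysOn d τ (decayConst d B * ‖jet y 0‖) y := by
  intro r hr
  have hR := one_le_threshold (d := d) ((norm_nonneg p).trans hp)
  set R := threshold d B
  have hin (s : ℝ) (hs : s ∈ Set.Icc 0 R) :
      ‖y (s * τ)‖ ≤ ‖jet y 0‖ * Real.exp (potBound d B R * R) :=
    (norm_le_norm_jet y _).trans
      (hy.norm_jet_le (norm_eq_one_of_pow_add_two hτ).le hR hp hs)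
  have hconst : decayConst d B * ‖jet y 0‖ * Real.exp (-phase d r) =
      ‖jet y 0‖ * Real.exp (potBound d B R * R) * Real.exp (phase d R) * Real.exp (-phase d r) := by
    rw [decayConst]
    ring
  rw [hconst]
  rcases le_total r R with hrR | hRr
  · rw [mul_assoc _ (Real.exp (phase d R)), ← Real.exp_add]
    exact (hin r ⟨hr, hrR⟩).trans (le_mul_of_one_le_right (by positivity)
      (Real.one_le_exp (by linarith [phase_mono d hr hrR])))
  · refine (_root_.norm_le_of_energy_nonpos (differentiable_ray hy.1 τ)
      (fun s hs => hasDerivAt_phase d (by linarith)) hE hRr).trans ?_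
    gcongr
    exact hin R ⟨by linarith, le_rfl⟩

lemma exists_sol_eq_zero (d : ℕ) (p : Params d) (z : ℂ) :
    ∃ v : ℂ × ℂ, ‖v‖ = 1 ∧ sol d p v z = 0 := by
  let evalAt : ℂ × ℂ →ₗ[ℂ] ℂ := LinearMap.proj z ∘ₗ sol d p
  obtain ⟨v, hv, hv0⟩ := Submodule.exists_mem_ne_zero_of_ne_bot
    (evalAt.ker_ne_bot_of_finrank_lt (by simp))
  have hvz : sol d p v z = 0 := hv
  refine ⟨((‖v‖⁻¹ : ℝ) : ℂ) • v, ?_, ?_⟩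
  · rw [norm_smul, Complex.norm_real, norm_inv, norm_norm, inv_mul_cancel₀ (norm_ne_zero_iff.2 hv0)]
  · rw [map_smul, Pi.smul_apply, hvz, smul_zero]

-- The unit Cauchy data with nonpositive energy at radius `threshold d B + N` form nested compact
-- sets, which are nonempty since a solution vanishing at that radius has zero energy there.
theorem exists_decaysOn (hp : ‖p‖ ≤ B) (hτ : τ ^ (d + 2) = 1) :
    ∃ v : ℂ × ℂ, ‖v‖ = 1 ∧ DecaysOn d τ (decayConst d B) (sol d p v) := by
  let E (v : ℂ × ℂ) : ℝ → ℝ := energy (phaseDeriv d) fun r : ℝ => sol d p v (r * τ)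
  let K (N : ℕ) : Set (ℂ × ℂ) := Metric.sphere 0 1 ∩ {v | E v (threshold d B + N) ≤ 0}
  have hE (v : ℂ × ℂ) : MonotoneOn (E v) (Set.Ici (threshold d B)) :=
    (isSol_sol d p v).monotoneOn_energy hp hτ
  have hclosed (N : ℕ) : IsClosed {v | E v (threshold d B + N) ≤ 0} :=
    isClosed_le (continuous_energy_sol d p _ τ _) continuous_const
  have hanti (N : ℕ) : K (N + 1) ⊆ K N := fun v hv =>
    ⟨hv.1, (hE v (by simp) (by simp only [Nat.cast_add, Nat.cast_one, Set.mem_Ici,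
      le_add_iff_nonneg_right]; positivity) (by simp)).trans hv.2⟩
  have hne (N : ℕ) : (K N).Nonempty := by
    obtain ⟨v, hv1, hv0⟩ := exists_sol_eq_zero d p ((threshold d B + N : ℝ) * τ)
    exact ⟨v, mem_sphere_zero_iff_norm.2 hv1, by
      simp only [Set.mem_ofPred_eq, E, energy, hv0]
      simp⟩
  obtain ⟨v, hv⟩ := IsCompact.nonempty_iInter_of_sequence_nonempty_isCompact_isClosed K hanti hne
    ((isCompact_sphere _ _).inter_right (hclosed 0))
    fun N => Metric.isClosed_sphere.inter (hclosed N)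
  rw [Set.mem_iInter] at hv
  have hv1 : ‖v‖ = 1 := mem_sphere_zero_iff_norm.1 (hv 0).1
  have hnonpos (s : ℝ) (hs : threshold d B ≤ s) : E v s ≤ 0 := by
    obtain ⟨N, hN⟩ := exists_nat_ge s
    have hthreshold := one_le_threshold (d := d) ((norm_nonneg p).trans hp)
    exact (hE v hs (by simp) (by linarith)).trans (hv N).2
  refine ⟨v, hv1, ?_⟩
  simpa [hv1] using (isSol_sol d p v).norm_le_of_energy_nonpos hp hτ hnonpos

lemma IsSol.eq_zero_of_tendsto (hy : IsSol d p.1 p.2 y) (hτ : τ ^ (d + 2) = 1)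
    (h0 : y ((threshold d ‖p‖ : ℝ) * τ) = 0)
    (hlim : Tendsto (fun r : ℝ => y (r * τ)) atTop (𝓝 0)) : y = 0 := by
  have hR := one_le_threshold (d := d) (norm_nonneg p)
  have hτ0 : τ ≠ 0 := norm_ne_zero_iff.1 (by simp [norm_eq_one_of_pow_add_two hτ])
  have hmono := _root_.monotoneOn_energy (κ := 0) (κ' := 0) (differentiable_ray hy.1 τ)
    (fun r _ => hy.hasDerivAt_deriv_ray τ r) (fun r _ => hasDerivAt_const r 0) (fun _ _ => le_rfl)
    (fun _ _ => le_rfl) fun r hr => by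
      have hpos : 0 ≤ r := by linarith
      have hpot := le_re_potPoly_ray le_rfl hτ hr
      simp only [Pi.zero_apply, ne_eq, OfNat.ofNat_ne_zero, not_false_eq_true, zero_pow]
      exact (by positivity : 0 ≤ r ^ d / 4).trans hpot
  refine eq_zero_of_forall_ray_eq_zero hy.1 hτ0 (R := threshold d ‖p‖) fun r hr =>
    eq_zero_of_tendsto_of_inner_deriv_nonneg (differentiable_ray hy.1 τ) (fun s hs => ?_) hlim hr
  simpa [energy, h0] using hmono Set.self_mem_Ici hs hs

lemma IsSol.exists_smul_eq_of_tendsto (h₁ : IsSol d p.1 p.2 y₁) (h₂ : IsSol d p.1 p.2 y₂)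
    (hτ : τ ^ (d + 2) = 1) (hlim₁ : Tendsto (fun r : ℝ => y₁ (r * τ)) atTop (𝓝 0))
    (hlim₂ : Tendsto (fun r : ℝ => y₂ (r * τ)) atTop (𝓝 0)) (hne : y₂ ≠ 0) :
    ∃ c : ℂ, y₁ = c • y₂ := by
  set z : ℂ := (threshold d ‖p‖ : ℝ) * τ with hz
  have hz0 : y₂ z ≠ 0 := fun h => hne (h₂.eq_zero_of_tendsto hτ h hlim₂)
  refine ⟨y₁ z / y₂ z, ?_⟩
  have hzero := (h₁.add (h₂.const_smul (-(y₁ z / y₂ z)))).eq_zero_of_tendsto hτ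
    (by simp [← hz, hz0]) (by simpa using hlim₁.add (hlim₂.const_mul (-(y₁ z / y₂ z))))
  rwa [neg_smul, ← sub_eq_add_neg, sub_eq_zero] at hzero

theorem IsSol.decaysOn_of_tendsto (hy : IsSol d p.1 p.2 y) (hτ : τ ^ (d + 2) = 1)
    (hlim : Tendsto (fun r : ℝ => y (r * τ)) atTop (𝓝 0)) : ∃ A, DecaysOn d τ A y := by
  obtain ⟨v, hv, hdecay⟩ := exists_decaysOn (le_refl ‖p‖) hτ
  obtain ⟨c, rfl⟩ := hy.exists_smul_eq_of_tendsto (isSol_sol d p v) hτ hlim hdecay.tendsto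
    (sol_ne_zero fun h => by simp [h] at hv)
  exact ⟨_, hdecay.const_smul c⟩

end CentralRay

/-! ### Propagation of decay to the whole sector -/

section PhragmenLindelof

variable {f : ℂ → ℂ} {ρ a φ : ℝ}

lemma norm_exp_mul_exp (a ε ρ : ℝ) (w : ℂ) :
    ‖exp ((a + ε * I) * exp (ρ * w))‖ =
      Real.exp ((a * Real.cos (ρ * w.im) - ε * Real.sin (ρ * w.im)) * Real.exp w.re ^ ρ) := by
  have hexp : exp (ρ * w) = (Real.exp w.re ^ ρ : ℝ) *
      ((Real.cos (ρ * w.im) : ℝ) + (Real.sin (ρ * w.im) : ℝ) * I) := by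
    have hw : (ρ : ℂ) * w = (w.re * ρ : ℝ) + (ρ * w.im : ℝ) * I := by
      apply Complex.ext <;> simp [mul_comm]
    rw [hw, Complex.exp_add, exp_mul_I, ← Complex.ofReal_cos, ← Complex.ofReal_sin,
      ← Complex.ofReal_exp, Real.exp_mul]
  rw [norm_exp, hexp]
  congr 1
  simp only [mul_re, mul_im, add_re, add_im, ofReal_re, ofReal_im, I_re, I_im]
  ring

lemma norm_mul_exp_le {K M c ε : ℝ} (hf : ∀ z, ‖f z‖ ≤ K * Real.exp (M * ‖z‖ ^ c)) (hM : 0 ≤ M)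
    (ha : 0 ≤ a) (hε : 0 ≤ ε) (hρ : 0 ≤ ρ) (hc : ρ ≤ c) (w : ℂ) :
    ‖f (exp w) * exp ((a + ε * I) * exp (ρ * w))‖ ≤
      K * Real.exp ((M + a + ε) * Real.exp (c * |w.re|)) := by
  have hK : 0 ≤ K := nonneg_of_mul_nonneg_left ((norm_nonneg _).trans (hf 0)) (Real.exp_pos _)
  have hpow : ∀ s ≤ c, 0 ≤ s → Real.exp w.re ^ s ≤ Real.exp (c * |w.re|) := fun s hs hs0 => by
    rw [← Real.exp_mul, mul_comm, Real.exp_le_exp]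
    exact (mul_le_mul_of_nonneg_left (le_abs_self _) hs0).trans
      (mul_le_mul_of_nonneg_right hs (abs_nonneg _))
  have htrig : a * Real.cos (ρ * w.im) - ε * Real.sin (ρ * w.im) ≤ a + ε := by
    nlinarith [Real.cos_le_one (ρ * w.im), Real.neg_one_le_sin (ρ * w.im)]
  rw [norm_mul, norm_exp_mul_exp]
  calc _ ≤ K * Real.exp (M * Real.exp w.re ^ c) *
        Real.exp ((a + ε) * Real.exp w.re ^ ρ) := by
        gcongr
        simpa only [norm_exp] using hf (exp w)
    _ = K * Real.exp (M * Real.exp w.re ^ c + (a + ε) * Real.exp w.re ^ ρ) := by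
        rw [mul_assoc, ← Real.exp_add]
    _ ≤ _ := by
        gcongr
        nlinarith [hpow c le_rfl (hρ.trans hc), hpow ρ hc hρ]

/- The multiplier `exp ((a + ε * I) * z ^ ρ)` turns the decay on the positive real axis into
boundedness and kills the subexponential growth on the other edge, so that Phragmén–Lindelöf
applies in the logarithmic coordinate. -/
lemma exists_norm_mul_exp_le {A K M c ε : ℝ} (hf : Differentiable ℂ f) (hM : 0 ≤ M) (ha : 0 ≤ a)
    (hε : 0 < ε) (hρ : 0 < ρ) (hρc : ρ ≤ c) (hc : c < 2 * ρ)
    (hgrowth : ∀ z, ‖f z‖ ≤ K * Real.exp (M * ‖z‖ ^ c))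
    (hdecay : ∀ r : ℝ, 0 ≤ r → ‖f r‖ ≤ A * Real.exp (-(a * r ^ ρ)))
    (hedge : ∃ C, ∀ r : ℝ, 0 ≤ r →
      ‖f (r * exp ((Real.pi / (2 * ρ) : ℝ) * I))‖ ≤ C * Real.exp (ε * r ^ ρ)) :
    ∃ C, ∀ w : ℂ, 0 ≤ w.im → w.im ≤ Real.pi / (2 * ρ) →
      ‖f (exp w) * exp ((a + ε * I) * exp (ρ * w))‖ ≤ C := by
  obtain ⟨C, hC⟩ := hedge
  have hexp (w : ℂ) : exp w = (Real.exp w.re : ℝ) * exp (w.im * I) := by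
    rw [Complex.ofReal_exp, ← Complex.exp_add, re_add_im]
  refine ⟨max A C, fun w h0 h1 => PhragmenLindelof.horizontal_strip (a := 0)
    (b := Real.pi / (2 * ρ)) (f := fun w => f (exp w) * exp ((a + ε * I) * exp (ρ * w)))
    (Differentiable.diffContOnCl (by fun_prop)) ⟨c, ?_, M + a + ε, ?_⟩ (fun w hw => ?_)
    (fun w hw => ?_) h0 h1⟩
  · rwa [sub_zero, div_div_cancel₀ Real.pi_ne_zero]
  · refine Asymptotics.IsBigO.of_bound K (Eventually.of_forall fun w => ?_)
    rw [Real.norm_of_nonneg (Real.exp_pos _).le]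
    exact norm_mul_exp_le hgrowth hM ha hε.le hρ.le hρc w
  · refine le_max_of_le_left ?_
    rw [norm_mul, norm_exp_mul_exp, hexp, hw, ofReal_zero, zero_mul, Complex.exp_zero, mul_one,
      mul_zero, Real.cos_zero, Real.sin_zero, mul_one, mul_zero, sub_zero,
      ← le_div_iff₀ (Real.exp_pos _), div_eq_mul_inv, ← Real.exp_neg]
    exact hdecay _ (Real.exp_pos _).le
  · refine le_max_of_le_right ?_
    have hangle : ρ * (Real.pi / (2 * ρ)) = Real.pi / 2 := by field_simp
    rw [norm_mul, norm_exp_mul_exp, hexp, hw, hangle, Real.cos_pi_div_two, Real.sin_pi_div_two,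
      mul_zero, mul_one, zero_sub, neg_mul, Real.exp_neg, ← div_eq_mul_inv,
      div_le_iff₀ (Real.exp_pos _)]
    exact hC _ (Real.exp_pos _).le

theorem tendsto_zero_of_decay_of_growth {A K M c : ℝ} (hf : Differentiable ℂ f) (hM : 0 ≤ M)
    (ha : 0 < a) (hρ : 0 < ρ) (hρc : ρ ≤ c) (hc : c < 2 * ρ)
    (hgrowth : ∀ z, ‖f z‖ ≤ K * Real.exp (M * ‖z‖ ^ c))
    (hdecay : ∀ r : ℝ, 0 ≤ r → ‖f r‖ ≤ A * Real.exp (-(a * r ^ ρ)))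
    (hedge : ∀ ε > 0, ∃ C, ∀ r : ℝ, 0 ≤ r →
      ‖f (r * exp ((Real.pi / (2 * ρ) : ℝ) * I))‖ ≤ C * Real.exp (ε * r ^ ρ))
    (hφ0 : 0 ≤ φ) (hφ : φ < Real.pi / (2 * ρ)) :
    Tendsto (fun r : ℝ => f (r * exp (φ * I))) atTop (𝓝 0) := by
  have hangle : ρ * φ < Real.pi / 2 := by
    rw [lt_div_iff₀ (by positivity)] at hφ
    linarith
  have hcos : 0 < Real.cos (ρ * φ) :=
    Real.cos_pos_of_mem_Ioo ⟨by linarith [mul_nonneg hρ.le hφ0, Real.pi_pos], hangle⟩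
  set ε := a * Real.cos (ρ * φ) / 2 with hεdef
  have hε : 0 < ε := by positivity
  obtain ⟨C, hC⟩ := exists_norm_mul_exp_le hf hM ha.le hε hρ hρc hc hgrowth hdecay (hedge ε hε)
  have hlim : Tendsto (fun r : ℝ => C * Real.exp (-(ε * r ^ ρ))) atTop (𝓝 0) := by
    simpa using (Real.tendsto_exp_neg_atTop_nhds_zero.comp
      ((tendsto_rpow_atTop hρ).const_mul_atTop hε)).const_mul C
  refine squeeze_zero_norm' ?_ hlim
  filter_upwards [eventually_gt_atTop 0] with r hr
  have hpolar : exp (Real.log r + φ * I) = r * exp (φ * I) := by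
    rw [Complex.exp_add, ← Complex.ofReal_exp, Real.exp_log hr]
  have hbound := hC (Real.log r + φ * I) (by simpa using hφ0) (by simpa using hφ.le)
  rw [norm_mul, hpolar, norm_exp_mul_exp] at hbound
  simp only [add_re, add_im, ofReal_re, ofReal_im, re_ofReal_mul, im_ofReal_mul, I_re, I_im,
    mul_zero, mul_one, add_zero, zero_add, Real.exp_log hr] at hbound
  have hmultiplier : Real.exp (ε * r ^ ρ) ≤
      Real.exp ((a * Real.cos (ρ * φ) - ε * Real.sin (ρ * φ)) * r ^ ρ) := by
    gcongr
    nlinarith [Real.sin_le_one (ρ * φ)]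
  rw [Real.exp_neg, ← div_eq_mul_inv, le_div_iff₀ (Real.exp_pos _)]
  exact (mul_le_mul_of_nonneg_left hmultiplier (norm_nonneg _)).trans hbound

theorem tendsto_zero_of_decay_of_growth_of_abs_lt {A K M c : ℝ} (hf : Differentiable ℂ f)
    (hM : 0 ≤ M) (ha : 0 < a) (hρ : 0 < ρ) (hρc : ρ ≤ c) (hc : c < 2 * ρ)
    (hgrowth : ∀ z, ‖f z‖ ≤ K * Real.exp (M * ‖z‖ ^ c))
    (hdecay : ∀ r : ℝ, 0 ≤ r → ‖f r‖ ≤ A * Real.exp (-(a * r ^ ρ)))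
    (hedge : ∀ θ : ℝ, |θ| = Real.pi / (2 * ρ) → ∀ ε > 0, ∃ C, ∀ r : ℝ, 0 ≤ r →
      ‖f (r * exp (θ * I))‖ ≤ C * Real.exp (ε * r ^ ρ))
    (hφ : |φ| < Real.pi / (2 * ρ)) :
    Tendsto (fun r : ℝ => f (r * exp (φ * I))) atTop (𝓝 0) := by
  have hangle : 0 ≤ Real.pi / (2 * ρ) := by positivity
  rcases le_total 0 φ with h | h
  · exact tendsto_zero_of_decay_of_growth hf hM ha hρ hρc hc hgrowth hdecay
      (hedge _ (abs_of_nonneg hangle)) h ((le_abs_self φ).trans_lt hφ)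
  · have hconj : ∀ (r θ : ℝ), (starRingEnd ℂ) (r * exp (θ * I)) = r * exp ((-θ : ℝ) * I) := by
      intro r θ
      simp [← Complex.exp_conj]
    have hreflected := tendsto_zero_of_decay_of_growth (f := starRingEnd ℂ ∘ f ∘ starRingEnd ℂ)
      (φ := -φ) (fun z => differentiableAt_conj_conj_iff.2 (hf _)) hM ha hρ hρc hc
      (fun z => by simpa using hgrowth (starRingEnd ℂ z))
      (fun r hr => by simpa using hdecay r hr) (fun ε hε => by
        simpa only [Function.comp_apply, hconj, RCLike.norm_conj] using
          hedge _ ((abs_neg _).trans (abs_of_nonneg hangle)) ε hε)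
      (by linarith) ((neg_le_abs φ).trans_lt hφ)
    simpa only [Function.comp_def, hconj, neg_neg, map_zero, Complex.conj_conj]
      using (Complex.continuous_conj.tendsto 0).comp hreflected

end PhragmenLindelof

section BoundaryRay

variable {d : ℕ} {p : Params d} {y : ℂ → ℂ} {σ : ℂ}

lemma le_mul_exp_of_hasDerivAt_le {E E' Ψ Ψ' : ℝ → ℝ} {a r : ℝ}
    (hE : ∀ r, a ≤ r → HasDerivAt E (E' r) r) (hΨ : ∀ r, a ≤ r → HasDerivAt Ψ (Ψ' r) r)
    (hle : ∀ r, a ≤ r → E' r ≤ Ψ' r * E r) (hr : a ≤ r) :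
    E r ≤ E a * Real.exp (Ψ r - Ψ a) := by
  have hderiv : ∀ r, a ≤ r → HasDerivAt (fun r => E r * Real.exp (-Ψ r))
      (E' r * Real.exp (-Ψ r) + E r * (Real.exp (-Ψ r) * (-Ψ' r))) r :=
    fun r hr => (hE r hr).mul (hΨ r hr).fun_neg.exp
  have hanti : AntitoneOn (fun r => E r * Real.exp (-Ψ r)) (Set.Ici a) :=
    antitoneOn_of_hasDerivWithinAt_nonpos (convex_Ici a)
      (fun r hr => (hderiv r hr).continuousAt.continuousWithinAt)
      (fun r hr => (hderiv r (interior_subset hr)).hasDerivWithinAt) fun r hr => by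
        nlinarith [hle r (interior_subset hr), Real.exp_pos (-Ψ r)]
  have hmono := hanti (Set.mem_Ici.2 le_rfl) (Set.mem_Ici.2 hr) hr
  calc E r = E r * Real.exp (-Ψ r) * Real.exp (Ψ r) := by
        rw [mul_assoc, ← Real.exp_add, neg_add_cancel, Real.exp_zero, mul_one]
    _ ≤ E a * Real.exp (-Ψ a) * Real.exp (Ψ r) := by gcongr
    _ = _ := by rw [mul_assoc, ← Real.exp_add, neg_add_eq_sub]

lemma two_mul_inner_add_le {g g' l : ℂ} {w q b c : ℝ} (hw : 1 ≤ w) (hq : 0 ≤ q) (hc : 0 ≤ c)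
    (hl : ‖l‖ ≤ b * (w * q)) :
    2 * inner ℝ g' ((-(w ^ 2 : ℝ) + l) * g) + (c * (w * q) * ‖g‖ ^ 2 + w ^ 2 * (2 * inner ℝ g g'))
      ≤ (b + c) * q * (‖g'‖ ^ 2 + w ^ 2 * ‖g‖ ^ 2) := by
  have hsplit : ((-(w ^ 2 : ℝ) + l) * g : ℂ) = l * g - (w ^ 2) • g := by
    rw [Complex.real_smul]
    ring
  have hinner : inner ℝ g' (l * g) ≤ b * (w * q) * (‖g'‖ * ‖g‖) := by
    calc inner ℝ g' (l * g) ≤ ‖g'‖ * (‖l‖ * ‖g‖) := norm_mul l g ▸ real_inner_le_norm g' (l * g)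
      _ ≤ ‖g'‖ * (b * (w * q) * ‖g‖) := by gcongr
      _ = _ := by ring
  have hbq : 0 ≤ b * q := by
    have := (norm_nonneg l).trans hl
    exact nonneg_of_mul_nonneg_right (by linarith : 0 ≤ w * (b * q)) (by linarith)
  have hcross : b * q * (2 * (w * ‖g'‖ * ‖g‖)) ≤ b * q * (‖g'‖ ^ 2 + w ^ 2 * ‖g‖ ^ 2) := by
    gcongr
    nlinarith [sq_nonneg (‖g'‖ - w * ‖g‖)]
  have hdiag : c * q * (w * ‖g‖ ^ 2) ≤ c * q * (‖g'‖ ^ 2 + w ^ 2 * ‖g‖ ^ 2) := by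
    gcongr
    nlinarith [sq_nonneg ‖g'‖, sq_nonneg ‖g‖, mul_nonneg (sub_nonneg.2 hw) (sq_nonneg ‖g‖)]
  rw [hsplit, inner_sub_right, inner_smul_right, real_inner_comm g g']
  linarith

variable [NeZero d]

lemma IsSol.two_mul_inner_boundary_ray_le (hy : IsSol d p.1 p.2 y) (hσ : σ ^ (d + 2) = -1)
    {g : ℝ → ℂ} (hg : g = fun r : ℝ => y (r * σ)) {r : ℝ} (hr : 1 ≤ r) :
    2 * inner ℝ (deriv g r) (deriv (deriv g) r) +
        (d * r ^ (d - 1) * ‖g r‖ ^ 2 + r ^ d * (2 * inner ℝ (g r) (deriv g r))) ≤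
      2 * (‖p‖ + 1) * (d / 2 * r ^ ((d : ℝ) / 2 - 1)) *
        (‖deriv g r‖ ^ 2 + r ^ d * ‖g r‖ ^ 2) := by
  have hσ1 : ‖σ‖ = 1 := Complex.norm_eq_one_of_pow_eq_one
    (n := (d + 2) * 2) (by rw [pow_mul, hσ, neg_one_sq]) (by omega)
  have hr0 : 0 < r := by linarith
  have hlower : ‖σ ^ 2 * (lowerPoly d p).eval (r * σ)‖ ≤ d * ‖p‖ * r ^ (d - 1) := by
    rw [norm_mul, norm_pow, hσ1, one_pow, one_mul]
    exact norm_eval_lowerPoly_le p hr (norm_ofReal_mul_le hσ1.le hr0.le)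
  have hode : deriv (deriv g) r =
      (-((r ^ d : ℝ) : ℂ) + σ ^ 2 * (lowerPoly d p).eval (r * σ)) * g r := by
    rw [hg, (hy.hasDerivAt_deriv_ray σ r).deriv]
    simp only [potPoly, Polynomial.eval_add, Polynomial.eval_pow, Polynomial.eval_X,
      Complex.ofReal_pow]
    linear_combination (r : ℂ) ^ d * y (r * σ) * hσ
  have hpow : r ^ d = (r ^ ((d : ℝ) / 2)) ^ 2 := by
    rw [← Real.rpow_natCast (r ^ ((d : ℝ) / 2)), ← Real.rpow_mul hr0.le]
    norm_num
  have hpow_pred : r ^ (d - 1) = r ^ ((d : ℝ) / 2) * r ^ ((d : ℝ) / 2 - 1) := by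
    rw [Real.rpow_sub_one hr0.ne', ← mul_div_assoc, ← sq, ← hpow, eq_div_iff hr0.ne',
      pow_sub_one_mul (NeZero.ne d)]
  rw [hpow_pred] at hlower ⊢
  rw [hode, hpow]
  refine (two_mul_inner_add_le (Real.one_le_rpow hr (by positivity)) (by positivity)
    (Nat.cast_nonneg d) hlower).trans_eq ?_
  ring

/- On a boundary ray the leading part of the equation is `g'' = -r ^ d * g`, so the quantity
`‖g'‖ ^ 2 + r ^ d * ‖g‖ ^ 2` changes only through lower order terms. -/
lemma IsSol.exists_norm_boundary_ray_le (hy : IsSol d p.1 p.2 y) (hσ : σ ^ (d + 2) = -1) :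
    ∃ K, ∀ r : ℝ, 0 ≤ r → ‖y (r * σ)‖ ≤ K * Real.exp ((‖p‖ + 1) * r ^ ((d : ℝ) / 2)) := by
  obtain ⟨g, hg⟩ : ∃ g : ℝ → ℂ, g = fun r : ℝ => y (r * σ) := ⟨_, rfl⟩
  have hdiff : Differentiable ℝ g := hg ▸ differentiable_ray hy.1 σ
  have hdiff' : Differentiable ℝ (deriv g) := fun r =>
    hg ▸ (hy.hasDerivAt_deriv_ray σ r).differentiableAt
  set E : ℝ → ℝ := fun r => ‖deriv g r‖ ^ 2 + r ^ d * ‖g r‖ ^ 2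
  have hE1 : 0 ≤ E 1 := by positivity
  have hfar : ∀ r, 1 ≤ r → ‖g r‖ ≤ √(E 1) * Real.exp ((‖p‖ + 1) * r ^ ((d : ℝ) / 2)) := by
    refine fun r hr => abs_le_of_sq_le_sq' ?_ (by positivity) |>.2
    have hgronwall := le_mul_exp_of_hasDerivAt_le (a := 1) (E := E)
      (Ψ := fun r => 2 * (‖p‖ + 1) * r ^ ((d : ℝ) / 2))
      (fun r _ => (hdiff' r).hasDerivAt.norm_sq.add
        ((hasDerivAt_pow d r).mul (hdiff r).hasDerivAt.norm_sq))
      (fun r hr => (Real.hasDerivAt_rpow_const (Or.inl (by positivity))).const_mul _)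
      (fun r hr => hy.two_mul_inner_boundary_ray_le hσ hg hr) hr
    calc ‖g r‖ ^ 2 ≤ r ^ d * ‖g r‖ ^ 2 := le_mul_of_one_le_left (sq_nonneg _) (one_le_pow₀ hr)
      _ ≤ E r := le_add_of_nonneg_left (sq_nonneg _)
      _ ≤ E 1 * Real.exp (2 * (‖p‖ + 1) * r ^ ((d : ℝ) / 2)) := by
          refine hgronwall.trans ?_
          gcongr
          exact sub_le_self _ (by positivity)
      _ = (√(E 1) * Real.exp ((‖p‖ + 1) * r ^ ((d : ℝ) / 2))) ^ 2 := by
          rw [mul_pow, Real.sq_sqrt hE1, ← Real.exp_nat_mul]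
          push_cast
          ring_nf
  obtain ⟨C, hC⟩ := (isCompact_Icc (a := (0 : ℝ)) (b := 1)).exists_bound_of_continuousOn
    hdiff.continuous.continuousOn
  subst hg
  refine ⟨max C √(E 1), fun r hr => ?_⟩
  rcases le_total r 1 with hr1 | hr1
  · exact (hC r ⟨hr, hr1⟩).trans ((le_max_left _ _).trans
      (le_mul_of_one_le_right (by positivity) (Real.one_le_exp (by positivity))))
  · exact (hfar r hr1).trans (by gcongr; exact le_max_right _ _)

end BoundaryRay

section Sector

variable {d : ℕ} {p : Params d} {y : ℂ → ℂ} {τ : ℂ} {A : ℝ}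

lemma exists_mul_rpow_le {γ ρ M ε : ℝ} (hγ : 0 ≤ γ) (hγρ : γ < ρ) (hM : 0 ≤ M) (hε : 0 < ε) :
    ∃ C, ∀ r : ℝ, 0 ≤ r → M * r ^ γ ≤ C + ε * r ^ ρ := by
  obtain ⟨R, hR⟩ : ∃ R, R = (M / ε) ^ (ρ - γ)⁻¹ := ⟨_, rfl⟩
  have hR0 : 0 ≤ R := hR ▸ by positivity
  refine ⟨M * R ^ γ, fun r hr => ?_⟩
  rcases le_total r R with h | h
  · calc M * r ^ γ ≤ M * R ^ γ := by gcongr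
      _ ≤ _ := le_add_of_nonneg_right (by positivity)
  · have hMr : M ≤ ε * r ^ (ρ - γ) := by
      have hpow : R ^ (ρ - γ) ≤ r ^ (ρ - γ) := by gcongr
      rwa [hR, Real.rpow_inv_rpow (by positivity) (sub_pos.2 hγρ).ne', div_le_iff₀' hε] at hpow
    calc M * r ^ γ ≤ ε * r ^ (ρ - γ) * r ^ γ := by gcongr
      _ = ε * r ^ ρ := by
        rw [mul_assoc, ← Real.rpow_add_of_nonneg hr (sub_pos.2 hγρ).le hγ, sub_add_cancel]
      _ ≤ _ := le_add_of_nonneg_left (by positivity)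

variable [NeZero d]

lemma IsSol.exists_norm_le (hy : IsSol d p.1 p.2 y) :
    ∃ K M, 0 ≤ M ∧ ∀ z, ‖y z‖ ≤ K * Real.exp (M * ‖z‖ ^ ((d : ℝ) + 1)) := by
  refine ⟨‖jet y 0‖ * Real.exp (1 + d * ‖p‖), 1 + d * ‖p‖, by positivity, fun z => ?_⟩
  obtain ⟨R, hR⟩ : ∃ R, R = max 1 ‖z‖ := ⟨_, rfl⟩
  have hR1 : 1 ≤ R := hR ▸ le_max_left _ _
  have hz : ‖z / R‖ ≤ 1 := by
    rw [norm_div, Complex.norm_of_nonneg (by linarith), div_le_one (by linarith), hR]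
    exact le_max_right _ _
  have hjet := hy.norm_jet_le hz hR1 le_rfl (r := R) ⟨by linarith, le_rfl⟩
  rw [mul_div_cancel₀ z (by exact_mod_cast (by linarith : R ≠ 0))] at hjet
  have hpow : R ^ (d + 1) ≤ 1 + ‖z‖ ^ (d + 1) := by
    rcases max_choice 1 ‖z‖ with h | h <;> rw [hR, h]
    · simp
    · linarith
  rw [mul_assoc, ← Real.exp_add, ← Nat.cast_add_one, Real.rpow_natCast]
  refine (norm_le_norm_jet y z).trans (hjet.trans ?_)
  gcongr
  rw [potBound, mul_assoc, ← pow_succ]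
  nlinarith [norm_nonneg p, (Nat.cast_nonneg d : (0 : ℝ) ≤ d),
    mul_nonneg (Nat.cast_nonneg d : (0 : ℝ) ≤ d) (norm_nonneg p)]

lemma IsSol.exists_norm_boundary_ray_le_exp (hy : IsSol d p.1 p.2 y) {σ : ℂ}
    (hσ : σ ^ (d + 2) = -1) {ε : ℝ} (hε : 0 < ε) :
    ∃ C, ∀ r : ℝ, 0 ≤ r → ‖y (r * σ)‖ ≤ C * Real.exp (ε * r ^ (((d : ℝ) + 2) / 2)) := by
  obtain ⟨K, hK⟩ := hy.exists_norm_boundary_ray_le hσ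
  obtain ⟨C, hC⟩ := exists_mul_rpow_le (γ := (d : ℝ) / 2) (ρ := ((d : ℝ) + 2) / 2)
    (M := ‖p‖ + 1) (by positivity) (by linarith) (by positivity) hε
  have hK0 : 0 ≤ K :=
    nonneg_of_mul_nonneg_left ((norm_nonneg _).trans (hK 0 le_rfl)) (Real.exp_pos _)
  refine ⟨K * Real.exp C, fun r hr => (hK r hr).trans ?_⟩
  rw [mul_assoc, ← Real.exp_add]
  gcongr
  exact hC r hr

theorem IsSol.tendsto_of_decaysOn (hy : IsSol d p.1 p.2 y) (hτ : τ ^ (d + 2) = 1)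
    (hdecay : DecaysOn d τ A y) {φ : ℝ} (hφ : |φ| < Real.pi / (d + 2)) :
    Tendsto (fun r : ℝ => y (r * (exp (φ * I) * τ))) atTop (𝓝 0) := by
  obtain ⟨K, M, hM, hgrowth⟩ := hy.exists_norm_le
  have hτ1 := norm_eq_one_of_pow_add_two hτ
  have hangle : Real.pi / (2 * (((d : ℝ) + 2) / 2)) = Real.pi / (d + 2) := by
    rw [mul_div_cancel₀ _ two_ne_zero]
  have key := tendsto_zero_of_decay_of_growth_of_abs_lt (f := fun z => y (z * τ)) (A := A) (K := K)
    (M := M) (a := 1 / (d + 2)) (ρ := ((d : ℝ) + 2) / 2) (c := (d : ℝ) + 1) (φ := φ)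
    (hy.1.comp (differentiable_id.mul_const τ)) hM (by positivity) (by positivity)
    (by linarith [(Nat.cast_nonneg d : (0 : ℝ) ≤ d)]) (by linarith)
    (fun z => by simpa [hτ1] using hgrowth (z * τ))
    (fun r hr => (hdecay r hr).trans_eq (by rw [phase, one_div_mul_eq_div]))
    (fun θ hθ ε hε => ?_) (by rwa [hangle])
  · simpa only [mul_assoc] using key
  · rw [hangle] at hθ
    have hσ : (exp (θ * I) * τ) ^ (d + 2) = -1 := by
      have hθ' : |(d + 2) * θ| = Real.pi := by
        rw [abs_mul, hθ, abs_of_pos (by positivity), mul_div_cancel₀ _ (by positivity)]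
      rw [mul_pow, hτ, mul_one, ← Complex.exp_nat_mul, ← mul_assoc]
      rcases eq_or_eq_neg_of_abs_eq hθ' with h | h
      · have : ((d + 2 : ℕ) : ℂ) * θ = Real.pi := by exact_mod_cast h
        rw [this, exp_pi_mul_I]
      · have : ((d + 2 : ℕ) : ℂ) * θ = -Real.pi := by exact_mod_cast h
        rw [this, neg_mul, Complex.exp_neg, exp_pi_mul_I, inv_neg, inv_one]
    simpa only [mul_assoc] using hy.exists_norm_boundary_ray_le_exp hσ hε

theorem IsSol.subdominant_of_decaysOn (hy : IsSol d p.1 p.2 y) (j : ℕ)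
    (hdecay : DecaysOn d (exp ((2 * Real.pi * j / (d + 2 : ℕ) : ℝ) * I)) A y) :
    Subdominant (d + 2) j y := by
  intro θ hθ
  set θ₀ : ℝ := 2 * Real.pi * j / (d + 2 : ℕ) with hθ₀
  have hτ : exp (θ₀ * I) ^ (d + 2) = 1 := by
    rw [← Complex.exp_nat_mul, Complex.exp_eq_one_iff]
    refine ⟨j, ?_⟩
    have : ((d + 2 : ℕ) : ℂ) ≠ 0 := by exact_mod_cast (by omega : d + 2 ≠ 0)
    rw [hθ₀]
    push_cast at this ⊢
    field_simp
  have hlt : |θ - θ₀| < Real.pi / (d + 2) := by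
    rw [DirIn, ← hθ₀] at hθ
    exact_mod_cast hθ
  have hmul : exp ((θ - θ₀ : ℝ) * I) * exp (θ₀ * I) = exp (θ * I) := by
    rw [← Complex.exp_add, ← add_mul, ← ofReal_add, sub_add_cancel]
  simpa only [hmul] using hy.tendsto_of_decaysOn hτ hdecay hlt

end Sector

/-! ### Moments of products of subdominant solutions -/

section Moments

open MeasureTheory Polynomial

variable {d : ℕ} {τ : ℂ} {u y y₁ y₂ : ℂ → ℂ} {A A₁ A₂ r : ℝ}

lemma phase_nonneg (d : ℕ) (hr : 0 ≤ r) : 0 ≤ phase d r := by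
  rw [phase]
  positivity

lemma tendsto_pow_mul_exp_neg_phase (d m : ℕ) :
    Tendsto (fun r : ℝ => (r + 1) ^ m * Real.exp (-phase d r)) atTop (𝓝 0) := by
  have hlim : Tendsto (fun r : ℝ => (2 * (d + 2) : ℝ) ^ m *
      (phase d r ^ m * Real.exp (-phase d r))) atTop (𝓝 0) := by
    simpa using ((Real.tendsto_pow_mul_exp_neg_atTop_nhds_zero m).comp
      (tendsto_phase_atTop d)).const_mul ((2 * (d + 2) : ℝ) ^ m)
  have hle (r : ℝ) (hr : 1 ≤ r) : r + 1 ≤ 2 * (d + 2) * phase d r := by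
    have hpow : r ≤ r ^ (((d : ℝ) + 2) / 2) :=
      Real.self_le_rpow_of_one_le hr (by linarith [d.cast_nonneg (α := ℝ)])
    rw [phase, mul_assoc, mul_div_cancel₀ _ (by positivity)]
    linarith
  refine squeeze_zero' ?_ ?_ hlim
  · filter_upwards [eventually_ge_atTop 0] with r hr
    positivity
  · filter_upwards [eventually_ge_atTop 1] with r hr
    rw [← mul_assoc, ← mul_pow]
    gcongr
    exact hle r hr

lemma integrableOn_pow_mul_exp_neg_phase (d m : ℕ) :
    IntegrableOn (fun r : ℝ => r ^ m * Real.exp (-phase d r)) (Set.Ioi 0) := by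
  have hint := integrableOn_rpow_mul_exp_neg_mul_rpow (s := m) (p := ((d : ℝ) + 2) / 2)
    (b := 1 / (d + 2)) (by linarith [m.cast_nonneg (α := ℝ)]) (by positivity) (by positivity)
  refine hint.congr_fun (fun r _ => ?_) measurableSet_Ioi
  simp only [Real.rpow_natCast, phase]
  ring_nf

lemma DecaysOn.nonneg (h : DecaysOn d τ A y) : 0 ≤ A :=
  nonneg_of_mul_nonneg_left ((norm_nonneg _).trans (h 0 le_rfl)) (Real.exp_pos _)

lemma DecaysOn.mul (h₁ : DecaysOn d τ A₁ y₁) (h₂ : DecaysOn d τ A₂ y₂) :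
    DecaysOn d τ (A₁ * A₂) (y₁ * y₂) := by
  intro r hr
  have hexp : Real.exp (-phase d r) ≤ 1 := Real.exp_le_one_iff.2 (by linarith [phase_nonneg d hr])
  rw [Pi.mul_apply, norm_mul, mul_right_comm]
  exact mul_le_mul (h₁ r hr) ((h₂ r hr).trans (mul_le_of_le_one_right h₂.nonneg hexp))
    (norm_nonneg _) ((norm_nonneg _).trans (h₁ r hr))

lemma DecaysOn.norm_pow_mul_le (hτ : ‖τ‖ ≤ 1) (h : DecaysOn d τ A u) (k : ℕ) (hr : 0 ≤ r) :
    ‖((r : ℂ) * τ) ^ k * u (r * τ)‖ ≤ A * (r ^ k * Real.exp (-phase d r)) := by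
  rw [norm_mul, norm_pow, mul_left_comm]
  exact mul_le_mul (pow_le_pow_left₀ (norm_nonneg _) (norm_ofReal_mul_le hτ hr) k) (h r hr)
    (norm_nonneg _) (by positivity)

lemma DecaysOn.integrableOn_pow_mul (hτ : ‖τ‖ ≤ 1) (hu : Continuous u) (h : DecaysOn d τ A u)
    (k : ℕ) : IntegrableOn (fun r : ℝ => ((r : ℂ) * τ) ^ k * u (r * τ)) (Set.Ioi 0) := by
  refine Integrable.mono' ((integrableOn_pow_mul_exp_neg_phase d k).const_mul A)
    (by fun_prop : Continuous fun r : ℝ => ((r : ℂ) * τ) ^ k * u (r * τ)).aestronglyMeasurable ?_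
  filter_upwards [ae_restrict_mem measurableSet_Ioi] with r hr
  exact h.norm_pow_mul_le hτ k (le_of_lt hr)

/-- The moment `∫ (rτ)^k u(rτ) dr` of `u` along the ray in direction `τ`. -/
noncomputable def moment (τ : ℂ) (u : ℂ → ℂ) (k : ℕ) : ℂ :=
  ∫ r in Set.Ioi (0 : ℝ), ((r : ℂ) * τ) ^ k * u (r * τ)

/-- The functional `f ↦ ∫ f(rτ) u(rτ) dr` on polynomials, defined through the moments of `u` so
that it is linear for every `u`. -/
noncomputable def momentMap (τ : ℂ) (u : ℂ → ℂ) : ℂ[X] →ₗ[ℂ] ℂ :=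
  Polynomial.lsum fun m => LinearMap.toSpanSingleton ℂ ℂ (moment τ u m)

lemma momentMap_eq_sum (τ : ℂ) (u : ℂ → ℂ) (f : ℂ[X]) :
    momentMap τ u f = f.sum fun m a => a * moment τ u m := by
  simp [momentMap, Polynomial.lsum_apply]

lemma momentMap_monomial (τ : ℂ) (u : ℂ → ℂ) (m : ℕ) (a : ℂ) :
    momentMap τ u (monomial m a) = a * moment τ u m := by
  simp [momentMap_eq_sum, Polynomial.sum_monomial_index]

lemma DecaysOn.integrableOn_eval_mul (hτ : ‖τ‖ ≤ 1) (hu : Continuous u) (h : DecaysOn d τ A u)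
    (f : ℂ[X]) : IntegrableOn (fun r : ℝ => f.eval (r * τ) * u (r * τ)) (Set.Ioi 0) := by
  induction f using Polynomial.induction_on' with
  | add f g hf hg =>
    simp only [eval_add, add_mul]
    exact hf.add hg
  | monomial m a =>
    simp only [eval_monomial, mul_assoc a]
    exact (h.integrableOn_pow_mul hτ hu m).const_mul a

lemma DecaysOn.momentMap_eq_integral (hτ : ‖τ‖ ≤ 1) (hu : Continuous u) (h : DecaysOn d τ A u)
    (f : ℂ[X]) : momentMap τ u f = ∫ r in Set.Ioi (0 : ℝ), f.eval (r * τ) * u (r * τ) := by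
  induction f using Polynomial.induction_on' with
  | add f g hf hg =>
    rw [map_add, hf, hg, ← integral_add (h.integrableOn_eval_mul hτ hu f)
      (h.integrableOn_eval_mul hτ hu g)]
    simp only [eval_add, add_mul]
  | monomial m a =>
    rw [momentMap_monomial, moment, ← integral_const_mul]
    simp only [eval_monomial, mul_assoc]

lemma tendsto_eval_mul_zero (hτ : ‖τ‖ ≤ 1) {g : ℝ → ℂ} {K : ℝ} {m : ℕ}
    (hg : ∀ r, 0 ≤ r → ‖g r‖ ≤ K * ((r + 1) ^ m * Real.exp (-phase d r))) (f : ℂ[X]) :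
    Tendsto (fun r : ℝ => f.eval (r * τ) * g r) atTop (𝓝 0) := by
  induction f using Polynomial.induction_on' with
  | add f₁ f₂ h₁ h₂ =>
    simp only [eval_add, add_mul]
    simpa using h₁.add h₂
  | monomial l a =>
    have hlim := (tendsto_pow_mul_exp_neg_phase d (l + m)).const_mul (‖a‖ * K)
    rw [mul_zero] at hlim
    refine squeeze_zero_norm' ?_ hlim
    filter_upwards [eventually_ge_atTop 0] with r hr
    have hpow : ‖(r : ℂ) * τ‖ ^ l ≤ (r + 1) ^ l :=
      pow_le_pow_left₀ (norm_nonneg _) ((norm_ofReal_mul_le hτ hr).trans (by linarith)) l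
    rw [eval_monomial, norm_mul, norm_mul, norm_pow]
    calc ‖a‖ * ‖(r : ℂ) * τ‖ ^ l * ‖g r‖
        ≤ ‖a‖ * (r + 1) ^ l * (K * ((r + 1) ^ m * Real.exp (-phase d r))) := by
          gcongr
          exact hg r hr
      _ = ‖a‖ * K * ((r + 1) ^ (l + m) * Real.exp (-phase d r)) := by
          rw [pow_add]
          ring

end Moments

section Derivative

variable {E : Type*} [NormedAddCommGroup E] [NormedSpace ℝ E]

lemma norm_deriv_le_of_norm_deriv_deriv_le {g g'' : ℝ → E} (hg : Differentiable ℝ g) {r C : ℝ}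
    (hg'' : ∀ s, HasDerivAt (deriv g) (g'' s) s)
    (hC : ∀ s ∈ Set.Icc r (r + 1), ‖g'' s‖ ≤ C) : ‖deriv g r‖ ≤ ‖g r‖ + ‖g (r + 1)‖ + C := by
  have hr : r ∈ Set.Icc r (r + 1) := ⟨le_rfl, by linarith⟩
  have hr1 : r + 1 ∈ Set.Icc r (r + 1) := ⟨by linarith, le_rfl⟩
  have hC0 : 0 ≤ C := (norm_nonneg _).trans (hC r hr)
  have hslope (s : ℝ) (hs : s ∈ Set.Icc r (r + 1)) : ‖deriv g s - deriv g r‖ ≤ C := by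
    refine ((convex_Icc r (r + 1)).norm_image_sub_le_of_norm_hasDerivWithin_le
      (fun x _ => (hg'' x).hasDerivWithinAt) hC hr hs).trans (mul_le_of_le_one_right hC0 ?_)
    rw [Real.norm_of_nonneg (by linarith [hs.1])]
    linarith [hs.2]
  have htaylor : ‖g (r + 1) - (r + 1) • deriv g r - (g r - r • deriv g r)‖ ≤ C := by
    simpa using (convex_Icc r (r + 1)).norm_image_sub_le_of_norm_hasDerivWithin_le
      (f := fun s => g s - s • deriv g r)
      (fun x _ => ((hg x).hasDerivAt.sub ((hasDerivAt_id x).smul_const _)).hasDerivWithinAt)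
      (fun s hs => by rw [one_smul]; exact hslope s hs) hr hr1
  calc ‖deriv g r‖
      = ‖g (r + 1) - g r - (g (r + 1) - (r + 1) • deriv g r - (g r - r • deriv g r))‖ := by
        congr 1
        module
    _ ≤ ‖g r‖ + ‖g (r + 1)‖ + C := by
        linarith [norm_sub_le (g (r + 1) - g r)
          (g (r + 1) - (r + 1) • deriv g r - (g r - r • deriv g r)), norm_sub_le (g (r + 1)) (g r)]

end Derivative

/-- The linear functional whose value at the difference of the parameters of two subdominant
solutions is their Wronskian at `0`; `u` stands for the product of the two solutions. -/
noncomputable def pairing (d : ℕ) (τ : ℂ) (u : ℂ → ℂ) : Params d →L[ℂ] ℂ :=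
  LinearMap.toContinuousLinearMap (-τ • momentMap τ u ∘ₗ lowerPoly d)

/-- The Wronskian of `f` and `g` at `z`. -/
noncomputable def wronskian (f g : ℂ → ℂ) (z : ℂ) : ℂ := f z * deriv g z - deriv f z * g z

section Wronskian

open MeasureTheory
open Polynomial hiding wronskian

variable {d : ℕ} {p q : Params d} {τ : ℂ} {y y₁ y₂ : ℂ → ℂ} {A A₁ A₂ : ℝ}

lemma pairing_apply (d : ℕ) (τ : ℂ) (u : ℂ → ℂ) (q : Params d) :
    pairing d τ u q = -τ * momentMap τ u (lowerPoly d q) := by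
  simp [pairing]

lemma IsSol.hasDerivAt_wronskian (h₁ : IsSol d p.1 p.2 y₁) (h₂ : IsSol d q.1 q.2 y₂) (τ : ℂ)
    (r : ℝ) : HasDerivAt (fun r : ℝ => wronskian y₁ y₂ (r * τ))
      (τ * ((lowerPoly d (q - p)).eval (r * τ) * (y₁ * y₂) (r * τ))) r := by
  refine (((hasDerivAt_ray τ h₁.1 r).mul (hasDerivAt_ray τ h₂.1.deriv r)).sub
    ((hasDerivAt_ray τ h₁.1.deriv r).mul (hasDerivAt_ray τ h₂.1 r))).congr_deriv ?_
  rw [h₁.deriv_deriv, h₂.deriv_deriv, map_sub, eval_sub, Pi.mul_apply, potPoly, potPoly, eval_add,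
    eval_add]
  ring

variable [NeZero d]

lemma IsSol.norm_deriv_le (hτ : ‖τ‖ = 1) (hy : IsSol d p.1 p.2 y) (h : DecaysOn d τ A y) {r : ℝ}
    (hr : 0 ≤ r) :
    ‖deriv y (r * τ)‖ ≤ (3 + d * ‖p‖) * A * ((r + 1) ^ d * Real.exp (-phase d r)) := by
  have hA := h.nonneg
  have hR : 1 ≤ r + 1 := by linarith
  have hdecay (s : ℝ) (hs : r ≤ s) : ‖y (s * τ)‖ ≤ A * Real.exp (-phase d r) := by
    refine (h s (hr.trans hs)).trans ?_
    gcongr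
    exact phase_mono d hr hs
  have hsecond (s : ℝ) (hs : s ∈ Set.Icc r (r + 1)) :
      ‖τ ^ 2 * (potPoly d p).eval (s * τ) * y (s * τ)‖ ≤
        potBound d ‖p‖ (r + 1) * (A * Real.exp (-phase d r)) := by
    have hz : ‖(s : ℂ) * τ‖ ≤ r + 1 := (norm_ofReal_mul_le hτ.le (hr.trans hs.1)).trans hs.2
    rw [norm_mul, norm_mul, norm_pow, hτ, one_pow, one_mul]
    exact mul_le_mul (norm_eval_potPoly_le hR le_rfl hz) (hdecay s hs.1) (norm_nonneg _)
      (zero_le_one.trans (one_le_potBound d (norm_nonneg p) hR))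
  have hone : A * Real.exp (-phase d r) ≤ A * ((r + 1) ^ d * Real.exp (-phase d r)) := by
    gcongr
    exact le_mul_of_one_le_left (Real.exp_pos _).le (one_le_pow₀ hR)
  calc ‖deriv y (r * τ)‖ = ‖deriv (fun r : ℝ => y (r * τ)) r‖ := by
        rw [deriv_ray hy.1, norm_mul, hτ, one_mul]
    _ ≤ ‖y (r * τ)‖ + ‖y ((r + 1 : ℝ) * τ)‖ +
        potBound d ‖p‖ (r + 1) * (A * Real.exp (-phase d r)) :=
        norm_deriv_le_of_norm_deriv_deriv_le (differentiable_ray hy.1 τ)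
          (fun s => hy.hasDerivAt_deriv_ray τ s) hsecond
    _ ≤ 2 * (A * ((r + 1) ^ d * Real.exp (-phase d r))) +
        potBound d ‖p‖ (r + 1) * (A * Real.exp (-phase d r)) := by
        linarith [hdecay r le_rfl, hdecay (r + 1) (by linarith)]
    _ = (3 + d * ‖p‖) * A * ((r + 1) ^ d * Real.exp (-phase d r)) := by
        rw [potBound]
        ring

lemma IsSol.tendsto_eval_mul (hτ : ‖τ‖ = 1) (hy : IsSol d p.1 p.2 y) (h : DecaysOn d τ A y)
    (f : ℂ[X]) : Tendsto (fun r : ℝ => f.eval (r * τ) * y (r * τ)) atTop (𝓝 0) ∧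
      Tendsto (fun r : ℝ => f.eval (r * τ) * deriv y (r * τ)) atTop (𝓝 0) :=
  ⟨tendsto_eval_mul_zero (m := 0) hτ.le (fun r hr => by simpa using h r hr) f,
    tendsto_eval_mul_zero hτ.le (fun _ hr => hy.norm_deriv_le hτ h hr) f⟩

theorem IsSol.wronskian_eq (hτ : ‖τ‖ = 1) (s₁ : IsSol d p.1 p.2 y₁) (s₂ : IsSol d q.1 q.2 y₂)
    (h₁ : DecaysOn d τ A₁ y₁) (h₂ : DecaysOn d τ A₂ y₂) :
    wronskian y₁ y₂ 0 = pairing d τ (y₁ * y₂) (q - p) := by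
  have hcont : Continuous (y₁ * y₂) := s₁.1.continuous.mul s₂.1.continuous
  have hlim : Tendsto (fun r : ℝ => wronskian y₁ y₂ (r * τ)) atTop (𝓝 0) := by
    obtain ⟨hlim₁, hlim₁'⟩ := s₁.tendsto_eval_mul hτ h₁ 1
    obtain ⟨hlim₂, hlim₂'⟩ := s₂.tendsto_eval_mul hτ h₂ 1
    simpa [wronskian] using (hlim₁.mul hlim₂').sub (hlim₁'.mul hlim₂)
  have hint := integral_Ioi_of_hasDerivAt_of_tendsto'
    (fun r _ => s₁.hasDerivAt_wronskian s₂ τ r)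
    (((h₁.mul h₂).integrableOn_eval_mul hτ.le hcont _).const_mul τ) hlim
  rw [integral_const_mul, ← (h₁.mul h₂).momentMap_eq_integral hτ.le hcont, Complex.ofReal_zero,
    zero_mul] at hint
  rw [pairing_apply]
  linear_combination hint

end Wronskian

/-! ### The family of subdominant solutions -/

/-- An upper bound for the norm of `pairing d τ u` when `u` has decay constant `1`. -/
noncomputable def pairingConst (d : ℕ) : ℝ :=
  d * ∫ r in Set.Ioi (0 : ℝ), (1 + r ^ (d - 1)) * Real.exp (-phase d r)

section Pairing

open MeasureTheory

variable {d : ℕ} {τ : ℂ} {A : ℝ}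

lemma continuousAt_pairing {X : Type*} [TopologicalSpace X] [FirstCountableTopology X]
    (hτ : ‖τ‖ ≤ 1) {u : X → ℂ → ℂ} {x : X}
    (hu : ∀ᶠ x' in 𝓝 x, Continuous (u x') ∧ DecaysOn d τ A (u x'))
    (hlim : ∀ z, ContinuousAt (fun x' => u x' z) x) :
    ContinuousAt (fun x' => pairing d τ (u x')) x := by
  have hmoment (k : ℕ) : ContinuousAt (fun x' => moment τ (u x') k) x := by
    refine tendsto_integral_filter_of_dominated_convergence
      (fun r => A * (r ^ k * Real.exp (-phase d r))) ?_ ?_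
      ((integrableOn_pow_mul_exp_neg_phase d k).const_mul _) ?_
    · filter_upwards [hu] with x' hx'
      have := hx'.1
      exact (by fun_prop : Continuous fun r : ℝ => ((r : ℂ) * τ) ^ k * u x' (r * τ))
        |>.aestronglyMeasurable
    · filter_upwards [hu] with x' hx'
      filter_upwards [ae_restrict_mem measurableSet_Ioi] with r hr
      exact hx'.2.norm_pow_mul_le hτ k (le_of_lt hr)
    · exact Eventually.of_forall fun r => (hlim _).const_mul _
  refine continuousAt_clm_apply.2 fun q => ?_
  simp only [pairing_apply, momentMap_eq_sum, Polynomial.sum_def]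
  exact (tendsto_finsetSum _ fun k _ => (hmoment k).const_mul _).const_mul _

lemma integrableOn_one_add_pow_mul_exp_neg_phase (d m : ℕ) :
    IntegrableOn (fun r : ℝ => (1 + r ^ m) * Real.exp (-phase d r)) (Set.Ioi 0) := by
  have h0 : IntegrableOn (fun r : ℝ => Real.exp (-phase d r)) (Set.Ioi 0) := by
    simpa using integrableOn_pow_mul_exp_neg_phase d 0
  simp only [add_mul, one_mul]
  exact h0.add (integrableOn_pow_mul_exp_neg_phase d m)

lemma pairingConst_nonneg (d : ℕ) : 0 ≤ pairingConst d := by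
  refine mul_nonneg d.cast_nonneg (setIntegral_nonneg measurableSet_Ioi fun r hr => ?_)
  have : 0 < r := hr
  positivity

lemma norm_pairing_le [NeZero d] (hτ : ‖τ‖ = 1) {u : ℂ → ℂ} (hu : Continuous u)
    (h : DecaysOn d τ A u) : ‖pairing d τ u‖ ≤ pairingConst d * A := by
  have hA := h.nonneg
  refine ContinuousLinearMap.opNorm_le_bound _ (mul_nonneg (pairingConst_nonneg d) hA) fun q => ?_
  have hbound (r : ℝ) (hr : 0 < r) : ‖(lowerPoly d q).eval (r * τ) * u (r * τ)‖ ≤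
      d * A * ‖q‖ * ((1 + r ^ (d - 1)) * Real.exp (-phase d r)) := by
    have hmax : max 1 r ^ (d - 1) ≤ 1 + r ^ (d - 1) := by
      rcases le_total r 1 with hr1 | hr1
      · rw [max_eq_left hr1, one_pow]
        linarith [pow_nonneg hr.le (d - 1)]
      · rw [max_eq_right hr1]
        linarith
    have hpoly : ‖(lowerPoly d q).eval (r * τ)‖ ≤ d * ‖q‖ * (1 + r ^ (d - 1)) := by
      refine (norm_eval_lowerPoly_le q (le_max_left 1 r)
        ((norm_ofReal_mul_le hτ.le hr.le).trans (le_max_right 1 r))).trans ?_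
      gcongr
    rw [norm_mul]
    calc ‖(lowerPoly d q).eval (r * τ)‖ * ‖u (r * τ)‖
        ≤ d * ‖q‖ * (1 + r ^ (d - 1)) * (A * Real.exp (-phase d r)) :=
          mul_le_mul hpoly (h r hr.le) (norm_nonneg _) (by positivity)
      _ = d * A * ‖q‖ * ((1 + r ^ (d - 1)) * Real.exp (-phase d r)) := by ring
  have hint := norm_integral_le_of_norm_le
    ((integrableOn_one_add_pow_mul_exp_neg_phase d (d - 1)).const_mul (d * A * ‖q‖))
    ((ae_restrict_mem measurableSet_Ioi).mono fun r hr => hbound r hr)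
  rw [integral_const_mul] at hint
  rw [pairing_apply, norm_mul, norm_neg, hτ, one_mul, h.momentMap_eq_integral hτ.le hu]
  refine hint.trans_eq ?_
  rw [pairingConst]
  ring

end Pairing

section Differentiability

variable {𝕜 E F : Type*} [NontriviallyNormedField 𝕜] [NormedAddCommGroup E] [NormedSpace 𝕜 E]
  [NormedAddCommGroup F] [NormedSpace 𝕜 F] {f : E → F} {x : E}

lemma continuousAt_of_norm_sub_le {K : ℝ} (h : ∀ᶠ y in 𝓝 x, ‖f y - f x‖ ≤ K * ‖y - x‖) :
    ContinuousAt f x := by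
  rw [ContinuousAt, tendsto_iff_norm_sub_tendsto_zero]
  refine squeeze_zero' (Eventually.of_forall fun _ => norm_nonneg _) h ?_
  simpa using (tendsto_iff_norm_sub_tendsto_zero.1 (tendsto_id (α := E) (x := 𝓝 x))).const_mul K

lemma hasFDerivAt_of_eventually_eq_apply_sub {L : E → E →L[𝕜] F} (hL : ContinuousAt L x)
    (h : ∀ᶠ y in 𝓝 x, f y - f x = L y (y - x)) : HasFDerivAt f (L x) x := by
  have hnorm : (fun y => ‖L y - L x‖) =o[𝓝 x] fun _ => (1 : ℝ) :=
    (Asymptotics.isLittleO_one_iff ℝ).2 (tendsto_iff_norm_sub_tendsto_zero.1 hL)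
  have hprod := hnorm.mul_isBigO (Asymptotics.isBigO_refl (fun y => ‖y - x‖) (𝓝 x))
  simp only [one_mul] at hprod
  rw [hasFDerivAt_iff_isLittleO]
  refine (Asymptotics.IsBigO.of_bound 1 ?_).trans_isLittleO hprod.of_norm_right
  filter_upwards [h] with y hy
  rw [hy, ← sub_apply, one_mul, Real.norm_of_nonneg (by positivity)]
  exact (L y - L x).le_opNorm _

end Differentiability

section Family

variable {d : ℕ} {p p₀ q : Params d} {v w : ℂ × ℂ} {τ : ℂ} {A B : ℝ}

lemma wronskian_sol_zero (d : ℕ) (p q : Params d) (v w : ℂ × ℂ) :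
    wronskian (sol d p v) (sol d q w) 0 = v.1 * w.2 - v.2 * w.1 := by
  change (jet (sol d p v) 0).1 * (jet (sol d q w) 0).2 -
    (jet (sol d p v) 0).2 * (jet (sol d q w) 0).1 = _
  rw [jet_sol_zero, jet_sol_zero]

lemma wronskian_sol_add_smul (d : ℕ) (p q : Params d) (hvw : v.1 * w.2 - v.2 * w.1 = 1)
    (a b : ℂ) : wronskian (sol d p (v + a • w)) (sol d q (v + b • w)) 0 = b - a := by
  rw [wronskian_sol_zero]
  simp only [Prod.fst_add, Prod.snd_add, Prod.smul_fst, Prod.smul_snd, smul_eq_mul]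
  linear_combination (b - a) * hvw

lemma exists_eq_inv_smul {v w u : ℂ × ℂ} (hvw : v.1 * w.2 - v.2 * w.1 = 1) (hu : ‖u‖ = 1)
    (hb : ‖v.1 * u.2 - v.2 * u.1‖ * ‖w‖ ≤ 1 / 2) :
    ∃ a : ℂ, ‖a⁻¹‖ ≤ 2 * ‖v‖ ∧ ∃ s : ℂ, v + s • w = a⁻¹ • u := by
  set b := v.1 * u.2 - v.2 * u.1 with hb_def
  set a := u.1 * w.2 - u.2 * w.1 with ha_def
  have hbasis : u = a • v + b • w := by
    ext
    · simp only [Prod.fst_add, Prod.smul_fst, smul_eq_mul]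
      linear_combination (-u.1) * hvw + v.1 * ha_def + w.1 * hb_def
    · simp only [Prod.snd_add, Prod.smul_snd, smul_eq_mul]
      linear_combination (-u.2) * hvw + v.2 * ha_def + w.2 * hb_def
  have ha : 1 ≤ 2 * ‖v‖ * ‖a‖ := by
    have hnorm := norm_add_le (a • v) (b • w)
    rw [← hbasis, hu, norm_smul, norm_smul] at hnorm
    linarith
  have ha0 : a ≠ 0 := fun h => by
    rw [h, norm_zero, mul_zero] at ha
    linarith
  refine ⟨a, ?_, b / a, ?_⟩
  · rwa [norm_inv, inv_le_iff_one_le_mul₀ (norm_pos_iff.2 ha0)]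
  · rw [hbasis, smul_add, smul_smul, smul_smul, inv_mul_cancel₀ ha0, one_smul, div_eq_inv_mul]

variable [NeZero d]

lemma exists_decaysOn_add_smul (hp : ‖p‖ ≤ B) (hτ : τ ^ (d + 2) = 1)
    (hvw : v.1 * w.2 - v.2 * w.1 = 1) (hdecay : DecaysOn d τ A (sol d p₀ v))
    (hclose : pairingConst d * (A * decayConst d B) * ‖p - p₀‖ * ‖w‖ ≤ 1 / 2) :
    ∃ s : ℂ, DecaysOn d τ (2 * ‖v‖ * decayConst d B) (sol d p (v + s • w)) := by
  have hn := norm_eq_one_of_pow_add_two hτ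
  obtain ⟨u, hu, hudecay⟩ := exists_decaysOn hp hτ
  have hb : ‖v.1 * u.2 - v.2 * u.1‖ ≤ pairingConst d * (A * decayConst d B) * ‖p - p₀‖ := by
    rw [← wronskian_sol_zero d p₀ p,
      (isSol_sol d p₀ v).wronskian_eq hn (isSol_sol d p u) hdecay hudecay]
    refine ((pairing d τ _).le_opNorm _).trans ?_
    gcongr
    exact norm_pairing_le hn ((isSol_sol d p₀ v).1.continuous.mul (isSol_sol d p u).1.continuous)
      (hdecay.mul hudecay)
  obtain ⟨a, ha, s, hs⟩ := exists_eq_inv_smul hvw hu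
    ((mul_le_mul_of_nonneg_right hb (norm_nonneg w)).trans hclose)
  refine ⟨s, fun r hr => ?_⟩
  rw [hs, map_smul, Pi.smul_apply, norm_smul, mul_assoc]
  exact mul_le_mul ha (hudecay r hr) (norm_nonneg _) (by positivity)

lemma eventually_exists_decaysOn_add_smul (hτ : τ ^ (d + 2) = 1)
    (hvw : v.1 * w.2 - v.2 * w.1 = 1) (hdecay : DecaysOn d τ A (sol d p₀ v)) :
    ∃ A', ∀ᶠ p in 𝓝 p₀, ∃ s : ℂ, DecaysOn d τ A' (sol d p (v + s • w)) := by
  set B := ‖p₀‖ + 1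
  have hnorm : ∀ᶠ p in 𝓝 p₀, ‖p‖ < B :=
    continuous_norm.continuousAt.eventually_lt continuousAt_const (by linarith)
  have hclose : ∀ᶠ p in 𝓝 p₀,
      pairingConst d * (A * decayConst d B) * ‖p - p₀‖ * ‖w‖ < 1 / 2 := by
    refine ContinuousAt.eventually_lt (by fun_prop) continuousAt_const ?_
    simp
  refine ⟨2 * ‖v‖ * decayConst d B, ?_⟩
  filter_upwards [hnorm, hclose] with p hp hp'
  exact exists_decaysOn_add_smul hp.le hτ hvw hdecay hp'.le

lemma sub_eq_pairing_of_decaysOn (hτ : ‖τ‖ = 1) (hvw : v.1 * w.2 - v.2 * w.1 = 1) {a b : ℂ}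
    (hp : DecaysOn d τ A (sol d p (v + a • w))) (hq : DecaysOn d τ B (sol d q (v + b • w))) :
    b - a = pairing d τ (sol d p (v + a • w) * sol d q (v + b • w)) (q - p) := by
  rw [← wronskian_sol_add_smul d p q hvw]
  exact (isSol_sol d p _).wronskian_eq hτ (isSol_sol d q _) hp hq

/-- The square of the solution with parameter `p` and Cauchy data `v + s p • w`, for a parameter
dependent coefficient `s`. -/
noncomputable def solSq (v w : ℂ × ℂ) (s : Params d → ℂ) (p : Params d) : ℂ → ℂ :=
  sol d p (v + s p • w) * sol d p (v + s p • w)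

lemma hasFDerivAt_of_eventually_decaysOn (hτ : ‖τ‖ = 1) (hvw : v.1 * w.2 - v.2 * w.1 = 1)
    {s : Params d → ℂ} (hs : ∀ᶠ q in 𝓝 p, DecaysOn d τ A (sol d q (v + s q • w))) :
    HasFDerivAt s (pairing d τ (solSq v w s p)) p ∧
      ContinuousAt (fun q => pairing d τ (solSq v w s q)) p := by
  have hcont (q : Params d) : Continuous (sol d q (v + s q • w)) := (isSol_sol d q _).1.continuous
  have hsp := hs.self_of_nhds
  have hsub (q : Params d) (hq : DecaysOn d τ A (sol d q (v + s q • w))) :=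
    sub_eq_pairing_of_decaysOn hτ hvw hsp hq
  have hs_cont : ContinuousAt s p := by
    refine continuousAt_of_norm_sub_le (K := pairingConst d * (A * A)) ?_
    filter_upwards [hs] with q hq
    rw [hsub q hq]
    refine ((pairing d τ _).le_opNorm _).trans ?_
    gcongr
    exact norm_pairing_le hτ ((hcont p).mul (hcont q)) (hsp.mul hq)
  have hsol (z : ℂ) : ContinuousAt (fun q => sol d q (v + s q • w) z) p :=
    continuousAt_sol (continuousAt_const.add (hs_cont.smul continuousAt_const)) z
  constructor
  · refine hasFDerivAt_of_eventually_eq_apply_sub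
      (continuousAt_pairing hτ.le (A := A * A) ?_ fun z => continuousAt_const.mul (hsol z))
      (hs.mono hsub)
    filter_upwards [hs] with q hq using ⟨(hcont p).mul (hcont q), hsp.mul hq⟩
  · refine continuousAt_pairing hτ.le (A := A * A) ?_ fun z => (hsol z).mul (hsol z)
    filter_upwards [hs] with q hq using ⟨(hcont q).mul (hcont q), hq.mul hq⟩

theorem exists_decaysOn_family (hτ : τ ^ (d + 2) = 1) (hvw : v.1 * w.2 - v.2 * w.1 = 1)
    (hdecay : DecaysOn d τ A (sol d p₀ v)) :
    ∃ (A' : ℝ) (s : Params d → ℂ), s p₀ = 0 ∧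
      (∀ᶠ p in 𝓝 p₀, DecaysOn d τ A' (sol d p (v + s p • w)) ∧
        HasFDerivAt s (pairing d τ (solSq v w s p)) p) ∧
      ContinuousAt (fun p => pairing d τ (solSq v w s p)) p₀ := by
  have hn := norm_eq_one_of_pow_add_two hτ
  obtain ⟨A', hA'⟩ := eventually_exists_decaysOn_add_smul hτ hvw hdecay
  choose! s hs using fun p (h : ∃ s : ℂ, DecaysOn d τ A' (sol d p (v + s • w))) => h
  have hdecays : ∀ᶠ p in 𝓝 p₀, DecaysOn d τ A' (sol d p (v + s p • w)) := hA'.mono hs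
  have hs0 : s p₀ = 0 := by
    have hsub := sub_eq_pairing_of_decaysOn (a := 0) hn hvw (by simpa using hdecay)
      hdecays.self_of_nhds
    rwa [sub_self, map_zero, sub_zero] at hsub
  refine ⟨A', s, hs0, ?_, (hasFDerivAt_of_eventually_decaysOn hn hvw hdecays).2⟩
  filter_upwards [hdecays.eventually_nhds] with p hp
  exact ⟨hp.self_of_nhds, (hasFDerivAt_of_eventually_decaysOn hn hvw hp).1⟩

end Family

/-! ### Recurrence for the moments of a squared solution -/

section SymmetricSquare

open MeasureTheory Polynomial

variable {d : ℕ} {p : Params d} {τ : ℂ} {y : ℂ → ℂ} {A : ℝ}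

/-- The symmetric-square operator `V ↦ V''' - 4 P V' - 2 P' V` of the equation `y'' = P y`, acting
on polynomials. It is skew-adjoint, and its adjoint annihilates the squares of solutions. -/
noncomputable def symSquareOp (d : ℕ) (p : Params d) (V : ℂ[X]) : ℂ[X] :=
  derivative (derivative (derivative V)) - 4 * (potPoly d p * derivative V) -
    2 * (derivative (potPoly d p) * V)

/-- The primitive of `symSquareOp d p V * y ^ 2` when `y` solves the equation. -/
noncomputable def symSquareForm (d : ℕ) (p : Params d) (V : ℂ[X]) (y : ℂ → ℂ) (z : ℂ) : ℂ :=
  (derivative (derivative V) - 2 * (potPoly d p * V)).eval z * y z * y z -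
    (2 * derivative V).eval z * y z * deriv y z + (2 * V).eval z * deriv y z * deriv y z

lemma IsSol.hasDerivAt_symSquareForm (hy : IsSol d p.1 p.2 y) (V : ℂ[X]) (z : ℂ) :
    HasDerivAt (symSquareForm d p V y) ((symSquareOp d p V).eval z * (y * y) z) z := by
  have h0 := (hy.1 z).hasDerivAt
  have h1 := (hy.1.deriv z).hasDerivAt
  rw [hy.deriv_deriv] at h1
  refine ((((derivative (derivative V) - 2 * (potPoly d p * V)).hasDerivAt z).mul h0).mul h0
    |>.sub ((((2 * derivative V).hasDerivAt z).mul h0).mul h1)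
    |>.add ((((2 * V).hasDerivAt z).mul h1).mul h1)).congr_deriv ?_
  simp only [symSquareOp, derivative_sub, derivative_mul, derivative_ofNat, eval_add, eval_sub,
    eval_mul, eval_ofNat, zero_mul, zero_add, Pi.mul_apply]
  ring

lemma natDegree_lowerPoly_le (p : Params d) : (lowerPoly d p).natDegree ≤ d - 1 := by
  refine (natDegree_sub_le _ _).trans (max_le ?_ ((natDegree_C _).trans_le (Nat.zero_le _)))
  exact natDegree_sum_le_of_forall_le _ _ fun i _ =>
    (natDegree_C_mul_X_pow_le _ _).trans i.2

lemma natDegree_potPoly_le (p : Params d) : (potPoly d p).natDegree ≤ d :=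
  natDegree_add_le_of_degree_le (natDegree_X_pow_le d)
    ((natDegree_lowerPoly_le p).trans (Nat.sub_le d 1))

variable [NeZero d]

lemma IsSol.tendsto_symSquareForm (hτ : ‖τ‖ = 1) (hy : IsSol d p.1 p.2 y)
    (h : DecaysOn d τ A y) (V : ℂ[X]) :
    Tendsto (fun r : ℝ => symSquareForm d p V y (r * τ)) atTop (𝓝 0) := by
  have hlim (f : ℂ[X]) := (hy.tendsto_eval_mul hτ h f).1
  have hlim' (f : ℂ[X]) := (hy.tendsto_eval_mul hτ h f).2
  have hy_lim : Tendsto (fun r : ℝ => y (r * τ)) atTop (𝓝 0) := by simpa using hlim 1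
  have hy'_lim : Tendsto (fun r : ℝ => deriv y (r * τ)) atTop (𝓝 0) := by simpa using hlim' 1
  simpa only [symSquareForm, mul_zero, sub_zero, add_zero] using
    ((hlim (derivative (derivative V) - 2 * (potPoly d p * V))).mul hy_lim).sub
      ((hlim (2 * derivative V)).mul hy'_lim) |>.add ((hlim' (2 * V)).mul hy'_lim)

lemma IsSol.mul_momentMap_symSquareOp (hτ : ‖τ‖ = 1) (hy : IsSol d p.1 p.2 y)
    (h : DecaysOn d τ A y) (V : ℂ[X]) :
    τ * momentMap τ (y * y) (symSquareOp d p V) = -symSquareForm d p V y 0 := by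
  have hcont : Continuous (y * y) := hy.1.continuous.mul hy.1.continuous
  have hderiv (r : ℝ) : HasDerivAt (fun r : ℝ => symSquareForm d p V y (r * τ))
      (τ * ((symSquareOp d p V).eval (r * τ) * (y * y) (r * τ))) r := by
    have hform := hy.hasDerivAt_symSquareForm V
    simpa only [(hform _).deriv] using hasDerivAt_ray τ (fun z => (hform z).differentiableAt) r
  have hint := integral_Ioi_of_hasDerivAt_of_tendsto' (fun r _ => hderiv r)
    (((h.mul h).integrableOn_eval_mul hτ.le hcont _).const_mul τ) (hy.tendsto_symSquareForm hτ h V)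
  rw [integral_const_mul, ← (h.mul h).momentMap_eq_integral hτ.le hcont] at hint
  simpa using hint

lemma coeff_potPoly (p : Params d) : (potPoly d p).coeff d = 1 := by
  have hlt : (lowerPoly d p).natDegree < d :=
    (natDegree_lowerPoly_le p).trans_lt (Nat.sub_lt (NeZero.pos d) one_pos)
  rw [potPoly, coeff_add, coeff_X_pow_self, coeff_eq_zero_of_natDegree_lt hlt, add_zero]

lemma natDegree_symSquareOp_le (p : Params d) (k : ℕ) :
    (symSquareOp d p (X ^ (k + 1))).natDegree ≤ k + d := by
  have hP := natDegree_potPoly_le p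
  have hP' := natDegree_derivative_le (potPoly d p)
  have hX : (X ^ (k + 1) : ℂ[X]).natDegree ≤ k + 1 := natDegree_X_pow_le _
  have hX' := natDegree_derivative_le (X ^ (k + 1) : ℂ[X])
  have hX'' := natDegree_derivative_le (derivative (X ^ (k + 1) : ℂ[X]))
  have hX''' := natDegree_derivative_le (derivative (derivative (X ^ (k + 1) : ℂ[X])))
  have hmul (a : ℕ) [a.AtLeastTwo] {f : ℂ[X]} (hf : f.natDegree ≤ k + d) :
      ((OfNat.ofNat a : ℂ[X]) * f).natDegree ≤ k + d :=
    natDegree_mul_le.trans (by rw [natDegree_ofNat]; omega)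
  have hPX' : (potPoly d p * derivative (X ^ (k + 1))).natDegree ≤ k + d :=
    natDegree_mul_le.trans (by omega)
  have hP'X : (derivative (potPoly d p) * X ^ (k + 1)).natDegree ≤ k + d := by
    have hd := NeZero.pos d
    exact natDegree_mul_le.trans (by omega)
  exact (natDegree_sub_le _ _).trans (max_le ((natDegree_sub_le _ _).trans
    (max_le (by omega) (hmul 4 hPX'))) (hmul 2 hP'X))

lemma coeff_symSquareOp (p : Params d) (k : ℕ) :
    (symSquareOp d p (X ^ (k + 1))).coeff (k + d) = -(4 * (k + 1) + 2 * d) := by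
  have hd := NeZero.pos d
  have hX' : (derivative (X ^ (k + 1) : ℂ[X])).natDegree ≤ k :=
    (natDegree_derivative_le _).trans (by simp)
  have hX'' := natDegree_derivative_le (derivative (X ^ (k + 1) : ℂ[X]))
  have hX''' := natDegree_derivative_le (derivative (derivative (X ^ (k + 1) : ℂ[X])))
  have hthird : (derivative (derivative (derivative (X ^ (k + 1) : ℂ[X])))).coeff (k + d) = 0 :=
    coeff_eq_zero_of_natDegree_lt (by omega)
  have hPX' : (potPoly d p * derivative (X ^ (k + 1))).coeff (k + d) = (k : ℂ) + 1 := by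
    rw [derivative_X_pow, ← mul_assoc, mul_comm (potPoly d p), mul_assoc, coeff_C_mul,
      Nat.add_sub_cancel, add_comm k d, coeff_mul_X_pow, coeff_potPoly, mul_one, Nat.cast_succ]
  have hP'X : (derivative (potPoly d p) * X ^ (k + 1)).coeff (k + d) = (d : ℂ) := by
    rw [show k + d = (d - 1) + (k + 1) by omega, coeff_mul_X_pow, coeff_derivative,
      Nat.sub_add_cancel hd, coeff_potPoly, Nat.cast_pred hd, one_mul, sub_add_cancel]
  rw [symSquareOp, coeff_sub, coeff_sub, hthird, coeff_ofNat_mul, hPX', coeff_ofNat_mul, hP'X]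
  ring

lemma eq_zero_of_forall_symSquareOp_eq_zero {T : ℂ[X] →ₗ[ℂ] ℂ} (p : Params d)
    (hT : ∀ V, T (symSquareOp d p V) = 0) (hlow : ∀ m < d, T (X ^ m) = 0) (m : ℕ) :
    T (X ^ m) = 0 := by
  have hmonomial (m : ℕ) (a : ℂ) : T (monomial m a) = a * T (X ^ m) := by
    rw [← C_mul_X_pow_eq_monomial, ← smul_eq_C_mul, map_smul, smul_eq_mul]
  induction m using Nat.strong_induction_on with
  | _ m ih =>
    rcases lt_or_ge m d with hmd | hmd
    · exact hlow m hmd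
    · obtain ⟨k, rfl⟩ := Nat.exists_eq_add_of_le' hmd
      have hV := hT (X ^ (k + 1))
      rw [as_sum_range' _ (k + d + 1) (Nat.lt_succ_of_le (natDegree_symSquareOp_le p k)),
        Finset.sum_range_succ, map_add, map_sum, Finset.sum_eq_zero, zero_add, hmonomial,
        coeff_symSquareOp] at hV
      · refine (mul_eq_zero.1 hV).resolve_left (neg_ne_zero.2 ?_)
        exact_mod_cast (show 4 * (k + 1) + 2 * d ≠ 0 by omega)
      · intro l hl
        rw [hmonomial, ih l (Finset.mem_range.1 hl), mul_zero]

/-- The boundary terms at `0` agree on all rays, so they cancel in a combination whose coefficients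
sum to `0`. -/
theorem sum_moment_eq_zero {ι : Type*} [Fintype ι] {c τ : ι → ℂ} {A : ι → ℝ}
    (hτ : ∀ i, ‖τ i‖ = 1) (hy : IsSol d p.1 p.2 y) (h : ∀ i, DecaysOn d (τ i) (A i) y)
    (hc : ∑ i, c i = 0) (hlow : ∀ m < d, ∑ i, c i * (τ i * moment (τ i) (y * y) m) = 0) (m : ℕ) :
    ∑ i, c i * (τ i * moment (τ i) (y * y) m) = 0 := by
  let T : ℂ[X] →ₗ[ℂ] ℂ := ∑ i, (c i * τ i) • momentMap (τ i) (y * y)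
  have hT (f : ℂ[X]) : T f = ∑ i, c i * (τ i * momentMap (τ i) (y * y) f) := by
    simp [T, mul_assoc]
  have hTX (m : ℕ) : T (X ^ m) = ∑ i, c i * (τ i * moment (τ i) (y * y) m) := by
    rw [hT, X_pow_eq_monomial]
    simp only [momentMap_monomial, one_mul]
  rw [← hTX]
  refine eq_zero_of_forall_symSquareOp_eq_zero p (fun V => ?_) (fun m hm => hTX m ▸ hlow m hm) m
  simp only [hT, fun i => hy.mul_momentMap_symSquareOp (hτ i) (h i) V, ← Finset.sum_mul, hc,
    zero_mul]

end SymmetricSquare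

/-! ### Cauchy transforms on a half-line -/

section CauchyTransform

open MeasureTheory

variable {u : ℝ → ℂ} {z : ℂ} {c r x : ℝ}

/-- The Cauchy transform `z ↦ ∫ u(r) / (r - z) dr` of a function on the positive half-line. -/
noncomputable def cauchyTransform (u : ℝ → ℂ) (z : ℂ) : ℂ :=
  ∫ r in Set.Ioi (0 : ℝ), u r / (r - z)

lemma exists_forall_le_norm_ofReal_sub (hz : -z ∈ slitPlane) :
    ∃ ε > 0, ∀ r : ℝ, 0 ≤ r → ε ≤ ‖(r : ℂ) - z‖ := by
  rcases hz with hre | him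
  · refine ⟨-z.re, by simpa using hre, fun r hr => le_trans ?_ (Complex.re_le_norm _)⟩
    simpa using hr
  · refine ⟨|z.im|, abs_pos.2 (by simpa using him), fun r _ => ?_⟩
    simpa using Complex.abs_im_le_norm ((r : ℂ) - z)

lemma ofReal_sub_ne_zero (hz : -z ∈ slitPlane) (hr : 0 ≤ r) : (r : ℂ) - z ≠ 0 := by
  obtain ⟨ε, hε, h⟩ := exists_forall_le_norm_ofReal_sub hz
  exact norm_pos_iff.1 (hε.trans_le (h r hr))

lemma integrableOn_div_ofReal_sub (hu : IntegrableOn u (Set.Ioi 0)) (hz : -z ∈ slitPlane) :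
    IntegrableOn (fun r : ℝ => u r / (r - z)) (Set.Ioi 0) := by
  obtain ⟨ε, hε, h⟩ := exists_forall_le_norm_ofReal_sub hz
  refine (hu.norm.div_const ε).mono' (hu.aestronglyMeasurable.div₀ (by fun_prop)) ?_
  filter_upwards [ae_restrict_mem measurableSet_Ioi] with r hr
  have hle := h r (le_of_lt hr)
  rw [norm_div]
  gcongr

lemma differentiableAt_cauchyTransform (hu : IntegrableOn u (Set.Ioi 0)) (hz : -z ∈ slitPlane) :
    DifferentiableAt ℂ (cauchyTransform u) z := by
  obtain ⟨ε, hε, h⟩ := exists_forall_le_norm_ofReal_sub hz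
  have hball (r : ℝ) (hr : 0 ≤ r) (w : ℂ) (hw : w ∈ Metric.ball z (ε / 2)) :
      ε / 2 ≤ ‖(r : ℂ) - w‖ := by
    rw [mem_ball_iff_norm] at hw
    linarith [h r hr, norm_sub_le_norm_sub_add_norm_sub (r : ℂ) w z]
  have hderiv (r : ℝ) (hr : 0 ≤ r) (w : ℂ) (hw : w ∈ Metric.ball z (ε / 2)) :
      HasDerivAt (fun w : ℂ => u r / (r - w)) (u r / (r - w) ^ 2) w := by
    have hne : (r : ℂ) - w ≠ 0 := norm_pos_iff.1 ((half_pos hε).trans_le (hball r hr w hw))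
    refine ((((hasDerivAt_id w).const_sub (r : ℂ)).fun_inv hne).const_mul (u r)).congr_deriv ?_
    simp only [id]
    ring
  refine (hasDerivAt_integral_of_dominated_loc_of_deriv_le (F := fun w r => u r / (r - w))
    (F' := fun w r => u r / (r - w) ^ 2) (bound := fun r => ‖u r‖ / (ε / 2) ^ 2)
    (Metric.ball_mem_nhds z (half_pos hε))
    (Eventually.of_forall fun w => hu.aestronglyMeasurable.div₀ (by fun_prop))
    (integrableOn_div_ofReal_sub hu hz) (hu.aestronglyMeasurable.div₀ (by fun_prop)) ?_
    (hu.norm.div_const _) ?_).2.differentiableAt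
  · filter_upwards [ae_restrict_mem measurableSet_Ioi] with r hr w hw
    have hle := hball r (le_of_lt hr) w hw
    rw [norm_div, norm_pow]
    gcongr
  · filter_upwards [ae_restrict_mem measurableSet_Ioi] with r hr w hw
    exact hderiv r (le_of_lt hr) w hw

open scoped ComplexOrder in
lemma neg_mem_slitPlane_of_re_le (hc : c < 1) (hz : z ≠ 0) (hre : z.re ≤ c * ‖z‖) :
    -z ∈ slitPlane := by
  rw [mem_slitPlane_iff_not_le_zero, neg_nonpos]
  intro hnonneg
  nlinarith [norm_pos_iff.2 hz, Complex.re_eq_norm.2 hnonneg]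

lemma norm_ofReal_sub_ge (hc : 0 ≤ c) (hc1 : c < 1) (hz : z.re ≤ c * ‖z‖) (hr : 0 ≤ r) :
    √(1 - c ^ 2) * ‖z‖ ≤ ‖(r : ℂ) - z‖ := by
  refine (pow_le_pow_iff_left₀ (by positivity) (norm_nonneg _) two_ne_zero).1 ?_
  have hnorm : ‖z‖ ^ 2 = z.re * z.re + z.im * z.im := by
    rw [Complex.sq_norm, Complex.normSq_apply]
  rw [mul_pow, Real.sq_sqrt (by nlinarith), hnorm, Complex.sq_norm, Complex.normSq_apply]
  simp only [Complex.sub_re, Complex.ofReal_re, Complex.sub_im, Complex.ofReal_im]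
  nlinarith [mul_le_mul_of_nonneg_left hz hr, sq_nonneg (r - c * ‖z‖)]

lemma norm_mul_norm_cauchyTransform_le (hc : 0 ≤ c) (hc1 : c < 1) (hz0 : z ≠ 0)
    (hz : z.re ≤ c * ‖z‖) (hu : IntegrableOn u (Set.Ioi 0)) :
    ‖z‖ * ‖cauchyTransform u z‖ ≤ (√(1 - c ^ 2))⁻¹ * ∫ r in Set.Ioi (0 : ℝ), ‖u r‖ := by
  have hsqrt : 0 < √(1 - c ^ 2) := Real.sqrt_pos.2 (by nlinarith)
  have hnorm : 0 < ‖z‖ := norm_pos_iff.2 hz0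
  have hle : ‖cauchyTransform u z‖ ≤ ∫ r in Set.Ioi (0 : ℝ), ‖u r‖ / (√(1 - c ^ 2) * ‖z‖) := by
    refine norm_integral_le_of_norm_le (hu.norm.div_const _) ?_
    filter_upwards [ae_restrict_mem measurableSet_Ioi] with r hr
    rw [norm_div]
    exact div_le_div_of_nonneg_left (norm_nonneg _) (by positivity)
      (norm_ofReal_sub_ge hc hc1 hz (le_of_lt hr))
  rw [integral_div] at hle
  calc ‖z‖ * ‖cauchyTransform u z‖
      ≤ ‖z‖ * ((∫ r in Set.Ioi (0 : ℝ), ‖u r‖) / (√(1 - c ^ 2) * ‖z‖)) :=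
        mul_le_mul_of_nonneg_left hle hnorm.le
    _ = (√(1 - c ^ 2))⁻¹ * ∫ r in Set.Ioi (0 : ℝ), ‖u r‖ := by field_simp

lemma tendsto_norm_mul_inv_one_add_sq :
    Tendsto (fun t : ℝ => ‖t‖ * (1 + t ^ 2)⁻¹) (Bornology.cobounded ℝ) (𝓝 0) := by
  refine squeeze_zero (fun t => by positivity) (fun t => ?_)
    (tendsto_inv_atTop_zero.comp tendsto_norm_cobounded_atTop)
  rcases eq_or_ne t 0 with rfl | ht
  · simp
  · have hpos : 0 < ‖t‖ := norm_pos_iff.2 ht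
    rw [Function.comp_apply, ← div_eq_mul_inv, inv_eq_one_div, ← Real.norm_of_nonneg (sq_nonneg t),
      norm_pow, div_le_div_iff₀ (by positivity) hpos]
    nlinarith

/-- Poisson kernel of the half-plane at height `c⁻¹`. -/
lemma div_ofReal_sub_sub_div_ofReal_sub (hc : c ≠ 0) (a : ℂ) :
    a / (r - (x + (c⁻¹ : ℝ) * I)) - a / (r - (x - (c⁻¹ : ℝ) * I)) =
      2 * Real.pi * I * ((c * (Real.pi⁻¹ * (1 + (c * (x - r)) ^ 2)⁻¹) : ℝ) * a) := by
  have hc0 : (c : ℂ) ≠ 0 := by exact_mod_cast hc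
  have hne {w : ℂ} (hw : w.im ≠ 0) : (r : ℂ) - w ≠ 0 := fun h =>
    hw (by rw [← sub_eq_zero.1 h, ofReal_im])
  have hmul : ((r : ℂ) - (x + (c⁻¹ : ℝ) * I)) * (r - (x - (c⁻¹ : ℝ) * I)) =
      (c ^ 2)⁻¹ * (1 + (c * (x - r)) ^ 2) := by
    push_cast
    field_simp
    linear_combination (-1 : ℂ) * I_sq
  rw [div_sub_div _ _ (hne (by simp [hc])) (hne (by simp [hc])), hmul]
  push_cast
  field_simp
  ring

lemma tendsto_cauchyTransform_jump (hu : IntegrableOn u (Set.Ioi 0)) (hx : 0 < x)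
    (hux : ContinuousAt u x) :
    Tendsto (fun c : ℝ => cauchyTransform u (x + (c⁻¹ : ℝ) * I) -
      cauchyTransform u (x - (c⁻¹ : ℝ) * I)) atTop (𝓝 (2 * Real.pi * I * u x)) := by
  set g := (Set.Ioi (0 : ℝ)).indicator u
  have hg : Integrable g := (integrable_indicator_iff measurableSet_Ioi).2 hu
  have hgx : g x = u x := Set.indicator_of_mem hx u
  have hgc : ContinuousAt g x := hux.congr <| by
    filter_upwards [lt_mem_nhds hx] with r hr using (Set.indicator_of_mem hr u).symm
  have hkernel : ∫ t : ℝ, Real.pi⁻¹ * (1 + t ^ 2)⁻¹ = 1 := by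
    rw [integral_const_mul, integral_univ_inv_one_add_sq, inv_mul_cancel₀ Real.pi_ne_zero]
  have hkernel_lim : Tendsto (fun t : ℝ => ‖t‖ ^ Module.finrank ℝ ℝ *
      (Real.pi⁻¹ * (1 + t ^ 2)⁻¹)) (Bornology.cobounded ℝ) (𝓝 0) := by
    simpa [mul_left_comm] using tendsto_norm_mul_inv_one_add_sq.const_mul Real.pi⁻¹
  have hpoisson := (tendsto_integral_comp_smul_smul_of_integrable' (μ := volume)
    (fun t : ℝ => by positivity) hkernel hkernel_lim hg hgc).const_mul (2 * Real.pi * I)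
  rw [hgx] at hpoisson
  refine hpoisson.congr' ?_
  filter_upwards [eventually_gt_atTop 0] with c hc
  have habove : -((x : ℂ) + (c⁻¹ : ℝ) * I) ∈ slitPlane := Or.inr (by simp [hc.ne'])
  have hbelow : -((x : ℂ) - (c⁻¹ : ℝ) * I) ∈ slitPlane := Or.inr (by simp [hc.ne'])
  rw [cauchyTransform, cauchyTransform, ← integral_sub (integrableOn_div_ofReal_sub hu habove)
    (integrableOn_div_ofReal_sub hu hbelow), ← integral_const_mul,
    ← integral_indicator measurableSet_Ioi]
  congr 1 with r
  by_cases hr : r ∈ Set.Ioi (0 : ℝ)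
  · simp only [g, Set.indicator_of_mem hr, Module.finrank_self, pow_one, smul_eq_mul,
      Complex.real_smul, div_ofReal_sub_sub_div_ofReal_sub hc.ne']
  · simp [g, Set.indicator_of_notMem hr]

end CauchyTransform

/-! ### Exponential decay from bounds on all moments -/

section Strip

variable {f : ℂ → ℂ} {h : ℝ} {w : ℂ}

lemma norm_cexp_mul_cexp (M γ : ℝ) (w : ℂ) :
    ‖cexp (M * cexp (γ * w))‖ =
      Real.exp (M * (Real.exp (γ * w.re) * Real.cos (γ * w.im))) := by
  rw [Complex.norm_exp, Complex.re_ofReal_mul, Complex.exp_re, Complex.re_ofReal_mul,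
    Complex.im_ofReal_mul]

lemma norm_mul_exp_le_of_horizontal_strip {B₀ M B : ℝ} (hh : 0 < h)
    (hf : DiffContOnCl ℂ f (im ⁻¹' Set.Ioo (-h) h)) (hB₀ : ∀ w, |w.im| ≤ h → ‖f w‖ ≤ B₀)
    (hM : 0 ≤ M)
    (hB : ∀ w, |w.im| ≤ h → Real.exp (M * Real.exp (Real.pi / (2 * h) * w.re)) * ‖f w‖ ≤ B)
    (hw : |w.im| ≤ h) :
    ‖f w‖ * Real.exp (M * (Real.exp (Real.pi / (2 * h) * w.re) *
      Real.cos (Real.pi / (2 * h) * w.im))) ≤ B₀ := by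
  obtain ⟨γ, hγ⟩ : ∃ γ, γ = Real.pi / (2 * h) := ⟨_, rfl⟩
  have hγh : γ * h = Real.pi / 2 := by rw [hγ]; field_simp
  rw [← hγ, ← norm_cexp_mul_cexp, ← norm_mul]
  have hedge (z : ℂ) (hz : |z.im| = h) : ‖f z * cexp (M * cexp (γ * z))‖ ≤ B₀ := by
    have hcos : Real.cos (γ * z.im) = 0 := by
      rw [← Real.cos_abs, abs_mul, hz, hγ, abs_of_pos (by positivity), ← hγ, hγh,
        Real.cos_pi_div_two]
    simpa [norm_cexp_mul_cexp, hcos] using hB₀ z hz.le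
  have hexp : Differentiable ℂ fun w : ℂ => cexp (M * cexp (γ * w)) := by fun_prop
  refine PhragmenLindelof.horizontal_strip (f := fun w => f w * cexp (M * cexp (γ * w)))
    (a := -h) (b := h) (hf.smul hexp.diffContOnCl)
    ⟨0, div_pos Real.pi_pos (by linarith), 0, .of_bound B ?_⟩
    (fun z hz => hedge z (by rw [hz, abs_neg, abs_of_pos hh]))
    (fun z hz => hedge z (by rw [hz, abs_of_pos hh])) (abs_le.1 hw).1 (abs_le.1 hw).2
  filter_upwards [mem_inf_of_right (mem_principal_self _)] with z hz
  simp only [zero_mul, Real.exp_zero, norm_one, mul_one]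
  refine le_trans ?_ (hB z (abs_lt.2 hz).le)
  rw [norm_mul, norm_cexp_mul_cexp, mul_comm, ← hγ]
  gcongr
  exact mul_le_of_le_one_right (Real.exp_pos _).le (Real.cos_le_one _)

theorem eq_zero_of_decay_horizontal_strip (hh : 0 < h)
    (hf : DiffContOnCl ℂ f (im ⁻¹' Set.Ioo (-h) h))
    (hB : ∀ M : ℝ, 0 ≤ M → ∃ B, ∀ w : ℂ, |w.im| ≤ h →
      Real.exp (M * Real.exp (Real.pi / (2 * h) * w.re)) * ‖f w‖ ≤ B)
    (hw : |w.im| < h) : f w = 0 := by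
  obtain ⟨γ, hγ⟩ : ∃ γ, γ = Real.pi / (2 * h) := ⟨_, rfl⟩
  obtain ⟨B₀, hB₀⟩ := hB 0 le_rfl
  simp only [zero_mul, Real.exp_zero, one_mul] at hB₀
  have hbound (M : ℝ) (hM : 0 ≤ M) :
      ‖f w‖ * Real.exp (M * (Real.exp (γ * w.re) * Real.cos (γ * w.im))) ≤ B₀ := by
    obtain ⟨B, hB⟩ := hB M hM
    rw [hγ]
    exact norm_mul_exp_le_of_horizontal_strip hh hf hB₀ hM hB hw.le
  have hcos : 0 < Real.cos (γ * w.im) := by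
    have hγh : γ * h = Real.pi / 2 := by rw [hγ]; field_simp
    have hγ0 : 0 < γ := hγ ▸ by positivity
    refine Real.cos_pos_of_mem_Ioo (abs_lt.1 ?_)
    rw [abs_mul, abs_of_pos hγ0, ← hγh]
    gcongr
  by_contra hne
  have hlim : Tendsto (fun M : ℝ => ‖f w‖ *
      Real.exp (M * (Real.exp (γ * w.re) * Real.cos (γ * w.im)))) atTop atTop :=
    (Real.tendsto_exp_atTop.comp (tendsto_id.atTop_mul_const (by positivity))).const_mul_atTop
      (norm_pos_iff.2 hne)
  obtain ⟨M, hM0, hM⟩ := ((eventually_ge_atTop 0).and (hlim.eventually_gt_atTop B₀)).exists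
  exact (hbound M hM0).not_gt hM

end Strip

section ExponentialMoments

open MeasureTheory
open scoped Nat

variable {γ M R r K g : ℝ} {w : ℝ → ℝ}

lemma integrableOn_exp_rpow_mul_exp_neg_phase (d : ℕ) (hγ : 0 ≤ γ)
    (hγd : γ < ((d : ℝ) + 2) / 2) (hM : 0 ≤ M) :
    IntegrableOn (fun r : ℝ => (1 + r) * Real.exp (M * r ^ γ) * Real.exp (-phase d r))
      (Set.Ioi 0) := by
  obtain ⟨ε, hε⟩ : ∃ ε : ℝ, ε = 1 / (2 * (d + 2)) := ⟨_, rfl⟩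
  have hε0 : 0 < ε := hε ▸ by positivity
  obtain ⟨C, hC⟩ := exists_mul_rpow_le hγ hγd hM hε0
  have hint (m : ℕ) : IntegrableOn (fun r : ℝ => r ^ (m : ℝ) *
      Real.exp (-ε * r ^ (((d : ℝ) + 2) / 2))) (Set.Ioi 0) :=
    integrableOn_rpow_mul_exp_neg_mul_rpow (by linarith [(Nat.cast_nonneg m : (0 : ℝ) ≤ m)])
      (by positivity) hε0
  refine (((hint 0).add (hint 1)).const_mul (Real.exp C)).mono' ?_ ?_
  · refine Measurable.aestronglyMeasurable ?_
    unfold phase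
    fun_prop
  · filter_upwards [ae_restrict_mem measurableSet_Ioi] with r hr
    have hr0 : 0 < r := hr
    have hexp : M * r ^ γ + -phase d r ≤ C + -ε * r ^ (((d : ℝ) + 2) / 2) := by
      have hphase : phase d r = 2 * (ε * r ^ (((d : ℝ) + 2) / 2)) := by
        rw [phase, hε]; field_simp
      linarith [hC r hr0.le]
    rw [Real.norm_of_nonneg (by positivity)]
    simp only [Pi.add_apply, Nat.cast_zero, Nat.cast_one, Real.rpow_zero, Real.rpow_one,
      ← add_mul]
    rw [mul_left_comm, ← Real.exp_add, mul_assoc, ← Real.exp_add]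
    gcongr

lemma rpow_pow_le_one_add_pow_ceil (hγ : 0 ≤ γ) (hR : 0 ≤ R) (k : ℕ) :
    (R ^ γ) ^ k ≤ 1 + R ^ ⌈γ * k⌉₊ := by
  rw [← Real.rpow_mul_natCast hR]
  rcases le_total R 1 with hR1 | hR1
  · exact (Real.rpow_le_one hR hR1 (by positivity)).trans (le_add_of_nonneg_right (by positivity))
  · refine le_trans ?_ (le_add_of_nonneg_left zero_le_one)
    rw [← Real.rpow_natCast]
    exact Real.rpow_le_rpow_of_exponent_le hR1 (Nat.le_ceil _)

lemma pow_ceil_le (hγ : 0 ≤ γ) (hr : 0 ≤ r) (k : ℕ) :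
    r ^ ⌈γ * k⌉₊ ≤ (1 + r) * (1 + (r ^ γ) ^ k) := by
  rw [← Real.rpow_mul_natCast hr]
  have hpow : 0 ≤ r ^ (γ * k) := by positivity
  rcases le_total r 1 with hr1 | hr1
  · nlinarith [pow_le_one₀ hr hr1 (n := ⌈γ * k⌉₊)]
  · have hceil := Real.rpow_le_rpow_of_exponent_le hr1
      (Nat.ceil_lt_add_one (show 0 ≤ γ * k by positivity)).le
    rw [Real.rpow_natCast, Real.rpow_add_one' hr (by positivity)] at hceil
    nlinarith

lemma sum_one_add_pow_ceil_le (hγ : 0 ≤ γ) (hM : 0 ≤ M) (hr : 0 ≤ r) (n : ℕ) :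
    ∑ k ∈ Finset.range n, M ^ k / k ! * (1 + r ^ ⌈γ * k⌉₊) ≤
      2 * (Real.exp M + 1) * ((1 + r) * Real.exp (M * r ^ γ)) := by
  have hterm (k : ℕ) : 1 + r ^ ⌈γ * k⌉₊ ≤ 2 * (1 + r) * (1 + (r ^ γ) ^ k) := by
    nlinarith [pow_ceil_le hγ hr k, pow_nonneg (Real.rpow_nonneg hr γ) k]
  calc ∑ k ∈ Finset.range n, M ^ k / k ! * (1 + r ^ ⌈γ * k⌉₊)
      ≤ ∑ k ∈ Finset.range n, M ^ k / k ! * (2 * (1 + r) * (1 + (r ^ γ) ^ k)) := by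
        gcongr with k
        exact hterm k
    _ = 2 * (1 + r) * (∑ k ∈ Finset.range n, M ^ k / k ! +
          ∑ k ∈ Finset.range n, (M * r ^ γ) ^ k / k !) := by
        rw [← Finset.sum_add_distrib, Finset.mul_sum]
        refine Finset.sum_congr rfl fun k _ => ?_
        rw [mul_pow]
        ring
    _ ≤ 2 * (1 + r) * (Real.exp M * Real.exp (M * r ^ γ) + Real.exp (M * r ^ γ)) := by
        gcongr
        · exact (Real.sum_le_exp_of_nonneg hM n).trans
            (le_mul_of_one_le_right (by positivity) (Real.one_le_exp (by positivity)))
        · exact Real.sum_le_exp_of_nonneg (by positivity) n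
    _ = _ := by ring

lemma sum_mul_pow_ceil_le (hγ : 0 ≤ γ) (hM : 0 ≤ M) (hw : ∀ r, 0 < r → 0 ≤ w r)
    (hint : ∀ N : ℕ, IntegrableOn (fun r => r ^ N * w r) (Set.Ioi 0))
    (hexp : IntegrableOn (fun r => (1 + r) * Real.exp (M * r ^ γ) * w r) (Set.Ioi 0)) (n : ℕ) :
    ∑ k ∈ Finset.range n, M ^ k / k ! * ((∫ r in Set.Ioi (0 : ℝ), r ^ 0 * w r) +
        ∫ r in Set.Ioi (0 : ℝ), r ^ ⌈γ * k⌉₊ * w r) ≤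
      2 * (Real.exp M + 1) *
        ∫ r in Set.Ioi (0 : ℝ), (1 + r) * Real.exp (M * r ^ γ) * w r := by
  have hintk (k : ℕ) : IntegrableOn (fun r : ℝ => M ^ k / k ! *
      (r ^ 0 * w r + r ^ ⌈γ * k⌉₊ * w r)) (Set.Ioi 0) := ((hint 0).add (hint _)).const_mul _
  have hsum : ∑ k ∈ Finset.range n, M ^ k / k ! * ((∫ r in Set.Ioi (0 : ℝ), r ^ 0 * w r) +
      ∫ r in Set.Ioi (0 : ℝ), r ^ ⌈γ * k⌉₊ * w r) = ∫ r in Set.Ioi (0 : ℝ),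
      ∑ k ∈ Finset.range n, M ^ k / k ! * (r ^ 0 * w r + r ^ ⌈γ * k⌉₊ * w r) := by
    rw [integral_finsetSum _ fun k _ => hintk k]
    refine Finset.sum_congr rfl fun k _ => ?_
    rw [integral_const_mul, integral_add (hint 0) (hint _)]
  rw [hsum, ← integral_const_mul]
  refine setIntegral_mono_on (integrable_finsetSum _ fun k _ => hintk k) (hexp.const_mul _)
    measurableSet_Ioi fun r hr => ?_
  have hle := mul_le_mul_of_nonneg_right (sum_one_add_pow_ceil_le hγ hM (le_of_lt hr) n) (hw r hr)
  rw [Finset.sum_mul] at hle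
  convert hle using 1
  · exact Finset.sum_congr rfl fun k _ => by ring
  · ring

lemma exp_rpow_mul_le_of_pow_mul_le (hγ : 0 ≤ γ) (hM : 0 ≤ M) (hw : ∀ r, 0 < r → 0 ≤ w r)
    (hint : ∀ N : ℕ, IntegrableOn (fun r => r ^ N * w r) (Set.Ioi 0))
    (hexp : IntegrableOn (fun r => (1 + r) * Real.exp (M * r ^ γ) * w r) (Set.Ioi 0))
    (hK : 0 ≤ K) (hR : 0 ≤ R) (hg : 0 ≤ g)
    (hle : ∀ N : ℕ, R ^ N * g ≤ K * ∫ r in Set.Ioi (0 : ℝ), r ^ N * w r) :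
    Real.exp (M * R ^ γ) * g ≤ K * (2 * (Real.exp M + 1) *
      ∫ r in Set.Ioi (0 : ℝ), (1 + r) * Real.exp (M * r ^ γ) * w r) := by
  have hterm (k : ℕ) : (M * R ^ γ) ^ k / k ! * g ≤ K * (M ^ k / k ! *
      ((∫ r in Set.Ioi (0 : ℝ), r ^ 0 * w r) + ∫ r in Set.Ioi (0 : ℝ), r ^ ⌈γ * k⌉₊ * w r)) := by
    calc (M * R ^ γ) ^ k / k ! * g = M ^ k / k ! * ((R ^ γ) ^ k * g) := by rw [mul_pow]; ring
      _ ≤ M ^ k / k ! * (R ^ 0 * g + R ^ ⌈γ * k⌉₊ * g) := by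
          rw [← add_mul, pow_zero]
          gcongr
          exact rpow_pow_le_one_add_pow_ceil hγ hR k
      _ ≤ M ^ k / k ! * ((K * ∫ r in Set.Ioi (0 : ℝ), r ^ 0 * w r) +
          K * ∫ r in Set.Ioi (0 : ℝ), r ^ ⌈γ * k⌉₊ * w r) := by
          exact mul_le_mul_of_nonneg_left (add_le_add (hle _) (hle _)) (by positivity)
      _ = _ := by ring
  have hpartial (n : ℕ) : (∑ k ∈ Finset.range n, (M * R ^ γ) ^ k / k !) * g ≤
      K * (2 * (Real.exp M + 1) *
        ∫ r in Set.Ioi (0 : ℝ), (1 + r) * Real.exp (M * r ^ γ) * w r) := by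
    rw [Finset.sum_mul]
    refine (Finset.sum_le_sum fun k _ => hterm k).trans ?_
    rw [← Finset.mul_sum]
    gcongr
    exact sum_mul_pow_ceil_le hγ hM hw hint hexp n
  have hlim : Tendsto (fun n : ℕ => (∑ k ∈ Finset.range n, (M * R ^ γ) ^ k / k !) * g)
      atTop (𝓝 (Real.exp (M * R ^ γ) * g)) := by
    rw [Real.exp_eq_exp_ℝ]
    exact ((NormedSpace.expSeries_div_hasSum_exp (M * R ^ γ)).tendsto_sum_nat).mul_const g
  exact le_of_tendsto' hlim hpartial

end ExponentialMoments

section RayTransform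

open MeasureTheory

variable {d : ℕ} {τ ζ : ℂ} {u : ℂ → ℂ} {A c : ℝ}

/-- The Cauchy transform `ζ ↦ ∫ u(rτ) / (rτ - ζ) dr` of a function along the ray in direction
`τ`. -/
noncomputable def rayTransform (τ : ℂ) (u : ℂ → ℂ) (ζ : ℂ) : ℂ :=
  ∫ r in Set.Ioi (0 : ℝ), u (r * τ) / (r * τ - ζ)

lemma div_ray_sub_eq (hτ : τ ≠ 0) (u : ℂ → ℂ) (ζ : ℂ) (r : ℝ) :
    u (r * τ) / (r * τ - ζ) = τ⁻¹ * (u (r * τ) / (r - ζ * τ⁻¹)) := by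
  have hmul : r * τ - ζ = τ * (r - ζ * τ⁻¹) := by
    rw [mul_sub, mul_left_comm τ ζ, mul_inv_cancel₀ hτ]
    ring
  rw [hmul, ← div_div, div_right_comm, div_eq_inv_mul _ τ]

lemma rayTransform_eq_mul_cauchyTransform (hτ : τ ≠ 0) (u : ℂ → ℂ) (ζ : ℂ) :
    rayTransform τ u ζ = τ⁻¹ * cauchyTransform (fun r => u (r * τ)) (ζ * τ⁻¹) := by
  rw [cauchyTransform, ← integral_const_mul]
  exact integral_congr_ae (Eventually.of_forall fun r => div_ray_sub_eq hτ u ζ r)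

lemma differentiableAt_rayTransform (hτ : τ ≠ 0)
    (hu : IntegrableOn (fun r : ℝ => u (r * τ)) (Set.Ioi 0)) (hζ : -(ζ * τ⁻¹) ∈ slitPlane) :
    DifferentiableAt ℂ (rayTransform τ u) ζ := by
  rw [funext (rayTransform_eq_mul_cauchyTransform hτ u)]
  exact ((differentiableAt_cauchyTransform hu hζ).comp ζ (f := fun ζ => ζ * τ⁻¹)
    (by fun_prop)).const_mul _

lemma norm_mul_norm_rayTransform_le (hτ : ‖τ‖ = 1)
    (hu : IntegrableOn (fun r : ℝ => u (r * τ)) (Set.Ioi 0)) (hc : 0 ≤ c) (hc1 : c < 1)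
    (hζ0 : ζ ≠ 0) (hζ : (ζ * τ⁻¹).re ≤ c * ‖ζ‖) :
    ‖ζ‖ * ‖rayTransform τ u ζ‖ ≤ (√(1 - c ^ 2))⁻¹ * ∫ r in Set.Ioi (0 : ℝ), ‖u (r * τ)‖ := by
  have hτ0 : τ ≠ 0 := norm_pos_iff.1 (by rw [hτ]; exact one_pos)
  have hnorm : ‖ζ * τ⁻¹‖ = ‖ζ‖ := by rw [norm_mul, norm_inv, hτ, inv_one, mul_one]
  rw [rayTransform_eq_mul_cauchyTransform hτ0, norm_mul, norm_inv, hτ, inv_one, one_mul, ← hnorm]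
  exact norm_mul_norm_cauchyTransform_le hc hc1 (mul_ne_zero hζ0 (inv_ne_zero hτ0))
    (by rwa [hnorm]) hu

lemma pow_mul_rayTransform (hτ : τ ≠ 0)
    (hu : ∀ k : ℕ, IntegrableOn (fun r : ℝ => (r * τ) ^ k * u (r * τ)) (Set.Ioi 0))
    (hζ : -(ζ * τ⁻¹) ∈ slitPlane) (N : ℕ) :
    ζ ^ N * rayTransform τ u ζ = rayTransform τ (fun z => z ^ N * u z) ζ -
      ∑ m ∈ Finset.range N, ζ ^ (N - 1 - m) * moment τ u m := by
  have hintN : IntegrableOn (fun r : ℝ => (r * τ) ^ N * u (r * τ) / (r * τ - ζ)) (Set.Ioi 0) := by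
    rw [funext fun r : ℝ => div_ray_sub_eq hτ (fun z => z ^ N * u z) ζ r]
    exact (integrableOn_div_ofReal_sub (hu N) hζ).const_mul _
  have hintm (m : ℕ) : IntegrableOn (fun r : ℝ =>
      ζ ^ (N - 1 - m) * ((r * τ) ^ m * u (r * τ))) (Set.Ioi 0) := (hu m).const_mul _
  simp only [rayTransform, moment, ← integral_const_mul]
  rw [← integral_finsetSum _ fun m _ => hintm m,
    ← integral_sub hintN (integrable_finsetSum _ fun m _ => hintm m)]
  refine setIntegral_congr_fun measurableSet_Ioi fun r hr => ?_
  have hne : r * τ - ζ ≠ 0 := by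
    have hfactor : r * τ - ζ = (r - ζ * τ⁻¹) * τ := by rw [sub_mul, inv_mul_cancel_right₀ hτ]
    exact hfactor ▸ mul_ne_zero (ofReal_sub_ne_zero hζ (le_of_lt hr)) hτ
  have hgeom := (Commute.all ((r : ℂ) * τ) ζ).geom_sum₂_mul N
  have hsum : ∑ m ∈ Finset.range N, ζ ^ (N - 1 - m) * ((r * τ) ^ m * u (r * τ)) =
      (∑ m ∈ Finset.range N, (r * τ) ^ m * ζ ^ (N - 1 - m)) * u (r * τ) := by
    rw [Finset.sum_mul]
    exact Finset.sum_congr rfl fun m _ => by ring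
  simp only [hsum]
  field_simp
  linear_combination u (r * τ) * hgeom

variable {ι : Type*} [Fintype ι] {τ : ι → ℂ} {u : ι → ℂ → ℂ} {A : ι → ℝ}

lemma pow_mul_sum_rayTransform (hτ : ∀ i, τ i ≠ 0)
    (hu : ∀ i (k : ℕ), IntegrableOn (fun r : ℝ => (r * τ i) ^ k * u i (r * τ i)) (Set.Ioi 0))
    (hζ : ∀ i, -(ζ * (τ i)⁻¹) ∈ slitPlane) (hm : ∀ m, ∑ i, moment (τ i) (u i) m = 0) (N : ℕ) :
    ζ ^ N * ∑ i, rayTransform (τ i) (u i) ζ =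
      ∑ i, rayTransform (τ i) (fun z => z ^ N * u i z) ζ := by
  simp only [Finset.mul_sum, fun i => pow_mul_rayTransform (hτ i) (hu i) (hζ i) N]
  rw [Finset.sum_sub_distrib, Finset.sum_comm]
  simp only [← Finset.mul_sum, hm, mul_zero, Finset.sum_const_zero, sub_zero]

lemma norm_pow_mul_sum_rayTransform_le (hτ : ∀ i, ‖τ i‖ = 1) (hu : ∀ i, Continuous (u i))
    (hdecay : ∀ i, DecaysOn d (τ i) (A i) (u i)) (hm : ∀ m, ∑ i, moment (τ i) (u i) m = 0)
    (hc : 0 ≤ c) (hc1 : c < 1) (hζ0 : ζ ≠ 0) (hζ : ∀ i, (ζ * (τ i)⁻¹).re ≤ c * ‖ζ‖) (N : ℕ) :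
    ‖ζ‖ ^ N * ‖ζ * ∑ i, rayTransform (τ i) (u i) ζ‖ ≤ ((√(1 - c ^ 2))⁻¹ * ∑ i, A i) *
      ∫ r in Set.Ioi (0 : ℝ), r ^ N * Real.exp (-phase d r) := by
  have hτ0 (i : ι) : τ i ≠ 0 := norm_pos_iff.1 (by rw [hτ]; exact one_pos)
  have hint (i : ι) := (hdecay i).integrableOn_pow_mul (hτ i).le (hu i)
  have hslit (i : ι) : -(ζ * (τ i)⁻¹) ∈ slitPlane :=
    neg_mem_slitPlane_of_re_le hc1 (mul_ne_zero hζ0 (inv_ne_zero (hτ0 i)))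
      (by simpa [hτ i] using hζ i)
  have hterm (i : ι) : ‖ζ‖ * ‖rayTransform (τ i) (fun z => z ^ N * u i z) ζ‖ ≤
      (√(1 - c ^ 2))⁻¹ * (A i * ∫ r in Set.Ioi (0 : ℝ), r ^ N * Real.exp (-phase d r)) := by
    refine (norm_mul_norm_rayTransform_le (u := fun z => z ^ N * u i z) (hτ i) (hint i N) hc hc1
      hζ0 (hζ i)).trans ?_
    rw [← integral_const_mul (A i)]
    refine mul_le_mul_of_nonneg_left ?_ (by positivity)
    exact setIntegral_mono_on (hint i N).norm
      ((integrableOn_pow_mul_exp_neg_phase d N).const_mul _) measurableSet_Ioi fun r hr =>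
      (hdecay i).norm_pow_mul_le (hτ i).le N (le_of_lt hr)
  calc ‖ζ‖ ^ N * ‖ζ * ∑ i, rayTransform (τ i) (u i) ζ‖
      = ‖ζ‖ * ‖∑ i, rayTransform (τ i) (fun z => z ^ N * u i z) ζ‖ := by
        rw [← pow_mul_sum_rayTransform hτ0 hint hslit hm, norm_mul, norm_mul, norm_pow]
        ring
    _ ≤ ∑ i, ‖ζ‖ * ‖rayTransform (τ i) (fun z => z ^ N * u i z) ζ‖ := by
        rw [← Finset.mul_sum]
        gcongr
        exact norm_sum_le _ _
    _ ≤ ∑ i, (√(1 - c ^ 2))⁻¹ * (A i * ∫ r in Set.Ioi (0 : ℝ), r ^ N * Real.exp (-phase d r)) :=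
        Finset.sum_le_sum fun i _ => hterm i
    _ = _ := by rw [← Finset.mul_sum, ← Finset.sum_mul, mul_assoc]

end RayTransform

/-! ### Uniqueness for Cauchy transforms with vanishing moments -/

section Trigonometry

variable {a h : ℝ} {z σ w : ℂ}

lemma cos_le_cos_of_le_of_le_two_pi_sub {β ψ : ℝ} (hβ : 0 ≤ β) (h₁ : β ≤ ψ)
    (h₂ : ψ ≤ 2 * Real.pi - β) : Real.cos ψ ≤ Real.cos β := by
  rcases le_total ψ Real.pi with h | h
  · exact Real.cos_le_cos_of_nonneg_of_le_pi hβ h h₁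
  · rw [← Real.cos_two_pi_sub ψ]
    exact Real.cos_le_cos_of_nonneg_of_le_pi hβ (by linarith) (by linarith)

lemma re_exp_mul_le (hσ : ‖σ‖ = 1) (hre : σ.re ≤ Real.cos a) (hz : |z.im| ≤ h) (hha : h ≤ a)
    (haπ : a ≤ Real.pi) : (cexp z * σ).re ≤ Real.cos (a - h) * ‖cexp z * σ‖ := by
  have hh : 0 ≤ h := (abs_nonneg _).trans hz
  have hσ_eq : σ = cexp (σ.arg * I) := by simpa [hσ] using (Complex.norm_mul_exp_arg_mul_I σ).symm
  have harg : a ≤ |σ.arg| := by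
    refine (Real.strictAntiOn_cos.le_iff_ge ⟨abs_nonneg _, abs_arg_le_pi σ⟩
      ⟨by linarith, haπ⟩).1 ?_
    rwa [Real.cos_abs, ← one_mul (Real.cos _), ← hσ, Complex.norm_mul_cos_arg]
  have hcos : Real.cos (z.im + σ.arg) ≤ Real.cos (a - h) := by
    rw [← Real.cos_abs (z.im + σ.arg)]
    refine cos_le_cos_of_le_of_le_two_pi_sub (by linarith) ?_ ?_
    · have := abs_sub_abs_le_abs_sub σ.arg (-z.im)
      rw [abs_neg, sub_neg_eq_add, add_comm] at this
      linarith
    · linarith [abs_add_le z.im σ.arg, abs_arg_le_pi σ]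
  have hre_eq : (cexp z * σ).re = Real.cos (z.im + σ.arg) * Real.exp z.re := by
    rw [hσ_eq, ← Complex.exp_add, Complex.exp_re, ← hσ_eq]
    simp [mul_comm]
  rw [hre_eq, norm_mul, hσ, mul_one, Complex.norm_exp]
  gcongr

lemma re_le_cos_of_pow_eq_one {n : ℕ} [NeZero n] (hw : w ^ n = 1) (hw1 : w ≠ 1) :
    w.re ≤ Real.cos (2 * Real.pi / n) := by
  have hn : (0 : ℝ) < n := by exact_mod_cast NeZero.pos n
  obtain ⟨k, hkn, rfl⟩ :=
    (Complex.isPrimitiveRoot_exp n (NeZero.ne n)).eq_pow_of_pow_eq_one hw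
  have hk : 1 ≤ k := Nat.one_le_iff_ne_zero.2 (by rintro rfl; simp at hw1)
  have hk1 : (1 : ℝ) ≤ k := by exact_mod_cast hk
  have hkn1 : (k : ℝ) + 1 ≤ n := by exact_mod_cast hkn
  have hre : (cexp (2 * Real.pi * I / n) ^ k).re = Real.cos (2 * Real.pi / n * k) := by
    rw [← Complex.exp_nat_mul, ← Complex.exp_ofReal_mul_I_re]
    push_cast
    ring_nf
  have hstep : 2 * Real.pi / n * n = 2 * Real.pi := by field_simp
  have hpos : 0 < 2 * Real.pi / n := by positivity
  rw [hre]
  refine cos_le_cos_of_le_of_le_two_pi_sub hpos.le ?_ ?_ <;> nlinarith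

lemma neg_mem_slitPlane_of_ne_norm (hz : z ≠ ‖z‖) : -z ∈ slitPlane := by
  rw [mem_slitPlane_iff]
  by_contra! hneg
  simp only [neg_re, neg_im, Left.neg_nonpos_iff, neg_eq_zero] at hneg
  have hnorm := Complex.abs_re_eq_norm.2 hneg.2
  rw [abs_of_nonneg hneg.1] at hnorm
  exact hz (Complex.ext (by simp [hnorm]) (by simp [hneg.2]))

end Trigonometry

section Uniqueness

open MeasureTheory

variable {ι : Type*} [Fintype ι] {d : ℕ} {τ : ι → ℂ} {u : ι → ℂ → ℂ} {A : ι → ℝ}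
  {σ w z : ℂ} {c h γ M x : ℝ} {i₀ : ι}

lemma diffContOnCl_mul_sum_rayTransform (hτ : ∀ i, τ i ≠ 0)
    (hu : ∀ i, IntegrableOn (fun r : ℝ => u i (r * τ i)) (Set.Ioi 0))
    (hslit : ∀ z : ℂ, |z.im| ≤ h → ∀ i, -(cexp z * σ * (τ i)⁻¹) ∈ slitPlane) :
    DiffContOnCl ℂ (fun z => cexp z * σ * ∑ i, rayTransform (τ i) (u i) (cexp z * σ))
      (im ⁻¹' Set.Ioo (-h) h) := by
  have hcl : closure (im ⁻¹' Set.Ioo (-h) h) ⊆ {z : ℂ | |z.im| ≤ h} :=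
    closure_minimal (fun z hz => (abs_lt.2 hz).le) (isClosed_le (by fun_prop) continuous_const)
  refine DifferentiableOn.diffContOnCl fun z hz => DifferentiableAt.differentiableWithinAt ?_
  have hexp : DifferentiableAt ℂ (fun z => cexp z * σ) z := by fun_prop
  exact hexp.mul (DifferentiableAt.fun_sum fun i _ => DifferentiableAt.comp z
    (g := rayTransform (τ i) (u i))
    (differentiableAt_rayTransform (hτ i) (hu i) (hslit z (hcl hz) i)) hexp)

lemma exists_exp_mul_norm_sum_rayTransform_le (hτ : ∀ i, ‖τ i‖ = 1) (hu : ∀ i, Continuous (u i))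
    (hdecay : ∀ i, DecaysOn d (τ i) (A i) (u i)) (hm : ∀ m, ∑ i, moment (τ i) (u i) m = 0)
    (hσ : ‖σ‖ = 1) (hc : 0 ≤ c) (hc1 : c < 1)
    (hre : ∀ z : ℂ, |z.im| ≤ h → ∀ i, (cexp z * σ * (τ i)⁻¹).re ≤ c * ‖cexp z * σ‖)
    (hγ : 0 ≤ γ) (hγd : γ < ((d : ℝ) + 2) / 2) (hM : 0 ≤ M) :
    ∃ B, ∀ z : ℂ, |z.im| ≤ h → Real.exp (M * Real.exp (γ * z.re)) *
      ‖cexp z * σ * ∑ i, rayTransform (τ i) (u i) (cexp z * σ)‖ ≤ B := by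
  refine ⟨(√(1 - c ^ 2))⁻¹ * (∑ i, A i) * (2 * (Real.exp M + 1) * ∫ r in Set.Ioi (0 : ℝ),
    (1 + r) * Real.exp (M * r ^ γ) * Real.exp (-phase d r)), fun z hz => ?_⟩
  have hnorm : ‖cexp z * σ‖ = Real.exp z.re := by rw [norm_mul, hσ, mul_one, Complex.norm_exp]
  have hne : cexp z * σ ≠ 0 := norm_pos_iff.1 (hnorm ▸ Real.exp_pos _)
  have hpow : Real.exp (γ * z.re) = ‖cexp z * σ‖ ^ γ := by rw [hnorm, ← Real.exp_mul, mul_comm]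
  rw [hpow]
  have hA (i : ι) : 0 ≤ A i := (hdecay i).nonneg
  exact exp_rpow_mul_le_of_pow_mul_le hγ hM (fun r _ => (Real.exp_pos (-phase d r)).le)
    (integrableOn_pow_mul_exp_neg_phase d) (integrableOn_exp_rpow_mul_exp_neg_phase d hγ hγd hM)
    (by have := Finset.sum_nonneg fun i (_ : i ∈ Finset.univ) => hA i; positivity)
    (norm_nonneg _) (norm_nonneg _)
    (norm_pow_mul_sum_rayTransform_le hτ hu hdecay hm hc hc1 hne (hre z hz))

theorem sum_rayTransform_eq_zero (hτ : ∀ i, ‖τ i‖ = 1) (hu : ∀ i, Continuous (u i))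
    (hdecay : ∀ i, DecaysOn d (τ i) (A i) (u i)) (hm : ∀ m, ∑ i, moment (τ i) (u i) m = 0)
    (hσ : ‖σ‖ = 1) (hfree : ∀ i, (σ * (τ i)⁻¹).re ≤ Real.cos (2 * Real.pi / (d + 2)))
    (hw : |w.im| < 2 * Real.pi / (d + 2)) :
    ∑ i, rayTransform (τ i) (u i) (cexp w * σ) = 0 := by
  obtain ⟨a, ha⟩ : ∃ a : ℝ, a = 2 * Real.pi / (d + 2) := ⟨_, rfl⟩
  rw [← ha] at hw hfree
  have had : a * (d + 2) = 2 * Real.pi := by rw [ha]; field_simp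
  have ha0 : 0 < a := ha ▸ by positivity
  have haπ : a ≤ Real.pi := by nlinarith [d.cast_nonneg (α := ℝ), Real.pi_pos]
  obtain ⟨h, hwh, hah, hha⟩ : ∃ h, |w.im| < h ∧ a / 2 < h ∧ h < a := by
    obtain ⟨h, h1, h2⟩ := exists_between (max_lt hw (half_lt_self ha0))
    exact ⟨h, (le_max_left _ _).trans_lt h1, (le_max_right _ _).trans_lt h1, h2⟩
  have hh : 0 < h := by linarith
  have hcos0 : 0 ≤ Real.cos (a - h) :=
    Real.cos_nonneg_of_neg_pi_div_two_le_of_le (by linarith) (by linarith)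
  have hcos1 : Real.cos (a - h) < 1 := by
    rw [← Real.cos_zero]
    exact Real.cos_lt_cos_of_nonneg_of_le_pi le_rfl (by linarith) (sub_pos.2 hha)
  have hτ0 (i : ι) : τ i ≠ 0 := norm_pos_iff.1 (by rw [hτ]; exact one_pos)
  have hσ0 : σ ≠ 0 := norm_pos_iff.1 (by rw [hσ]; exact one_pos)
  have hre (z : ℂ) (hz : |z.im| ≤ h) (i : ι) :
      (cexp z * σ * (τ i)⁻¹).re ≤ Real.cos (a - h) * ‖cexp z * σ‖ := by
    have hquot := re_exp_mul_le (σ := σ * (τ i)⁻¹) (by simp [hσ, hτ]) (hfree i) hz hha.le haπ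
    simpa [mul_assoc, hτ, hσ] using hquot
  have hslit (z : ℂ) (hz : |z.im| ≤ h) (i : ι) : -(cexp z * σ * (τ i)⁻¹) ∈ slitPlane :=
    neg_mem_slitPlane_of_re_le hcos1
      (mul_ne_zero (mul_ne_zero (Complex.exp_ne_zero _) hσ0) (inv_ne_zero (hτ0 i)))
      ((hre z hz i).trans_eq (by simp [hτ]))
  have hint (i : ι) : IntegrableOn (fun r : ℝ => u i (r * τ i)) (Set.Ioi 0) := by
    simpa using (hdecay i).integrableOn_pow_mul (hτ i).le (hu i) 0
  have hγ : Real.pi / (2 * h) < ((d : ℝ) + 2) / 2 := by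
    rw [div_lt_div_iff₀ (by positivity) two_pos]
    nlinarith [d.cast_nonneg (α := ℝ)]
  have hzero := eq_zero_of_decay_horizontal_strip hh
    (diffContOnCl_mul_sum_rayTransform hτ0 hint hslit) (fun M hM =>
      exists_exp_mul_norm_sum_rayTransform_le hτ hu hdecay hm hσ hcos0 hcos1 hre (by positivity)
        hγ hM) hwh
  exact (mul_eq_zero.1 hzero).resolve_left (mul_ne_zero (Complex.exp_ne_zero _) hσ0)

lemma eventually_sum_rayTransform_eq_zero (hτ : ∀ i, ‖τ i‖ = 1) (hu : ∀ i, Continuous (u i))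
    (hdecay : ∀ i, DecaysOn d (τ i) (A i) (u i)) (hm : ∀ m, ∑ i, moment (τ i) (u i) m = 0)
    (hσ : ‖σ‖ = 1) (hfree : ∀ b : ℝ, |b| = 2 * Real.pi / (d + 2) →
      ∀ i, (cexp (b * I) * σ * (τ i)⁻¹).re ≤ Real.cos (2 * Real.pi / (d + 2)))
    (hx : 0 < x) :
    ∀ᶠ z in 𝓝 (x : ℂ), z.im ≠ 0 → ∑ i, rayTransform (τ i) (u i) (z * σ) = 0 := by
  obtain ⟨a, ha⟩ : ∃ a : ℝ, a = 2 * Real.pi / (d + 2) := ⟨_, rfl⟩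
  have ha0 : 0 < a := ha ▸ by positivity
  have harg : ∀ᶠ z in 𝓝 (x : ℂ), |z.arg| < a := by
    have hcont := (continuousAt_arg (x := (x : ℂ)) (by simp [hx])).abs
    exact hcont.eventually_lt_const (by simpa [Complex.arg_ofReal_of_nonneg hx.le] using ha0)
  filter_upwards [harg] with z hz him
  obtain ⟨b, hb, hbz⟩ : ∃ b, |b| = a ∧ |z.arg - b| < a := by
    rw [abs_lt] at hz
    have hz0 : z.arg ≠ 0 := fun h => him (Complex.arg_eq_zero_iff.1 h).2
    rcases hz0.lt_or_gt with h | h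
    · exact ⟨-a, by rw [abs_neg, abs_of_pos ha0], abs_lt.2 ⟨by linarith, by linarith⟩⟩
    · exact ⟨a, abs_of_pos ha0, abs_lt.2 ⟨by linarith, by linarith⟩⟩
  have hz0 : z ≠ 0 := by rintro rfl; simp at him
  have hsector : z * σ = cexp (Complex.log z - b * I) * (cexp (b * I) * σ) := by
    rw [← mul_assoc, ← Complex.exp_add, sub_add_cancel, Complex.exp_log hz0]
  rw [hsector]
  exact sum_rayTransform_eq_zero hτ hu hdecay hm (by simp [hσ, Complex.norm_exp_ofReal_mul_I])
    (hfree b (hb.trans ha)) (by simpa [Complex.log_im, ← ha] using hbz)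

lemma tendsto_rayTransform_sub_of_ne {τ : ℂ} {u : ℂ → ℂ} {p q : ℝ → ℂ} (hτ : ‖τ‖ = 1)
    (hu : IntegrableOn (fun r : ℝ => u (r * τ)) (Set.Ioi 0)) (hσ : ‖σ‖ = 1) (hne : τ ≠ σ)
    (hx : 0 < x) (hp : Tendsto p atTop (𝓝 x)) (hq : Tendsto q atTop (𝓝 x)) :
    Tendsto (fun c => rayTransform τ u (p c * σ) - rayTransform τ u (q c * σ)) atTop (𝓝 0) := by
  have hτ0 : τ ≠ 0 := norm_pos_iff.1 (by rw [hτ]; exact one_pos)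
  have hslit : -((x : ℂ) * σ * τ⁻¹) ∈ slitPlane := by
    refine neg_mem_slitPlane_of_ne_norm fun h => hne ?_
    have hnorm : ‖(x : ℂ) * σ * τ⁻¹‖ = x := by simp [hτ, hσ, hx.le]
    rw [hnorm, mul_inv_eq_iff_eq_mul₀ hτ0] at h
    exact (mul_left_cancel₀ (by exact_mod_cast hx.ne') h).symm
  have hcont := (differentiableAt_rayTransform hτ0 hu hslit).continuousAt
  simpa using (hcont.tendsto.comp (hp.mul_const σ)).sub (hcont.tendsto.comp (hq.mul_const σ))

lemma tendsto_rayTransform_jump {τ : ℂ} {u : ℂ → ℂ} (hτ : τ ≠ 0) (hu : Continuous u)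
    (hint : IntegrableOn (fun r : ℝ => u (r * τ)) (Set.Ioi 0)) (hx : 0 < x) :
    Tendsto (fun c : ℝ => rayTransform τ u ((x + (c⁻¹ : ℝ) * I) * τ) -
      rayTransform τ u ((x - (c⁻¹ : ℝ) * I) * τ)) atTop
      (𝓝 (τ⁻¹ * (2 * Real.pi * I * u (x * τ)))) := by
  simp only [rayTransform_eq_mul_cauchyTransform hτ, mul_inv_cancel_right₀ hτ, ← mul_sub]
  exact (tendsto_cauchyTransform_jump hint hx (by fun_prop)).const_mul _

theorem eq_zero_of_sum_moment_eq_zero (hτ : ∀ i, ‖τ i‖ = 1) (hu : ∀ i, Continuous (u i))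
    (hdecay : ∀ i, DecaysOn d (τ i) (A i) (u i)) (hm : ∀ m, ∑ i, moment (τ i) (u i) m = 0)
    (hne : ∀ i, i ≠ i₀ → τ i ≠ τ i₀) (hfree : ∀ b : ℝ, |b| = 2 * Real.pi / (d + 2) →
      ∀ i, (cexp (b * I) * τ i₀ * (τ i)⁻¹).re ≤ Real.cos (2 * Real.pi / (d + 2)))
    (hx : 0 < x) : u i₀ (x * τ i₀) = 0 := by
  classical
  have hτ0 : τ i₀ ≠ 0 := norm_pos_iff.1 (by rw [hτ]; exact one_pos)
  have hint (i : ι) : IntegrableOn (fun r : ℝ => u i (r * τ i)) (Set.Ioi 0) := by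
    simpa using (hdecay i).integrableOn_pow_mul (hτ i).le (hu i) 0
  have hI : Tendsto (fun c : ℝ => ((c⁻¹ : ℝ) : ℂ) * I) atTop (𝓝 0) := by
    simpa using (tendsto_inv_atTop_zero (𝕜 := ℝ)).ofReal.mul_const I
  have hp : Tendsto (fun c : ℝ => (x : ℂ) + (c⁻¹ : ℝ) * I) atTop (𝓝 (x : ℂ)) := by
    simpa using hI.const_add (x : ℂ)
  have hq : Tendsto (fun c : ℝ => (x : ℂ) - (c⁻¹ : ℝ) * I) atTop (𝓝 (x : ℂ)) := by
    simpa using hI.const_sub (x : ℂ)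
  have hjump : Tendsto (fun c : ℝ => ∑ i,
      (rayTransform (τ i) (u i) ((x + (c⁻¹ : ℝ) * I) * τ i₀) -
        rayTransform (τ i) (u i) ((x - (c⁻¹ : ℝ) * I) * τ i₀))) atTop
      (𝓝 ((τ i₀)⁻¹ * (2 * Real.pi * I * u i₀ (x * τ i₀)))) := by
    have hlim := tendsto_finsetSum Finset.univ fun i _ => show Tendsto (fun c : ℝ =>
        rayTransform (τ i) (u i) ((x + (c⁻¹ : ℝ) * I) * τ i₀) -
        rayTransform (τ i) (u i) ((x - (c⁻¹ : ℝ) * I) * τ i₀)) atTop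
        (𝓝 (if i = i₀ then (τ i₀)⁻¹ * (2 * Real.pi * I * u i₀ (x * τ i₀)) else 0)) by
      split_ifs with hi
      · subst hi
        exact tendsto_rayTransform_jump hτ0 (hu i) (hint i) hx
      · exact tendsto_rayTransform_sub_of_ne (hτ i) (hint i) (hτ i₀) (hne i hi) hx hp hq
    simpa using hlim
  have hev := eventually_sum_rayTransform_eq_zero hτ hu hdecay hm (hτ i₀) hfree hx
  have hzero : (fun c : ℝ => ∑ i, (rayTransform (τ i) (u i) ((x + (c⁻¹ : ℝ) * I) * τ i₀) -
      rayTransform (τ i) (u i) ((x - (c⁻¹ : ℝ) * I) * τ i₀))) =ᶠ[atTop] fun _ => 0 := by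
    filter_upwards [hp.eventually hev, hq.eventually hev, eventually_gt_atTop 0] with c h₁ h₂ hc
    rw [Finset.sum_sub_distrib, h₁ (by simp [hc.ne']), h₂ (by simp [hc.ne']), sub_zero]
  have hval := tendsto_nhds_unique (hjump.congr' hzero) tendsto_const_nhds
  simpa [hτ0, Real.pi_ne_zero] using hval

end Uniqueness

section Independence

open MeasureTheory Polynomial

variable {ι : Type*} {d : ℕ} {p : Params d} {y u : ℂ → ℂ}

lemma moment_const_smul (τ a : ℂ) (u : ℂ → ℂ) (m : ℕ) :
    moment τ (a • u) m = a * moment τ u m := by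
  simp only [moment, Pi.smul_apply, smul_eq_mul, mul_left_comm _ a, integral_const_mul]

lemma sum_moment_eq_zero_of_sum_pairing_eq_zero [Fintype ι] {c τ : ι → ℂ}
    (h : ∀ q, ∑ i, c i * pairing d (τ i) u q = 0) {m : ℕ} (hm : m < d) :
    ∑ i, c i * (τ i * moment (τ i) u m) = 0 := by
  obtain ⟨q, a, ha, hq⟩ : ∃ q, ∃ a : ℂ, a ≠ 0 ∧ lowerPoly d q = monomial m a := by
    rcases m with _ | m
    · exact ⟨(0, 1), -1, by simp, by simp [lowerPoly]⟩
    · refine ⟨(Pi.single ⟨m, by lia⟩ 1, 0), 1, one_ne_zero, ?_⟩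
      simp [lowerPoly, Pi.single_apply, apply_ite, Polynomial.X_pow_eq_monomial]
  have hsum : -a * ∑ i, c i * (τ i * moment (τ i) u m) = 0 := by
    rw [← h q, Finset.mul_sum]
    refine Finset.sum_congr rfl fun i _ => ?_
    rw [pairing_apply, hq, momentMap_monomial]
    ring
  exact (mul_eq_zero.1 hsum).resolve_left (neg_ne_zero.2 ha)

lemma re_rotation_le_cos {τ : ι → ℂ} (hτ : ∀ i, τ i ^ (d + 2) = 1)
    (hnonadj : ∀ i j, τ i * cexp (2 * Real.pi * I / (d + 2 : ℕ)) ≠ τ j) {b : ℝ}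
    (hb : |b| = 2 * Real.pi / (d + 2)) (i j : ι) :
    (cexp (b * I) * τ i * (τ j)⁻¹).re ≤ Real.cos (2 * Real.pi / (d + 2)) := by
  have hτ0 (i : ι) : τ i ≠ 0 := fun h => by simpa [h] using hτ i
  have hζ : cexp (2 * Real.pi * I / (d + 2 : ℕ)) ^ (d + 2) = 1 :=
    (Complex.isPrimitiveRoot_exp (d + 2) (by lia)).pow_eq_one
  obtain ⟨ζ, hζeq⟩ : ∃ ζ, ζ = cexp (2 * Real.pi * I / (d + 2 : ℕ)) := ⟨_, rfl⟩
  simp only [← hζeq] at hnonadj hζ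
  have hζ0 : ζ ≠ 0 := hζeq ▸ Complex.exp_ne_zero _
  obtain hbζ | hbζ : cexp (b * I) = ζ ∨ cexp (b * I) = ζ⁻¹ := by
    rcases eq_or_eq_neg_of_abs_eq hb with rfl | rfl
    · left; rw [hζeq]; push_cast; ring_nf
    · right; rw [hζeq, ← Complex.exp_neg]; push_cast; ring_nf
  all_goals
    have hcos := re_le_cos_of_pow_eq_one (n := d + 2) (w := cexp (b * I) * τ i * (τ j)⁻¹)
      (by simp [mul_pow, hbζ, hζ, hτ]) fun h => ?_
    · exact_mod_cast hcos
  · rw [mul_inv_eq_one₀ (hτ0 j), hbζ, mul_comm] at h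
    exact hnonadj i j h
  · rw [mul_inv_eq_one₀ (hτ0 j), hbζ, inv_mul_eq_iff_eq_mul₀ hζ0, mul_comm] at h
    exact hnonadj j i h.symm

theorem pairing_independent [NeZero d] [Fintype ι] {τ : ι → ℂ} (hτ : ∀ i, τ i ^ (d + 2) = 1)
    (hinj : Function.Injective τ)
    (hnonadj : ∀ i j, τ i * cexp (2 * Real.pi * I / (d + 2 : ℕ)) ≠ τ j)
    (hy : IsSol d p.1 p.2 y) (hy0 : y ≠ 0) {A : ι → ℝ} (hdecay : ∀ i, DecaysOn d (τ i) (A i) y)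
    {c : ι → ℂ} (hc : ∑ i, c i = 0) (hpair : ∀ q, ∑ i, c i * pairing d (τ i) (y * y) q = 0) :
    c = 0 := by
  have hτ1 (i : ι) : ‖τ i‖ = 1 := norm_eq_one_of_pow_add_two (hτ i)
  have hτ0 (i : ι) : τ i ≠ 0 := norm_ne_zero_iff.1 (by simp [hτ1])
  have hmoment := sum_moment_eq_zero hτ1 hy hdecay hc fun m hm =>
    sum_moment_eq_zero_of_sum_pairing_eq_zero hpair hm
  have hcont := hy.1.continuous
  funext i₀
  by_contra hci
  refine hy0 (eq_zero_of_forall_ray_eq_zero hy.1 (hτ0 i₀) (R := 1) fun x hx => ?_)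
  have hzero := eq_zero_of_sum_moment_eq_zero (u := fun i => (c i * τ i) • (y * y)) hτ1
    (fun i => (hcont.mul hcont).const_smul _) (fun i => ((hdecay i).mul (hdecay i)).const_smul _)
    (by simpa only [moment_const_smul, mul_assoc] using hmoment) (fun i hi => hinj.ne hi)
    (fun b hb => re_rotation_le_cos hτ hnonadj hb i₀) (one_pos.trans_le hx)
  simpa [hτ0 i₀, show c i₀ ≠ 0 from hci] using hzero

end Independence

/-! ### The parameter set as a regular level set -/

section LinearAlgebra

lemma surjective_pi_sub_of_independent {K E : Type*} [Field K] [AddCommGroup E] [Module K E]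
    {m : ℕ} {ℓ : Fin (m + 1) → E →ₗ[K] K}
    (h : ∀ c : Fin (m + 1) → K, ∑ i, c i = 0 → (∀ q, ∑ i, c i * ℓ i q = 0) → c = 0) :
    Function.Surjective (LinearMap.pi fun j : Fin m => ℓ j.succ - ℓ 0) := by
  rw [← LinearMap.range_eq_top]
  by_contra hne
  obtain ⟨f, hf0, hf⟩ := Submodule.exists_le_ker_of_lt_top _ (lt_top_iff_ne_top.2 hne)
  have hf_apply (g : Fin m → K) : f g = ∑ j, f (Pi.single j 1) * g j := by
    conv_lhs => rw [pi_eq_sum_univ' g]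
    simp only [map_sum, map_smul, smul_eq_mul, mul_comm]
  have hc := h (Fin.cons (-∑ j, f (Pi.single j 1)) fun j => f (Pi.single j 1))
    (by simp [Fin.sum_univ_succ]) fun q => by
      have hq : f (LinearMap.pi (fun j : Fin m => ℓ j.succ - ℓ 0) q) = 0 := hf ⟨q, rfl⟩
      rw [hf_apply] at hq
      rw [← hq, Fin.sum_univ_succ]
      simp only [LinearMap.pi_apply, LinearMap.sub_apply, mul_sub, Finset.sum_sub_distrib,
        Fin.cons_zero, Fin.cons_succ, ← Finset.sum_mul]
      ring
  refine hf0 (LinearMap.ext fun g => ?_)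
  rw [hf_apply]
  exact Finset.sum_eq_zero fun j _ => by simpa using congrArg (· * g j) (congrFun hc j.succ)

lemma eventually_surjective {X E F : Type*} [TopologicalSpace X] [NormedAddCommGroup E]
    [NormedSpace ℂ E] [NormedAddCommGroup F] [NormedSpace ℂ F] [FiniteDimensional ℂ F]
    {L : X → E →L[ℂ] F} {x : X} (hL : ContinuousAt L x) (hx : Function.Surjective (L x)) :
    ∀ᶠ x' in 𝓝 x, Function.Surjective (L x') := by
  have : CompleteSpace F := FiniteDimensional.complete ℂ F
  obtain ⟨R, hR⟩ := (L x).exists_rightInverse_of_surjective (LinearMap.range_eq_top.2 hx)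
  have hunit : {f : F →L[ℂ] F | IsUnit f} ∈ 𝓝 ((L x).comp R) :=
    Units.isOpen.mem_nhds (by rw [hR]; exact isUnit_one)
  filter_upwards [(hL.clm_comp continuousAt_const) hunit] with x' hx'
  exact Function.Surjective.of_comp (g := R)
    (Function.Bijective.surjective (ContinuousLinearMap.isUnit_iff_bijective.1 hx'))

lemma exists_det_eq_one {K : Type*} [Field K] {v : K × K} (hv : v ≠ 0) :
    ∃ w : K × K, v.1 * w.2 - v.2 * w.1 = 1 := by
  by_cases h : v.1 = 0
  · have h2 : v.2 ≠ 0 := fun h2 => hv (Prod.ext h h2)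
    exact ⟨(-1 / v.2, 0), by field_simp; ring⟩
  · exact ⟨(0, 1 / v.1), by field_simp; ring⟩

end LinearAlgebra

section DecayLocus

variable {ι : Type*} {d : ℕ} {p x : Params d} {τ : ι → ℂ} {v w : ℂ × ℂ} {y : ℂ → ℂ}

/-- The parameters admitting a nonzero solution that tends to `0` along the ray spanned by each
`τ i`; for central rays of Stokes sectors this is the set `Σ` of the theorem. -/
def decayLocus (d : ℕ) (τ : ι → ℂ) : Set (Params d) :=
  {p | ∃ y : ℂ → ℂ, y ≠ 0 ∧ IsSol d p.1 p.2 y ∧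
    ∀ i, Tendsto (fun r : ℝ => y (r * τ i)) atTop (𝓝 0)}

lemma decayLocus_of_isEmpty [IsEmpty ι] (d : ℕ) (τ : ι → ℂ) : decayLocus d τ = Set.univ :=
  Set.eq_univ_of_forall fun p =>
    ⟨sol d p (1, 0), sol_ne_zero (by simp), isSol_sol d p _, isEmptyElim⟩

lemma mem_decayLocus_iff [NeZero d] (hτ : ∀ i, τ i ^ (d + 2) = 1)
    (hvw : v.1 * w.2 - v.2 * w.1 = 1) {s : ι → ℂ}
    (hlim : ∀ i, Tendsto (fun r : ℝ => sol d x (v + s i • w) (r * τ i)) atTop (𝓝 0)) :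
    x ∈ decayLocus d τ ↔ ∃ t, ∀ i, s i = t := by
  constructor
  · rintro ⟨y, hy0, hy, hylim⟩
    obtain ⟨⟨a, b⟩, hab⟩ : ∃ j, j = jet y 0 := ⟨_, rfl⟩
    refine ⟨(v.1 * b - v.2 * a) / (a * w.2 - b * w.1), fun i => ?_⟩
    obtain ⟨c, hc⟩ := (isSol_sol d x (v + s i • w)).exists_smul_eq_of_tendsto hy (hτ i) (hlim i)
      (hylim i) hy0
    have hjet : v + s i • w = c • (a, b) := by
      rw [hab, ← jet_const_smul hy.1, ← hc, jet_sol_zero]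
    have hfst : v.1 + s i * w.1 = c * a := congrArg Prod.fst hjet
    have hsnd : v.2 + s i * w.2 = c * b := congrArg Prod.snd hjet
    have hdet : c * (a * w.2 - b * w.1) = 1 := by linear_combination hvw - w.2 * hfst + w.1 * hsnd
    rw [eq_div_iff (right_ne_zero_of_mul_eq_one hdet)]
    refine mul_left_cancel₀ (left_ne_zero_of_mul_eq_one hdet) ?_
    linear_combination s i * hdet - s i * hvw - v.2 * hfst + v.1 * hsnd
  · rintro ⟨t, ht⟩
    refine ⟨sol d x (v + t • w), sol_ne_zero fun h => ?_, isSol_sol d x _, fun i => ht i ▸ hlim i⟩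
    have hfst : v.1 + t * w.1 = 0 := congrArg Prod.fst h
    have hsnd : v.2 + t * w.2 = 0 := congrArg Prod.snd h
    exact one_ne_zero (α := ℂ) (by linear_combination -hvw + w.2 * hfst - w.1 * hsnd)

variable [NeZero d]

theorem exists_slopes [Fintype ι] (hτ : ∀ i, τ i ^ (d + 2) = 1) (hinj : Function.Injective τ)
    (hnonadj : ∀ i j, τ i * cexp (2 * Real.pi * I / (d + 2 : ℕ)) ≠ τ j)
    (hp : p ∈ decayLocus d τ) :
    ∃ (s : ι → Params d → ℂ) (L : ι → Params d → Params d →L[ℂ] ℂ),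
      (∀ i, ContinuousAt (L i) p) ∧
      (∀ᶠ x in 𝓝 p, (∀ i, HasFDerivAt (s i) (L i x) x) ∧
        (x ∈ decayLocus d τ ↔ ∃ t, ∀ i, s i x = t)) ∧
      ∀ c : ι → ℂ, ∑ i, c i = 0 → (∀ q, ∑ i, c i * L i p q = 0) → c = 0 := by
  obtain ⟨y, hy0, hy, hlim⟩ := hp
  obtain ⟨v, hv⟩ : ∃ v, v = jet y 0 := ⟨_, rfl⟩
  have hyv : y = sol d p v := hv ▸ hy.eq_sol
  obtain ⟨w, hvw⟩ := exists_det_eq_one (v := v) fun h => hy0 (hy.eq_zero (hv ▸ h))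
  choose A hA using fun i => hy.decaysOn_of_tendsto (hτ i) (hlim i)
  choose A' s hs0 hs hcont using fun i => exists_decaysOn_family (hτ i) hvw (hyv ▸ hA i)
  refine ⟨s, fun i x => pairing d (τ i) (solSq v w (s i) x), hcont, ?_, fun c hc hq => ?_⟩
  · filter_upwards [eventually_all.2 hs] with x hx
    exact ⟨fun i => (hx i).2, mem_decayLocus_iff hτ hvw fun i => (hx i).1.tendsto⟩
  · have hsq (i : ι) : solSq v w (s i) p = y * y := by simp [solSq, hs0, hyv]
    simp only [hsq] at hq
    exact pairing_independent hτ hinj hnonadj hy hy0 hA hc hq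

theorem exists_regular_level_set {m : ℕ} {τ : Fin (m + 1) → ℂ} (hτ : ∀ i, τ i ^ (d + 2) = 1)
    (hinj : Function.Injective τ)
    (hnonadj : ∀ i j, τ i * cexp (2 * Real.pi * I / (d + 2 : ℕ)) ≠ τ j)
    (hp : p ∈ decayLocus d τ) :
    ∃ (U : Set (Params d)) (F : Params d → Fin m → ℂ), IsOpen U ∧ p ∈ U ∧
      DifferentiableOn ℂ F U ∧ (∀ x ∈ U, Function.Surjective (fderiv ℂ F x)) ∧
      decayLocus d τ ∩ U = {x ∈ U | F x = 0} := by
  obtain ⟨s, L, hL, hs, hindep⟩ := exists_slopes hτ hinj hnonadj hp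
  have hdF : ContinuousAt (fun x => ContinuousLinearMap.pi fun j : Fin m => L j.succ x - L 0 x) p :=
    (ContinuousLinearMap.piEquivL ℂ (Params d) fun _ : Fin m => ℂ).continuous.continuousAt.comp
      (continuousAt_pi.2 fun j => (hL j.succ).sub (hL 0))
  have hsurj := eventually_surjective hdF
    (surjective_pi_sub_of_independent (ℓ := fun i => (L i p : Params d →ₗ[ℂ] ℂ)) hindep)
  obtain ⟨U, hU, hUo, hpU⟩ := mem_nhds_iff.1 (hs.and hsurj)
  have hF (x) (hx : x ∈ U) : HasFDerivAt (fun x (j : Fin m) => s j.succ x - s 0 x)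
      (ContinuousLinearMap.pi fun j : Fin m => L j.succ x - L 0 x) x :=
    hasFDerivAt_pi.2 fun j => ((hU hx).1.1 j.succ).sub ((hU hx).1.1 0)
  refine ⟨U, _, hUo, hpU, fun x hx => (hF x hx).differentiableAt.differentiableWithinAt,
    fun x hx => (hF x hx).fderiv ▸ (hU hx).2, ?_⟩
  ext x
  rw [Set.inter_comm]
  refine and_congr_right fun hx => (hU hx).1.2.trans ?_
  simp only [funext_iff, Pi.zero_apply, sub_eq_zero]
  exact ⟨fun ⟨t, ht⟩ j => (ht _).trans (ht 0).symm, fun h => ⟨s 0 x, Fin.cases rfl h⟩⟩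

end DecayLocus

section CentralRays

lemma add_one_mod_ne {n i : ℕ} (hn : 1 < n) (hi : i < n) : (i + 1) % n ≠ i := by
  rcases Nat.lt_or_eq_of_le (Nat.succ_le_of_lt hi) with h | h
  · rw [Nat.mod_eq_of_lt h]
    lia
  · rw [show i + 1 = n from h, Nat.mod_self]
    lia

variable {d i j : ℕ} {y : ℂ → ℂ}

/-- The unit vector along the central ray of the Stokes sector `S_j`. -/
noncomputable def centralDir (d j : ℕ) : ℂ :=
  cexp ((2 * Real.pi * j / (d + 2 : ℕ) : ℝ) * I)

lemma centralDir_eq_pow (d j : ℕ) : centralDir d j = cexp (2 * Real.pi * I / (d + 2 : ℕ)) ^ j := by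
  rw [centralDir, ← Complex.exp_nat_mul]
  push_cast
  ring_nf

lemma isPrimitiveRoot_exp_add_two (d : ℕ) :
    IsPrimitiveRoot (cexp (2 * Real.pi * I / (d + 2 : ℕ))) (d + 2) :=
  Complex.isPrimitiveRoot_exp (d + 2) (by lia)

lemma centralDir_pow (d j : ℕ) : centralDir d j ^ (d + 2) = 1 := by
  rw [centralDir_eq_pow, pow_right_comm, (isPrimitiveRoot_exp_add_two d).pow_eq_one, one_pow]

lemma centralDir_injOn (d : ℕ) : Set.InjOn (centralDir d) (Set.Iio (d + 2)) := by
  intro i hi j hj h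
  rw [centralDir_eq_pow, centralDir_eq_pow] at h
  exact (isPrimitiveRoot_exp_add_two d).pow_inj hi hj h

lemma centralDir_mul_exp_ne (hj : j < d + 2) (h : (i + 1) % (d + 2) ≠ j) :
    centralDir d i * cexp (2 * Real.pi * I / (d + 2 : ℕ)) ≠ centralDir d j := by
  rw [centralDir_eq_pow, centralDir_eq_pow, ← pow_succ,
    pow_eq_pow_mod (i + 1) (isPrimitiveRoot_exp_add_two d).pow_eq_one]
  exact fun heq => h ((isPrimitiveRoot_exp_add_two d).pow_inj (Nat.mod_lt _ (by lia)) hj heq)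

lemma Subdominant.tendsto (h : Subdominant (d + 2) j y) :
    Tendsto (fun r : ℝ => y (r * centralDir d j)) atTop (𝓝 0) := by
  refine h _ ?_
  rw [DirIn, sub_self, abs_zero]
  positivity

lemma IsSol.subdominant_iff_tendsto [NeZero d] {p : Params d} (hy : IsSol d p.1 p.2 y) :
    Subdominant (d + 2) j y ↔ Tendsto (fun r : ℝ => y (r * centralDir d j)) atTop (𝓝 0) := by
  refine ⟨Subdominant.tendsto, fun h => ?_⟩
  obtain ⟨A, hA⟩ := hy.decaysOn_of_tendsto (centralDir_pow d j) h
  exact hy.subdominant_of_decaysOn j hA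

end CentralRays

theorem stmt7 (d : ℕ) (hd : 2 ≤ d) (n : ℕ) (hn : n = d + 2)
    (k : ℕ) (hk : 2 * k ≤ n) (js : Fin k → ℕ) (hjs : ∀ i, js i < n)
    (hinj : Function.Injective js)
    (hnonadj : ∀ a b : Fin k, a ≠ b → (js a + 1) % n ≠ js b ∧ (js b + 1) % n ≠ js a)
    (Sig : Set ((Fin (d - 1) → ℂ) × ℂ))
    (hSig : Sig = {p : (Fin (d - 1) → ℂ) × ℂ |
      ∃ y : ℂ → ℂ, y ≠ 0 ∧ IsSol d p.1 p.2 y ∧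
        ∀ i : Fin k, Subdominant n (js i) y}) :
    ∀ p ∈ Sig, ∃ (U : Set ((Fin (d - 1) → ℂ) × ℂ))
      (F : ((Fin (d - 1) → ℂ) × ℂ) → (Fin (k - 1) → ℂ)),
      IsOpen U ∧ p ∈ U ∧ DifferentiableOn ℂ F U ∧
      (∀ x ∈ U, Function.Surjective ⇑(fderiv ℂ F x)) ∧
      Sig ∩ U = {x ∈ U | F x = 0} := by
  subst hn
  have : NeZero d := ⟨by lia⟩
  have hlocus : Sig = decayLocus d fun i => centralDir d (js i) := by
    subst hSig
    ext p
    exact exists_congr fun y => and_congr_right fun _ => and_congr_right fun hy =>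
      forall_congr' fun i => hy.subdominant_iff_tendsto
  intro p hp
  rw [hlocus] at hp ⊢
  obtain _ | m := k
  · have : IsEmpty (Fin (0 - 1)) := Fin.isEmpty
    exact ⟨Set.univ, 0, isOpen_univ, trivial, differentiableOn_const 0,
      fun x _ => Function.surjective_to_subsingleton _,
      by simp [decayLocus_of_isEmpty]⟩
  · refine exists_regular_level_set (fun i => centralDir_pow d (js i))
      (fun a b h => hinj (centralDir_injOn d (hjs a) (hjs b) h)) (fun a b => ?_) hp
    refine centralDir_mul_exp_ne (hjs b) ?_
    rcases eq_or_ne a b with rfl | hab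
    · exact add_one_mod_ne (by lia) (hjs a)
    · exact (hnonadj a b hab).1
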